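/- Let 0 < α < 1. There exists a real-valued, 2π-periodic, nowhere linear function φ of class C^{1,α}(𝕋) such that: (i) ‖e^{iλφ}‖_{A_1(𝕋)} = O(|λ|^{α/(1+α)} · (log|λ|)^{(1−α)/(1+α)}) as |λ|→∞; (ii) ‖e^{iλφ}‖_{A_p(𝕋)} ≍ |λ|^{1/p − 1/(1+α)} for 1 < p < 1+α (i.e., for all large |λ| the ratio lies between two positive constants); ‖e^{iλφ}‖_{A_p(𝕋)} ≍ 1 for 1+α < p < 2; and ‖e^{iλφ}‖_{A_p(𝕋)} = O((log|λ|)^{1/p}) for p = 1+α. -/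

import Mathlib

open MeasureTheory Real Set
open scoped ENNReal

/-- The k-th Fourier coefficient of a (2π-periodic) function on the circle,
identified with a function on [0, 2π]. -/
noncomputable def fourierCoef (f : ℝ → ℂ) (k : ℤ) : ℂ :=
  (1 / (2 * (Real.pi : ℂ))) *
    ∫ t in (0:ℝ)..(2 * Real.pi), f t * Complex.exp (-Complex.I * (k : ℂ) * (t : ℂ))

/-- The A_p(𝕋) norm: ℓ^p norm of the sequence of Fourier coefficients
(valued in ℝ≥0∞ so that divergence gives ∞). -/
noncomputable def ApNorm (p : ℝ) (f : ℝ → ℂ) : ℝ≥0∞ :=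
  (∑' k : ℤ, ((‖fourierCoef f k‖₊ : ℝ≥0∞) ^ p)) ^ (1 / p)

/-! The phase is a sum of `C^{1,α}` bumps of heights `η n ^ 2` and widths `η n`, whose derivatives
climb along Cantor staircases of ratio `θ = 2 ^ (-1 / α)`. Each bump sits on an interval where the
sum of its predecessors is affine, so it changes `e^{iλφ}` by a single block
`e^{i(at+b)}(e^{iμΨ}-1)` over its window, with `μ = λ η n ^ 2`; these intervals reach everywhere,
so `φ` is nowhere linear.

The Cantor staircase consists of two copies of itself scaled by `θ`, and in between the phase is
affine. Thus a wave packet over it splits into two packets with `μ` replaced by `μ θ / 2`, up to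
pure frequencies times bumps, whose norm in `A₁` is bounded. After `m` splittings a block is the
sum of a part with `A₁` norm `O(2 ^ m)` and a part on a set of measure `O(η (2 θ) ^ m)`. Splitting
until `μ` drops below `1` bounds the `A₁` norm by `O(|μ| ^ (α / (1 + α)))`, and combining all `m`
up to that point bounds the `A_p` norms.

Conversely, let `φ` be any `C^{1,α}` phase with nonconstant derivative. For each integer `k` among
the values of `λ φ'` the function `e^{iλφ}` resembles `e^{ikt}` on an interval of length
`|λ| ^ (-1 / (1 + α))`. Multiplication by a bump on that interval is convolution on the Fourier
side, with coefficients whose absolute values do not depend on the interval; Young's inequality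
over the order of `|λ|` such `k` yields the lower bound. -/

/-! ### Fourier coefficients and the norms `ApNorm` -/

/-- The unimodular exponential `x ↦ e^{ix}` of a real variable. -/
noncomputable def expI (x : ℝ) : ℂ := Complex.exp (Complex.I * x)

@[simp] theorem expI_zero : expI 0 = 1 := by simp [expI]

theorem expI_add (x y : ℝ) : expI (x + y) = expI x * expI y := by
  rw [expI, expI, expI, ← Complex.exp_add]
  push_cast
  ring_nf

@[simp] theorem norm_expI (x : ℝ) : ‖expI x‖ = 1 := by
  rw [expI, mul_comm, Complex.norm_exp_ofReal_mul_I]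

theorem expI_int_mul_two_pi (n : ℤ) : expI (n * (2 * π)) = 1 := by
  rw [expI, Complex.exp_eq_one_iff]
  exact ⟨n, by push_cast; ring⟩

theorem norm_expI_sub_expI_le (x y : ℝ) : ‖expI x - expI y‖ ≤ |x - y| := by
  have factor : expI x - expI y = expI y * (expI (x - y) - 1) := by
    rw [mul_sub, ← expI_add, mul_one]
    ring_nf
  rw [factor, norm_mul, norm_expI, one_mul]
  exact Real.norm_exp_I_mul_ofReal_sub_one_le

theorem hasDerivAt_expI_comp {g : ℝ → ℝ} {g' t : ℝ} (hg : HasDerivAt g g' t) :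
    HasDerivAt (fun s => expI (g s)) (Complex.I * g' * expI (g t)) t := by
  simpa only [expI, mul_comm] using (hg.ofReal_comp.const_mul Complex.I).cexp

@[fun_prop] theorem continuous_expI : Continuous expI := by
  unfold expI
  fun_prop

theorem fourierCoef_eq_fourierCoeffOn (f : ℝ → ℂ) (k : ℤ) :
    fourierCoef f k = fourierCoeffOn Real.two_pi_pos f k := by
  rw [fourierCoeffOn_eq_integral, fourierCoef, sub_zero, Complex.real_smul]
  congr 1
  · push_cast; rfl
  · refine intervalIntegral.integral_congr fun t _ => ?_
    simp only [smul_eq_mul]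
    rw [fourier_coe_apply, mul_comm]
    congr 2
    push_cast
    field_simp [Real.pi_ne_zero]

theorem fourierCoef_eq_integral_expI (f : ℝ → ℂ) (k : ℤ) :
    fourierCoef f k = ((2 * π)⁻¹ : ℝ) * ∫ t in 0..2 * π, f t * expI (-(k * t)) := by
  simp only [fourierCoef, expI]
  push_cast
  ring_nf

theorem fourierCoef_add {f g : ℝ → ℂ} (hf : Continuous f) (hg : Continuous g) (k : ℤ) :
    fourierCoef (fun t => f t + g t) k = fourierCoef f k + fourierCoef g k := by
  simp only [fourierCoef_eq_integral_expI, add_mul]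
  rw [intervalIntegral.integral_add, mul_add] <;>
    exact Continuous.intervalIntegrable (by fun_prop) _ _

theorem fourierCoef_sub {f g : ℝ → ℂ} (hf : Continuous f) (hg : Continuous g) (k : ℤ) :
    fourierCoef (fun t => f t - g t) k = fourierCoef f k - fourierCoef g k := by
  simp only [fourierCoef_eq_integral_expI, sub_mul]
  rw [intervalIntegral.integral_sub, mul_sub] <;>
    exact Continuous.intervalIntegrable (by fun_prop) _ _

theorem norm_fourierCoef_le (f : ℝ → ℂ) (k : ℤ) :
    ‖fourierCoef f k‖ ≤ (2 * π)⁻¹ * ∫ t in 0..2 * π, ‖f t‖ := by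
  have hpi := Real.two_pi_pos
  rw [fourierCoef_eq_integral_expI, norm_mul, Complex.norm_of_nonneg (by positivity)]
  gcongr
  simpa only [norm_mul, norm_expI, mul_one] using
    intervalIntegral.norm_integral_le_integral_norm (μ := volume)
      (f := fun t => f t * expI (-(k * t))) hpi.le

theorem norm_fourierCoef_le_of_norm_le {f : ℝ → ℂ} {C : ℝ} (hf : Continuous f)
    (hC : ∀ t ∈ Icc 0 (2 * π), ‖f t‖ ≤ C) (k : ℤ) : ‖fourierCoef f k‖ ≤ C := by
  have hpi := Real.two_pi_pos
  refine (norm_fourierCoef_le f k).trans ((inv_mul_le_iff₀ hpi).2 ?_)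
  simpa using intervalIntegral.integral_mono_on (μ := volume) hpi.le
    (hf.norm.intervalIntegrable _ _) intervalIntegrable_const hC

theorem hasSum_sq_norm_fourierCoef {f : ℝ → ℂ} (hf : Continuous f) :
    HasSum (fun k : ℤ => ‖fourierCoef f k‖ ^ 2)
      ((2 * π)⁻¹ * ∫ t in 0..2 * π, ‖f t‖ ^ 2) := by
  have hL2 : MemLp f 2 (volume.restrict (Ioc 0 (2 * π))) := by
    obtain ⟨C, hC⟩ := (isCompact_Icc (a := (0 : ℝ)) (b := 2 * π)).exists_bound_of_continuousOn
      hf.continuousOn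
    refine MemLp.of_bound hf.aestronglyMeasurable C ?_
    filter_upwards [ae_restrict_mem measurableSet_Ioc] with t ht
    exact hC t (Ioc_subset_Icc_self ht)
  simpa only [sub_zero, smul_eq_mul, fourierCoef_eq_fourierCoeffOn] using
    hasSum_sq_fourierCoeffOn Real.two_pi_pos hL2

theorem fourierCoef_expI_int_mul (f : ℝ → ℂ) (j k : ℤ) :
    fourierCoef (fun t => expI (j * t) * f t) k = fourierCoef f (k - j) := by
  simp only [fourierCoef_eq_integral_expI]
  congr 2 with t
  rw [mul_comm (expI _), mul_assoc, ← expI_add]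
  push_cast
  ring_nf

theorem fourierCoef_of_hasDerivAt {f f' : ℝ → ℂ} (hf : ∀ t, HasDerivAt f (f' t) t)
    (hf' : Continuous f') (hper : f 0 = f (2 * π)) (k : ℤ) :
    fourierCoef f' k = Complex.I * k * fourierCoef f k := by
  have hexp (t : ℝ) : HasDerivAt (fun s : ℝ => expI (-(k * s)))
      (-Complex.I * k * expI (-(k * t))) t := by
    simpa using hasDerivAt_expI_comp ((hasDerivAt_id t).const_mul (k : ℝ)).neg
  have : Continuous f := continuous_iff_continuousAt.2 fun t => (hf t).continuousAt
  have parts := intervalIntegral.integral_mul_deriv_eq_deriv_mul (a := 0) (b := 2 * π)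
    (fun x _ => hf x) (fun x _ => hexp x) (hf'.intervalIntegrable _ _)
    (Continuous.intervalIntegrable (by fun_prop) _ _)
  have hend : expI (-(k * (2 * π))) = 1 := by
    simpa using expI_int_mul_two_pi (-k)
  have hpull : ∫ x in 0..2 * π, f x * (-Complex.I * k * expI (-(k * x))) =
      -Complex.I * k * ∫ x in 0..2 * π, f x * expI (-(k * x)) := by
    rw [← intervalIntegral.integral_const_mul]
    congr 1 with x
    ring
  rw [hpull, hend, ← hper, mul_zero, neg_zero, expI_zero, sub_self, zero_sub] at parts
  rw [fourierCoef_eq_integral_expI, fourierCoef_eq_integral_expI]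
  linear_combination (((2 * π)⁻¹ : ℝ) : ℂ) * parts

theorem fourierCoef_one (k : ℤ) : fourierCoef (fun _ => 1) k = if k = 0 then 1 else 0 := by
  split_ifs with hk
  · have : (π : ℂ) ≠ 0 := mod_cast Real.pi_ne_zero
    simp [hk, fourierCoef]
    field_simp
  · have h := fourierCoef_of_hasDerivAt (fun t => hasDerivAt_const t (1 : ℂ))
      continuous_const rfl k
    simpa [fourierCoef_eq_integral_expI (fun _ => 0), hk] using h.symm

theorem apNorm_eq_eLpNorm {p : ℝ} (hp : 0 < p) (f : ℝ → ℂ) :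
    ApNorm p f = eLpNorm (fourierCoef f) (ENNReal.ofReal p) Measure.count := by
  rw [eLpNorm_eq_lintegral_rpow_enorm_toReal (by simpa using hp) ENNReal.ofReal_ne_top,
    ENNReal.toReal_ofReal hp.le, lintegral_count]
  rfl

theorem apNorm_one_eq_tsum (f : ℝ → ℂ) : ApNorm 1 f = ∑' k, ‖fourierCoef f k‖ₑ := by
  simp [ApNorm, enorm_eq_nnnorm]

theorem apNorm_one {p : ℝ} (hp : 0 < p) : ApNorm p (fun _ => 1) = 1 := by
  rw [ApNorm, tsum_eq_single 0 fun k hk => by simp [fourierCoef_one, hk, hp]]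
  simp [fourierCoef_one]

theorem apNorm_expI_int_mul (p : ℝ) (f : ℝ → ℂ) (j : ℤ) :
    ApNorm p (fun t => expI (j * t) * f t) = ApNorm p f := by
  simp only [ApNorm, fourierCoef_expI_int_mul]
  exact congrArg (· ^ (1 / p))
    ((Equiv.subRight j).tsum_eq fun k => (‖fourierCoef f k‖₊ : ℝ≥0∞) ^ p)

theorem apNorm_add_le {p : ℝ} (hp : 1 ≤ p) {f g : ℝ → ℂ} (hf : Continuous f)
    (hg : Continuous g) : ApNorm p (fun t => f t + g t) ≤ ApNorm p f + ApNorm p g := by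
  have hcoef : fourierCoef (fun t => f t + g t) = fourierCoef f + fourierCoef g :=
    funext (fourierCoef_add hf hg)
  simp only [apNorm_eq_eLpNorm (zero_lt_one.trans_le hp), hcoef]
  exact eLpNorm_add_le .of_discrete .of_discrete (ENNReal.one_le_ofReal.2 hp)

theorem apNorm_le_tsum_of_hasSum {p : ℝ} (hp : 1 ≤ p) {f : ℕ → ℝ → ℂ} {g : ℝ → ℂ}
    (h : ∀ k, HasSum (fun n => fourierCoef (f n) k) (fourierCoef g k)) :
    ApNorm p g ≤ ∑' n, ApNorm p (f n) := by
  simp only [apNorm_eq_eLpNorm (zero_lt_one.trans_le hp)]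
  refine (Lp.eLpNorm_lim_le_liminf_eLpNorm (f := fun N => ∑ n ∈ Finset.range N, fourierCoef (f n))
    (fun N => .of_discrete) _ <| .of_forall fun k => by
      simpa only [Finset.sum_apply] using (h k).tendsto_sum_nat).trans ?_
  refine Filter.liminf_le_of_le ?_ fun b hb => ?_
  · isBoundedDefault
  · obtain ⟨N, hN⟩ := hb.exists
    exact hN.trans <| (eLpNorm_sum_le (fun n _ => .of_discrete)
      (ENNReal.one_le_ofReal.2 hp)).trans (ENNReal.sum_le_tsum _)

/-! ### A Bernstein inequality -/

theorem sum_range_one_div_one_add_sq_le {η : ℝ} (hη : 0 < η) (n : ℕ) :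
    ∑ k ∈ Finset.range n, 1 / (1 + (η * (k + 1 : ℕ)) ^ 2) ≤ π / (2 * η) := by
  have hanti : AntitoneOn (fun x : ℝ => 1 / (1 + (η * x) ^ 2)) (Icc 0 (0 + n)) :=
    fun x hx y _ hxy => by
      have hx0 := mul_nonneg hη.le hx.1
      dsimp only
      gcongr
  calc ∑ k ∈ Finset.range n, 1 / (1 + (η * (k + 1 : ℕ)) ^ 2)
      ≤ ∫ x in 0..(n : ℝ), 1 / (1 + (η * x) ^ 2) := by simpa using hanti.sum_le_integral
    _ = arctan (η * n) / η := by
      rw [intervalIntegral.integral_comp_mul_left (fun x => 1 / (1 + x ^ 2)) hη.ne']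
      simp [div_eq_inv_mul]
    _ ≤ (π / 2) / η := by gcongr; exact (arctan_lt_pi_div_two _).le
    _ = π / (2 * η) := by ring

theorem sum_int_one_div_one_add_sq_le {η : ℝ} (hη : 0 < η) (s : Finset ℤ) :
    ∑ k ∈ s, 1 / (1 + (η * k) ^ 2) ≤ 1 + π / η := by
  obtain ⟨N, hN⟩ : ∃ N : ℕ, s ⊆ Finset.Icc (-N : ℤ) N := by
    refine ⟨s.sup Int.natAbs, fun k hk => Finset.mem_Icc.2 ?_⟩
    have := Finset.le_sup (f := Int.natAbs) hk
    omega
  calc ∑ k ∈ s, 1 / (1 + (η * k) ^ 2)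
      ≤ ∑ k ∈ Finset.Icc (-N : ℤ) N, 1 / (1 + (η * k) ^ 2) :=
        Finset.sum_le_sum_of_subset_of_nonneg hN fun k _ _ => by positivity
    _ = 1 + 2 * ∑ k ∈ Finset.range N, 1 / (1 + (η * (k + 1 : ℕ)) ^ 2) := by
      rw [Finset.sum_Icc_of_even_eq_range (fun k => by simp), Finset.sum_range_succ']
      simp
      ring
    _ ≤ 1 + 2 * (π / (2 * η)) := by gcongr; exact sum_range_one_div_one_add_sq_le hη N
    _ = 1 + π / η := by field_simp

theorem apNorm_one_le_sqrt_energy {f f' : ℝ → ℂ} (hf : ∀ t, HasDerivAt f (f' t) t)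
    (hf' : Continuous f') (hper : f 0 = f (2 * π)) {η : ℝ} (hη : 0 < η) :
    ApNorm 1 f ≤ ENNReal.ofReal (√(((2 * π)⁻¹ *
      ((∫ t in 0..2 * π, ‖f t‖ ^ 2) + η ^ 2 * ∫ t in 0..2 * π, ‖f' t‖ ^ 2)) * (1 + π / η))) := by
  have hfc : Continuous f := continuous_iff_continuousAt.2 fun t => (hf t).continuousAt
  have henergy := (hasSum_sq_norm_fourierCoef hfc).add
    ((hasSum_sq_norm_fourierCoef hf').mul_left (η ^ 2))
  rw [apNorm_one_eq_tsum, ENNReal.tsum_eq_iSup_sum]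
  refine iSup_le fun s => ?_
  simp only [← ofReal_norm]
  rw [← ENNReal.ofReal_sum_of_nonneg fun k _ => norm_nonneg _]
  refine ENNReal.ofReal_le_ofReal (Real.le_sqrt_of_sq_le ?_)
  calc (∑ k ∈ s, ‖fourierCoef f k‖) ^ 2
      ≤ (∑ k ∈ s, (‖fourierCoef f k‖ ^ 2 + η ^ 2 * ‖fourierCoef f' k‖ ^ 2)) *
          ∑ k ∈ s, 1 / (1 + (η * k) ^ 2) := by
        refine Finset.sum_sq_le_sum_mul_sum_of_sq_le_mul s (fun k _ => by positivity)
          (fun k _ => by positivity) fun k _ => le_of_eq ?_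
        have hne : 1 + (η * k) ^ 2 ≠ 0 := by positivity
        rw [fourierCoef_of_hasDerivAt hf hf' hper]
        simp only [norm_mul, Complex.norm_I, Complex.norm_intCast, one_mul, mul_pow, sq_abs] at *
        field_simp
    _ ≤ _ := by
        rw [mul_add (2 * π)⁻¹, mul_left_comm _ (η ^ 2)]
        exact mul_le_mul (sum_le_hasSum s (fun k _ => by positivity) henergy)
          (sum_int_one_div_one_add_sq_le hη s) (by positivity)
          (henergy.nonneg fun k => by positivity)

theorem support_subset_Ioo_of_hasDerivAt {G G' : ℝ → ℂ} {u v : ℝ}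
    (hG : ∀ t, HasDerivAt G (G' t) t) (hsupp : ∀ t ∉ Ioo u v, G t = 0) :
    ∀ t ∉ Ioo u v, G' t = 0 := by
  intro t ht
  have hzero (s : Set ℝ) (hs : ∀ x ∈ s, x ∉ Ioo u v)
      (huniq : UniqueDiffWithinAt ℝ s t) : G' t = 0 :=
    huniq.eq_deriv _ (hG t).hasDerivWithinAt <|
      (hasDerivWithinAt_const t s (0 : ℂ)).congr (fun x hx => hsupp x (hs x hx)) (hsupp t ht)
  rcases le_or_gt t u with htu | htu
  · exact hzero (Iic u) (fun x hx hx' => hx'.1.not_ge hx) (uniqueDiffOn_Iic u t htu)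
  · have hvt : v ≤ t := not_lt.1 fun h => ht ⟨htu, h⟩
    exact hzero (Ici v) (fun x hx hx' => hx'.2.not_ge hx) (uniqueDiffOn_Ici v t hvt)

theorem integral_le_mul_of_support {F : ℝ → ℝ} (hF : Continuous F) {K u v : ℝ} (huv : u ≤ v)
    (hsub : Ioo u v ⊆ Ioo 0 (2 * π)) (hK : ∀ t, F t ≤ K) (hsupp : ∀ t ∉ Ioo u v, F t = 0) :
    ∫ t in 0..2 * π, F t ≤ K * (v - u) := by
  have hsupp' : Function.support F ⊆ Ioo u v := fun t ht => not_not.1 fun h => ht (hsupp t h)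
  calc ∫ t in 0..2 * π, F t = ∫ t in u..v, F t := by
        rw [intervalIntegral.integral_eq_integral_of_support_subset
            (hsupp'.trans (hsub.trans Ioo_subset_Ioc_self)),
          intervalIntegral.integral_eq_integral_of_support_subset
            (hsupp'.trans Ioo_subset_Ioc_self)]
    _ ≤ ∫ _ in u..v, K := intervalIntegral.integral_mono_on huv (hF.intervalIntegrable _ _)
          intervalIntegrable_const fun t _ => hK t
    _ = K * (v - u) := by simp [mul_comm]

theorem apNorm_one_le_of_bump {G G' : ℝ → ℂ} {K η u v : ℝ} (hG : ∀ t, HasDerivAt G (G' t) t)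
    (hG' : Continuous G') (hη : 0 < η) (hη1 : η ≤ 1) (huv : u ≤ v)
    (hsub : Ioo u v ⊆ Ioo 0 (2 * π)) (hlen : v - u ≤ 8 * η) (hK : ∀ t, ‖G t‖ ≤ K)
    (hK' : ∀ t, η * ‖G' t‖ ≤ K) (hsupp : ∀ t ∉ Ioo u v, G t = 0) :
    ApNorm 1 G ≤ ENNReal.ofReal (4 * K) := by
  have hK0 : 0 ≤ K := (norm_nonneg _).trans (hK 0)
  have hGc : Continuous G := continuous_iff_continuousAt.2 fun t => (hG t).continuousAt
  have hends : G 0 = G (2 * π) := by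
    rw [hsupp 0 fun h => lt_irrefl _ (hsub h).1, hsupp (2 * π) fun h => lt_irrefl _ (hsub h).2]
  have hint := integral_le_mul_of_support (F := fun t => ‖G t‖ ^ 2) (by fun_prop) huv hsub
    (fun t => pow_le_pow_left₀ (norm_nonneg _) (hK t) 2) fun t ht => by simp [hsupp t ht]
  have hint' := integral_le_mul_of_support (F := fun t => ‖G' t‖ ^ 2) (by fun_prop) huv hsub
    (fun t => pow_le_pow_left₀ (norm_nonneg _) ((le_div_iff₀' hη).2 (hK' t)) 2)
    fun t ht => by simp [support_subset_Ioo_of_hasDerivAt hG hsupp t ht]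
  refine (apNorm_one_le_sqrt_energy hG hG' hends hη).trans (ENNReal.ofReal_le_ofReal ?_)
  refine (Real.sqrt_le_left (by positivity)).2 ?_
  have hpi := Real.pi_gt_three
  calc _ ≤ ((2 * π)⁻¹ * (K ^ 2 * (8 * η) + η ^ 2 * ((K / η) ^ 2 * (8 * η)))) *
        (1 / η + π / η) := by
        have : 1 ≤ 1 / η := one_le_one_div hη hη1
        have h1 : K ^ 2 * (v - u) ≤ K ^ 2 * (8 * η) := by gcongr
        have h2 : (K / η) ^ 2 * (v - u) ≤ (K / η) ^ 2 * (8 * η) := by gcongr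
        gcongr
        exacts [hint.trans h1, hint'.trans h2]
    _ = 8 * K ^ 2 * (1 / π + 1) := by field_simp; ring
    _ ≤ 8 * K ^ 2 * (1 + 1) := by gcongr; exact (div_le_one₀ pi_pos).2 (by linarith)
    _ = (4 * K) ^ 2 := by ring

theorem apNorm_one_expI_mul_le_of_bump {G G' : ℝ → ℂ} {K η u v : ℝ} (ν : ℝ)
    (hG : ∀ t, HasDerivAt G (G' t) t) (hG' : Continuous G') (hη : 0 < η) (hη1 : η ≤ 1)
    (huv : u ≤ v) (hsub : Ioo u v ⊆ Ioo 0 (2 * π)) (hlen : v - u ≤ 8 * η) (hK : ∀ t, ‖G t‖ ≤ K)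
    (hK' : ∀ t, η * ‖G' t‖ ≤ K) (hsupp : ∀ t ∉ Ioo u v, G t = 0) :
    ApNorm 1 (fun t => expI (ν * t) * G t) ≤ ENNReal.ofReal (8 * K) := by
  have hGc : Continuous G := continuous_iff_continuousAt.2 fun t => (hG t).continuousAt
  have hK0 : 0 ≤ K := (norm_nonneg _).trans (hK 0)
  have hsplit : (fun t => expI (ν * t) * G t) =
      fun t => expI (⌊ν⌋ * t) * (expI (Int.fract ν * t) * G t) := by
    ext t
    rw [← mul_assoc, ← expI_add, ← add_mul, Int.floor_add_fract]
  have hderiv (t : ℝ) :=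
    (hasDerivAt_expI_comp ((hasDerivAt_id t).const_mul (Int.fract ν))).mul (hG t)
  rw [hsplit, apNorm_expI_int_mul]
  refine (apNorm_one_le_of_bump (K := 2 * K) hderiv (by fun_prop) hη hη1 huv hsub hlen (fun t => ?_)
    (fun t => ?_) fun t ht => by simp [hsupp t ht]).trans_eq (by ring_nf)
  · simpa using (hK t).trans (by linarith)
  · have hfract : Int.fract ν * ‖G t‖ ≤ K :=
      (mul_le_of_le_one_left (norm_nonneg _) (Int.fract_lt_one ν).le).trans (hK t)
    have hnorm : ‖Complex.I * ((Int.fract ν * 1 : ℝ) : ℂ) * expI (Int.fract ν * t) * G t +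
        expI (Int.fract ν * t) * G' t‖ ≤ Int.fract ν * ‖G t‖ + ‖G' t‖ := by
      refine (norm_add_le _ _).trans_eq ?_
      simp [abs_of_nonneg (Int.fract_nonneg ν)]
    calc _ ≤ η * (Int.fract ν * ‖G t‖ + ‖G' t‖) := by gcongr; exact hnorm
      _ ≤ 1 * K + K := by
        rw [mul_add]
        gcongr
        exact hK' t
      _ = 2 * K := by ring

/-! ### Lower bounds for the norms of `e^{iλφ}` -/

theorem tsum_mul_rpow_le_weight_mul_tsum {ι : Type*} {p : ℝ} (hp : 1 ≤ p) (w f : ι → ℝ≥0∞) :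
    (∑' i, w i * f i) ^ p ≤ (∑' i, w i) ^ (p - 1) * ∑' i, w i * f i ^ p := by
  have hp0 : 0 < p := zero_lt_one.trans_le hp
  rw [← ENNReal.le_rpow_inv_iff hp0, ENNReal.tsum_eq_iSup_sum]
  refine iSup_le fun s => (ENNReal.inner_le_weight_mul_Lp_of_nonneg s hp w f).trans ?_
  have hexp : (p - 1) * p⁻¹ = 1 - p⁻¹ := by field_simp
  rw [ENNReal.mul_rpow_of_nonneg _ _ (inv_nonneg.2 hp0.le), ← ENNReal.rpow_mul, hexp]
  gcongr
  · exact sub_nonneg.2 (inv_le_one_of_one_le₀ hp)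
  · exact ENNReal.sum_le_tsum s
  · exact ENNReal.sum_le_tsum s

theorem tsum_convolution_rpow_le {G : Type*} [AddGroup G] {p : ℝ} (hp : 1 ≤ p)
    (w f : G → ℝ≥0∞) :
    ∑' k, (∑' j, w j * f (k - j)) ^ p ≤ (∑' j, w j) ^ p * ∑' k, f k ^ p := by
  calc ∑' k, (∑' j, w j * f (k - j)) ^ p
      ≤ ∑' k, (∑' j, w j) ^ (p - 1) * ∑' j, w j * f (k - j) ^ p :=
        ENNReal.tsum_le_tsum fun k => tsum_mul_rpow_le_weight_mul_tsum hp w fun j => f (k - j)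
    _ = (∑' j, w j) ^ (p - 1) * ∑' j, w j * ∑' k, f (k - j) ^ p := by
        rw [ENNReal.tsum_mul_left, ENNReal.tsum_comm]
        simp only [ENNReal.tsum_mul_left]
    _ = (∑' j, w j) ^ (p - 1) * ∑' j, w j * ∑' k, f k ^ p := by
        simp only [fun j => (Equiv.subRight j).tsum_eq fun k => f k ^ p, ← Equiv.subRight_apply]
    _ = (∑' j, w j) ^ p * ∑' k, f k ^ p := by
        rw [ENNReal.tsum_mul_right, ← mul_assoc]
        congr 1
        conv_lhs => rw [← ENNReal.rpow_one (∑' j, w j), ← ENNReal.rpow_mul, one_mul,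
          ← ENNReal.rpow_add_of_nonneg _ _ (sub_nonneg.2 hp) zero_le_one, sub_add_cancel]

theorem card_rpow_mul_le_apNorm {p : ℝ} (hp : 1 ≤ p) {f : ℝ → ℂ} {w : ℤ → ℝ≥0∞} {a : ℝ≥0∞}
    {s : Finset ℤ} (h : ∀ k ∈ s, a ≤ ∑' j, w j * ‖fourierCoef f (k - j)‖ₑ) :
    (s.card : ℝ≥0∞) ^ (1 / p) * a ≤ (∑' j, w j) * ApNorm p f := by
  have hp0 : 0 < p := zero_lt_one.trans_le hp
  have hsum : s.card * a ^ p ≤ (∑' j, w j) ^ p * ∑' k, ‖fourierCoef f k‖ₑ ^ p :=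
    calc s.card * a ^ p = ∑ _ ∈ s, a ^ p := by simp
      _ ≤ ∑ k ∈ s, (∑' j, w j * ‖fourierCoef f (k - j)‖ₑ) ^ p := by
        gcongr with k hk
        exact h k hk
      _ ≤ _ := (ENNReal.sum_le_tsum s).trans (tsum_convolution_rpow_le hp _ _)
  simpa [ApNorm, ← enorm_eq_nnnorm, ENNReal.mul_rpow_of_nonneg, hp0.le, hp0.ne',
    ← ENNReal.rpow_mul] using! ENNReal.rpow_le_rpow hsum (one_div_nonneg.2 hp0.le)

theorem hasSum_fourierCoef_mul_expI {f : ℝ → ℂ} (hf : Continuous f) (hper : f 0 = f (2 * π))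
    (hsum : Summable (fourierCoef f)) {t : ℝ} (ht : t ∈ Ico 0 (2 * π)) :
    HasSum (fun j : ℤ => fourierCoef f j * expI (j * t)) (f t) := by
  have : Fact (0 < 2 * π) := ⟨Real.two_pi_pos⟩
  let F : C(AddCircle (2 * π), ℂ) :=
    ⟨AddCircle.liftIco (2 * π) 0 f, AddCircle.liftIco_zero_continuous hper hf.continuousOn⟩
  have hF : fourierCoeff F = fourierCoef f := by
    ext k
    rw [fourierCoef_eq_fourierCoeffOn]
    refine (fourierCoeff_liftIco_eq f k).trans ?_
    congr 1
    exact zero_add _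
  have := has_pointwise_sum_fourier_series_of_summable (f := F) (by rwa [hF])
    (t : AddCircle (2 * π))
  rw [hF] at this
  convert this using 1
  · ext j
    rw [fourier_coe_apply, smul_eq_mul, expI]
    congr 2
    push_cast
    field_simp [Real.pi_ne_zero]
  · exact (AddCircle.liftIco_coe_apply (by simpa using ht)).symm

theorem hasSum_fourierCoef_mul {f g : ℝ → ℂ} (hf : Continuous f) (hg : Continuous g)
    (hper : g 0 = g (2 * π)) (hsum : Summable (fourierCoef g)) (k : ℤ) :
    HasSum (fun j => fourierCoef g j * fourierCoef f (k - j))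
      (fourierCoef (fun t => f t * g t) k) := by
  have key : HasSum
      (fun j : ℤ => ∫ t in 0..2 * π, fourierCoef g j * (f t * expI (-((k - j : ℤ) * t))))
      (∫ t in 0..2 * π, f t * g t * expI (-(k * t))) := by
    refine intervalIntegral.hasSum_integral_of_dominated_convergence
      (fun j t => ‖fourierCoef g j‖ * ‖f t‖)
      (fun j => Continuous.aestronglyMeasurable (by fun_prop))
      (fun j => .of_forall fun t _ => by simp) (.of_forall fun t _ => hsum.norm.mul_right _) ?_ ?_
    · simp only [tsum_mul_right]
      exact Continuous.intervalIntegrable (by fun_prop) _ _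
    · filter_upwards [Measure.ae_ne volume (2 * π)] with t htne ht
      rw [uIoc_of_le Real.two_pi_pos.le] at ht
      have hgt := hasSum_fourierCoef_mul_expI hg hper hsum ⟨ht.1.le, ht.2.lt_of_ne htne⟩
      have hexp (j : ℤ) : expI (-((k - j : ℤ) * t)) = expI (j * t) * expI (-(k * t)) := by
        rw [← expI_add]
        push_cast
        ring_nf
      refine ((hgt.mul_left (f t)).mul_right (expI (-(k * t)))).congr_fun fun j => ?_
      rw [hexp j]
      ring
  rw [fourierCoef_eq_integral_expI]
  refine (key.mul_left (((2 * π)⁻¹ : ℝ) : ℂ)).congr_fun fun j => ?_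
  rw [intervalIntegral.integral_const_mul, fourierCoef_eq_integral_expI f]
  ring

theorem enorm_fourierCoef_mul_le {f g : ℝ → ℂ} (hf : Continuous f) (hg : Continuous g)
    (hper : g 0 = g (2 * π)) (hsum : ApNorm 1 g ≠ ∞) (k : ℤ) :
    ‖fourierCoef (fun t => f t * g t) k‖ₑ ≤
      ∑' j, ‖fourierCoef g j‖ₑ * ‖fourierCoef f (k - j)‖ₑ := by
  have hsummable : Summable (fourierCoef g) := by
    refine Summable.of_norm ?_
    have hne : ∑' j, ‖fourierCoef g j‖ₑ ≠ ∞ := apNorm_one_eq_tsum g ▸ hsum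
    simpa using ENNReal.summable_toReal hne
  rw [← (hasSum_fourierCoef_mul hf hg hper hsummable k).tsum_eq]
  simpa only [enorm_mul] using
    enorm_tsum_le_tsum_enorm (f := fun j => fourierCoef g j * fourierCoef f (k - j))


theorem abs_sub_sub_deriv_mul_le {φ : ℝ → ℝ} {α C : ℝ} (hφ : Differentiable ℝ φ)
    (hα : 0 ≤ α) (hC : 0 ≤ C) (hHolder : ∀ s t, |deriv φ s - deriv φ t| ≤ C * |s - t| ^ α)
    (s t : ℝ) : |φ t - φ s - deriv φ s * (t - s)| ≤ C * |t - s| ^ α * |t - s| := by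
  have hderiv (x : ℝ) : HasDerivAt (fun x => φ x - deriv φ s * x) (deriv φ x - deriv φ s) x := by
    simpa using (hφ x).hasDerivAt.fun_sub ((hasDerivAt_id x).const_mul (deriv φ s))
  have hbound : ∀ x ∈ uIcc s t, ‖deriv φ x - deriv φ s‖ ≤ C * |t - s| ^ α := fun x hx =>
    (hHolder x s).trans (mul_le_mul_of_nonneg_left
      (rpow_le_rpow (abs_nonneg _) (abs_sub_left_of_mem_uIcc hx) hα) hC)
  have := (convex_uIcc s t).norm_image_sub_le_of_norm_hasDerivWithin_le
    (fun x _ => (hderiv x).hasDerivWithinAt) hbound left_mem_uIcc right_mem_uIcc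
  simp only [Real.norm_eq_abs] at this
  convert this using 2
  ring

theorem half_integral_le_norm_integral_expI_mul {a b c : ℝ} (hab : a ≤ b) {g V : ℝ → ℝ}
    (hg : Continuous g) (hV : Continuous V) (hV0 : ∀ t, 0 ≤ V t)
    (hclose : ∀ t, V t ≠ 0 → |g t - c| ≤ 1 / 2) :
    1 / 2 * ∫ t in a..b, V t ≤ ‖∫ t in a..b, expI (g t) * V t‖ := by
  have hmain : ‖∫ t in a..b, expI c * V t‖ = ∫ t in a..b, V t := by
    rw [intervalIntegral.integral_const_mul, norm_mul, norm_expI, one_mul,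
      intervalIntegral.integral_ofReal, Complex.norm_real,
      norm_of_nonneg (intervalIntegral.integral_nonneg hab fun t _ => hV0 t)]
  have herror : ‖∫ t in a..b, (expI (g t) * V t - expI c * V t)‖ ≤ 1 / 2 * ∫ t in a..b, V t := by
    rw [← intervalIntegral.integral_const_mul]
    refine intervalIntegral.norm_integral_le_of_norm_le hab (.of_forall fun t _ => ?_)
      (Continuous.intervalIntegrable (by fun_prop) _ _)
    rw [← sub_mul, norm_mul, Complex.norm_real, norm_of_nonneg (hV0 t)]
    rcases eq_or_ne (V t) 0 with h0 | h0
    · simp [h0]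
    · exact mul_le_mul_of_nonneg_right
        ((norm_expI_sub_expI_le _ _).trans (hclose t h0)) (hV0 t)
  rw [intervalIntegral.integral_sub (Continuous.intervalIntegrable (by fun_prop) _ _)
    (Continuous.intervalIntegrable (by fun_prop) _ _), norm_sub_rev] at herror
  have := norm_sub_norm_le (∫ t in a..b, expI c * V t) (∫ t in a..b, expI (g t) * V t)
  linarith

theorem norm_fourierCoef_comp_sub_eq {f : ℝ → ℂ} {s s' : ℝ}
    (hs : Function.support (fun t => f (t - s)) ⊆ Ioo 0 (2 * π))
    (hs' : Function.support (fun t => f (t - s')) ⊆ Ioo 0 (2 * π)) (k : ℤ) :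
    ‖fourierCoef (fun t => f (t - s)) k‖ = ‖fourierCoef (fun t => f (t - s')) k‖ := by
  suffices key : ∀ {r : ℝ}, Function.support (fun t => f (t - r)) ⊆ Ioo 0 (2 * π) →
      ‖fourierCoef (fun t => f (t - r)) k‖ = ‖((2 * π)⁻¹ : ℂ) * ∫ t, f t * expI (-(k * t))‖ from
    (key hs).trans (key hs').symm
  intro r hr
  have hline : ∫ t in 0..2 * π, f (t - r) * expI (-(k * t)) =
      (∫ t, f t * expI (-(k * t))) * expI (-(k * r)) := by
    rw [intervalIntegral.integral_eq_integral_of_support_subset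
        ((Function.support_mul_subset_left _ _).trans (hr.trans Ioo_subset_Ioc_self)),
      ← integral_add_right_eq_self _ r, ← integral_mul_const]
    congr with t
    rw [add_sub_cancel_right, mul_assoc, ← expI_add]
    ring_nf
  rw [fourierCoef_eq_integral_expI, hline, norm_mul, norm_mul, norm_mul, norm_expI, mul_one]
  norm_cast

/-- The fixed smooth bump, equal to `1` on `[-1/2, 1/2]` and supported in `(-1, 1)`, whose
rescalings localize `e^{iλφ}`. -/
noncomputable def testBump : ContDiffBump (0 : ℝ) := ⟨1 / 2, 1, by norm_num, by norm_num⟩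

theorem testBump_eq_zero_of_one_le_abs {y : ℝ} (hy : 1 ≤ |y|) : testBump y = 0 :=
  testBump.zero_of_le_dist (by simpa [testBump] using hy)

theorem support_testBump_rescale_subset {s ρ : ℝ} (hρ : 0 < ρ) :
    Function.support (fun t => testBump ((t - s) / ρ)) ⊆ Ioo (s - ρ) (s + ρ) := by
  intro t ht
  have hlt : |(t - s) / ρ| < 1 := not_le.1 fun h => ht (testBump_eq_zero_of_one_le_abs h)
  rw [abs_div, abs_of_pos hρ, div_lt_one hρ, abs_lt] at hlt
  exact ⟨by linarith, by linarith⟩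

theorem le_integral_testBump_rescale {s ρ a b : ℝ} (hρ : 0 < ρ)
    (hsub : Ioo (s - ρ) (s + ρ) ⊆ Ioc a b) :
    ρ ≤ ∫ t in a..b, testBump ((t - s) / ρ) := by
  have hcont : Continuous fun t => testBump ((t - s) / ρ) :=
    testBump.continuous.comp (by fun_prop)
  calc ρ = ∫ t in (s - ρ / 2)..(s + ρ / 2), 1 := by simp
    _ = ∫ t in (s - ρ / 2)..(s + ρ / 2), testBump ((t - s) / ρ) := by
      refine intervalIntegral.integral_congr fun t ht => ?_
      rw [uIcc_of_le (by linarith)] at ht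
      refine (testBump.one_of_mem_closedBall ?_).symm
      rw [mem_closedBall_zero_iff, Real.norm_eq_abs, abs_div, abs_of_pos hρ, div_le_iff₀ hρ, abs_le]
      simp only [testBump]
      constructor <;> linarith [ht.1, ht.2]
    _ ≤ ∫ t, testBump ((t - s) / ρ) := by
      rw [intervalIntegral.integral_of_le (by linarith)]
      refine setIntegral_le_integral ?_ (.of_forall fun t => testBump.nonneg)
      exact hcont.integrable_of_hasCompactSupport <| .intro isCompact_Icc fun t ht =>
        not_not.1 fun h => ht (Ioo_subset_Icc_self (support_testBump_rescale_subset hρ h))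
    _ = ∫ t in a..b, testBump ((t - s) / ρ) :=
      (intervalIntegral.integral_eq_integral_of_support_subset
        ((support_testBump_rescale_subset hρ).trans hsub)).symm

theorem exists_apNorm_one_testBump_le : ∃ B > 0, ∀ s ρ : ℝ, 0 < ρ → ρ ≤ 1 →
    Ioo (s - ρ) (s + ρ) ⊆ Ioo 0 (2 * π) →
      ApNorm 1 (fun t => (testBump ((t - s) / ρ) : ℂ)) ≤ ENNReal.ofReal B := by
  have hsmooth : ContDiff ℝ 1 testBump := testBump.contDiff
  obtain ⟨D, hD⟩ := (hsmooth.continuous_deriv le_rfl).bounded_above_of_compact_support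
    testBump.hasCompactSupport.deriv
  refine ⟨4 * max 1 D, by positivity, fun s ρ hρ hρ1 hsub => ?_⟩
  have hderiv (t : ℝ) : HasDerivAt (fun t => (testBump ((t - s) / ρ) : ℂ))
      ((deriv testBump ((t - s) / ρ) * (1 / ρ) : ℝ) : ℂ) t :=
    HasDerivAt.ofReal_comp (f := fun t => testBump ((t - s) / ρ)) <|
      HasDerivAt.comp (h₂ := testBump) (h := fun t => (t - s) / ρ) t
        (hsmooth.differentiable one_ne_zero _).hasDerivAt
        (((hasDerivAt_id' t).sub_const s).div_const ρ)
  have := hsmooth.continuous_deriv le_rfl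
  refine apNorm_one_le_of_bump hderiv (by fun_prop) hρ hρ1 (by linarith) hsub (by linarith)
    (fun t => ?_) (fun t => ?_) fun t ht => ?_
  · rw [Complex.norm_real, norm_of_nonneg testBump.nonneg]
    exact testBump.le_one.trans (le_max_left _ _)
  · rw [Complex.norm_real, norm_mul, norm_div, norm_one, norm_of_nonneg hρ.le, mul_one_div,
      mul_div_cancel₀ _ hρ.ne']
    exact (hD _).trans (le_max_right _ _)
  · exact_mod_cast not_not.1 fun h => ht (support_testBump_rescale_subset hρ h)

theorem ofReal_le_enorm_fourierCoef_expI_mul_testBump {φ : ℝ → ℝ} {α C lam s ρ : ℝ} {k : ℤ}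
    (hφ : Differentiable ℝ φ) (hα : 0 ≤ α) (hC : 0 ≤ C)
    (hHolder : ∀ s t, |deriv φ s - deriv φ t| ≤ C * |s - t| ^ α) (hρ : 0 < ρ)
    (hsub : Ioo (s - ρ) (s + ρ) ⊆ Ioo 0 (2 * π)) (hscale : |lam| * C * ρ ^ (1 + α) ≤ 1 / 2)
    (hk : lam * deriv φ s = k) :
    ENNReal.ofReal (ρ / (4 * π)) ≤
      ‖fourierCoef (fun t => expI (lam * φ t) * testBump ((t - s) / ρ)) k‖ₑ := by
  have hphase : ∀ t, testBump ((t - s) / ρ) ≠ 0 →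
      |lam * φ t - k * t - (lam * φ s - k * s)| ≤ 1 / 2 := by
    intro t ht
    have hts : |t - s| ≤ ρ := by
      obtain ⟨h₁, h₂⟩ := support_testBump_rescale_subset hρ ht
      exact abs_le.2 ⟨by linarith, by linarith⟩
    calc |lam * φ t - k * t - (lam * φ s - k * s)|
        = |lam| * |φ t - φ s - deriv φ s * (t - s)| := by rw [← abs_mul, ← hk]; ring_nf
      _ ≤ |lam| * (C * ρ ^ α * ρ) := by
        grw [abs_sub_sub_deriv_mul_le hφ hα hC hHolder s t]
        gcongr
      _ = |lam| * C * ρ ^ (1 + α) := by rw [rpow_add hρ, rpow_one]; ring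
      _ ≤ 1 / 2 := hscale
  have hcont : Continuous fun t => testBump ((t - s) / ρ) :=
    testBump.continuous.comp (by fun_prop)
  have hlower := half_integral_le_norm_integral_expI_mul Real.two_pi_pos.le
    (g := fun t => lam * φ t - k * t) (by have := hφ.continuous; fun_prop) hcont
    (fun t => testBump.nonneg) hphase
  have hcoef : fourierCoef (fun t => expI (lam * φ t) * testBump ((t - s) / ρ)) k =
      ((2 * π)⁻¹ : ℝ) * ∫ t in 0..2 * π, expI (lam * φ t - k * t) * testBump ((t - s) / ρ) := by
    simp only [fourierCoef_eq_integral_expI, sub_eq_add_neg, expI_add, mul_right_comm]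
  rw [← ofReal_norm, hcoef, norm_mul, Complex.norm_real, norm_of_nonneg (by positivity)]
  refine ENNReal.ofReal_le_ofReal ?_
  calc ρ / (4 * π) = (2 * π)⁻¹ * (1 / 2 * ρ) := by field_simp; norm_num
    _ ≤ _ := by
      grw [← hlower, ← le_integral_testBump_rescale hρ (hsub.trans Ioo_subset_Ioc_self)]

theorem exists_card_rpow_mul_le_apNorm_expI {φ : ℝ → ℝ} {α C p : ℝ} (hφ : Differentiable ℝ φ)
    (hα : 0 ≤ α) (hC : 0 ≤ C) (hHolder : ∀ s t, |deriv φ s - deriv φ t| ≤ C * |s - t| ^ α)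
    (hp : 1 ≤ p) :
    ∃ B > 0, ∀ {lam ρ u v : ℝ} {A : Finset ℤ}, 0 < ρ → ρ ≤ 1 → ρ ≤ u → v + ρ ≤ 2 * π →
      |lam| * C * ρ ^ (1 + α) ≤ 1 / 2 → (∀ k ∈ A, ∃ s ∈ Icc u v, lam * deriv φ s = k) →
        (A.card : ℝ≥0∞) ^ (1 / p) * ENNReal.ofReal (ρ / (4 * π)) ≤
          ENNReal.ofReal B * ApNorm p (fun t => expI (lam * φ t)) := by
  obtain ⟨B, hB0, hB⟩ := exists_apNorm_one_testBump_le
  refine ⟨B, hB0, fun {lam ρ u v A} hρ hρ1 hu hv hscale hA => ?_⟩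
  rcases A.eq_empty_or_nonempty with rfl | ⟨k₀, hk₀⟩
  · simp [zero_lt_one.trans_le hp]
  obtain ⟨s₀, hs₀, -⟩ := hA k₀ hk₀
  have hsub {s : ℝ} (hs : s ∈ Icc u v) : Ioo (s - ρ) (s + ρ) ⊆ Ioo 0 (2 * π) :=
    Ioo_subset_Ioo (by linarith [hs.1]) (by linarith [hs.2])
  have hsupp {s : ℝ} (hs : s ∈ Icc u v) :
      Function.support (fun t => (testBump ((t - s) / ρ) : ℂ)) ⊆ Ioo 0 (2 * π) := fun t ht =>
    hsub hs (support_testBump_rescale_subset hρ fun h => ht (by simp [h]))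
  have hcont (s : ℝ) : Continuous fun t => (testBump ((t - s) / ρ) : ℂ) :=
    Complex.continuous_ofReal.comp (testBump.continuous.comp (by fun_prop))
  grw [← hB s₀ ρ hρ hρ1 (hsub hs₀), apNorm_one_eq_tsum]
  refine card_rpow_mul_le_apNorm hp fun k hk => ?_
  obtain ⟨s, hs, hsk⟩ := hA k hk
  have hends : ((testBump ((0 - s) / ρ) : ℝ) : ℂ) = testBump ((2 * π - s) / ρ) := by
    rw [Function.notMem_support.1 fun h => lt_irrefl _ (hsupp hs h).1,
      Function.notMem_support.1 fun h => lt_irrefl _ (hsupp hs h).2]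
  refine (ofReal_le_enorm_fourierCoef_expI_mul_testBump hφ hα hC hHolder hρ (hsub hs) hscale
    hsk).trans ((enorm_fourierCoef_mul_le ?_ (hcont s) hends
      (ne_top_of_le_ne_top ENNReal.ofReal_ne_top (hB s ρ hρ hρ1 (hsub hs))) k).trans_eq ?_)
  · exact continuous_expI.comp (continuous_const.mul hφ.continuous)
  · refine tsum_congr fun j => ?_
    congr 1
    rw [← ofReal_norm, ← ofReal_norm,
      norm_fourierCoef_comp_sub_eq (f := fun t => (testBump (t / ρ) : ℂ)) (hsupp hs) (hsupp hs₀)]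

theorem exists_finset_forall_exists_eq_intCast {f : ℝ → ℝ} {u v : ℝ} (huv : u ≤ v)
    (hf : ContinuousOn f (Icc u v)) (hlarge : 2 ≤ |f v - f u|) :
    ∃ A : Finset ℤ, |f v - f u| / 2 ≤ A.card ∧ ∀ k ∈ A, ∃ s ∈ Icc u v, f s = k := by
  rw [← uIcc_of_le huv] at *
  refine ⟨Finset.Icc ⌈min (f u) (f v)⌉ ⌊max (f u) (f v)⌋, ?_, fun k hk => ?_⟩
  · rw [← max_sub_min_eq_abs] at *
    have hfloor := Int.lt_floor_add_one (max (f u) (f v))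
    have hceil := Int.ceil_lt_add_one (min (f u) (f v))
    rw [Int.card_Icc]
    have : (⌊max (f u) (f v)⌋ + 1 - ⌈min (f u) (f v)⌉ : ℝ) ≤
        ((⌊max (f u) (f v)⌋ + 1 - ⌈min (f u) (f v)⌉).toNat : ℝ) := by
      exact_mod_cast Int.self_le_toNat _
    linarith
  · rw [Finset.mem_Icc, Int.ceil_le, Int.le_floor] at hk
    exact intermediate_value_uIcc hf hk

/-- The test bumps have width `(2CL)^(-1/(1+α))` because a phase `Lφ` whose derivative has Hölder
constant `CL` is linear up to a bounded error at that scale. -/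
theorem localization_scale {α C δ L : ℝ} (hα : 0 ≤ α) (hC : 0 < C) (hδ : 0 < δ) (hL : 0 < L)
    (hlarge : (2 * C)⁻¹ * δ ^ (-(1 + α)) ≤ L) :
    L * C * ((2 * C * L) ^ (-(1 / (1 + α)))) ^ (1 + α) = 1 / 2 ∧
      (2 * C * L) ^ (-(1 / (1 + α))) ≤ δ := by
  have hpow : ((2 * C * L) ^ (-(1 / (1 + α)))) ^ (1 + α) = (2 * C * L)⁻¹ := by
    rw [← rpow_mul (by positivity), ← rpow_neg_one]
    congr 1
    field_simp
  refine ⟨by rw [hpow]; field_simp, ?_⟩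
  rw [← rpow_le_rpow_iff (by positivity) hδ.le (by linarith : 0 < 1 + α), hpow,
    inv_le_comm₀ (by positivity) (by positivity), ← rpow_neg hδ.le]
  rwa [inv_mul_le_iff₀ (by positivity)] at hlarge

theorem exists_ofReal_rpow_le_apNorm_expI {φ : ℝ → ℝ} {α C p t₁ t₂ : ℝ} (hφ : ContDiff ℝ 1 φ)
    (hα : 0 ≤ α) (hC : 0 < C) (hHolder : ∀ s t, |deriv φ s - deriv φ t| ≤ C * |s - t| ^ α)
    (hp : 1 ≤ p) (ht₁ : 0 < t₁) (ht : t₁ ≤ t₂) (ht₂ : t₂ < 2 * π) (hne : deriv φ t₁ ≠ deriv φ t₂) :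
    ∃ c > 0, ∃ Λ : ℝ, 2 ≤ Λ ∧ ∀ lam : ℝ, Λ ≤ |lam| →
      ENNReal.ofReal (c * |lam| ^ (1 / p - 1 / (1 + α))) ≤
        ApNorm p (fun t => expI (lam * φ t)) := by
  obtain ⟨B, hB0, hB⟩ := exists_card_rpow_mul_le_apNorm_expI (hφ.differentiable one_ne_zero) hα
    hC.le hHolder hp
  set d := |deriv φ t₂ - deriv φ t₁|
  have hd : 0 < d := abs_pos.2 (sub_ne_zero.2 hne.symm)
  set δ := min 1 (min t₁ (2 * π - t₂))
  have hδ : 0 < δ := by simp [δ, ht₁, ht₂]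
  refine ⟨(d / 2) ^ (1 / p) * (2 * C) ^ (-(1 / (1 + α))) / (4 * π) / B, by positivity,
    max 2 (max (2 / d) ((2 * C)⁻¹ * δ ^ (-(1 + α)))), le_max_left _ _, fun lam hlam => ?_⟩
  obtain ⟨hlam2, hlamd, hlamδ⟩ :
      2 ≤ |lam| ∧ 2 / d ≤ |lam| ∧ (2 * C)⁻¹ * δ ^ (-(1 + α)) ≤ |lam| := by
    simpa only [max_le_iff] using hlam
  have hlam0 : 0 < |lam| := by linarith
  set ρ := (2 * C * |lam|) ^ (-(1 / (1 + α))) with hρ_def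
  have hρ : 0 < ρ := by positivity
  obtain ⟨hscale, hρδ⟩ := localization_scale hα hC hδ hlam0 hlamδ
  obtain ⟨hρ1, hρt₁, hρt₂⟩ : ρ ≤ 1 ∧ ρ ≤ t₁ ∧ ρ ≤ 2 * π - t₂ := by
    simpa only [δ, le_min_iff] using hρδ
  have hrange : |lam * deriv φ t₂ - lam * deriv φ t₁| = |lam| * d := by rw [← mul_sub, abs_mul]
  have := hφ.continuous_deriv le_rfl
  obtain ⟨A, hcard, hA⟩ := exists_finset_forall_exists_eq_intCast
    (f := fun t => lam * deriv φ t) ht (by fun_prop) (hrange ▸ (div_le_iff₀ hd).1 hlamd)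
  have hkey := hB hρ hρ1 hρt₁ (by linarith) hscale.le hA
  rw [← ENNReal.mul_le_mul_iff_right (a := ENNReal.ofReal B) (by simpa using hB0) (by simp)]
  calc _ = ENNReal.ofReal (|lam| * d / 2) ^ (1 / p) * ENNReal.ofReal (ρ / (4 * π)) := by
        rw [ENNReal.ofReal_rpow_of_pos (by positivity), ← ENNReal.ofReal_mul hB0.le,
          ← ENNReal.ofReal_mul (by positivity), hρ_def, sub_eq_add_neg, rpow_add hlam0,
          mul_div_assoc |lam|, mul_rpow hlam0.le (by positivity),
          mul_rpow (by positivity) hlam0.le]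
        congr 1
        field_simp
    _ ≤ (A.card : ℝ≥0∞) ^ (1 / p) * ENNReal.ofReal (ρ / (4 * π)) := by
        gcongr
        rw [← ENNReal.ofReal_natCast, ← hrange]
        exact ENNReal.ofReal_le_ofReal hcard
    _ ≤ _ := hkey

theorem one_le_apNorm {f : ℝ → ℂ} (hf : Continuous f) (hnorm : ∀ t, ‖f t‖ = 1) {p : ℝ}
    (hp : 0 < p) (hp2 : p ≤ 2) : 1 ≤ ApNorm p f := by
  have hcoef (k : ℤ) : ‖fourierCoef f k‖ₑ ≤ 1 := by
    rw [← ofReal_norm]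
    exact ENNReal.ofReal_le_one.2 (norm_fourierCoef_le_of_norm_le hf (fun t _ => (hnorm t).le) k)
  have hparseval : ∑' k, ‖fourierCoef f k‖ₑ ^ (2 : ℝ) = 1 := by
    have h := hasSum_sq_norm_fourierCoef hf
    have hone : (2 * π)⁻¹ * ∫ t in 0..2 * π, ‖f t‖ ^ 2 = 1 := by
      simp only [hnorm, one_pow, intervalIntegral.integral_const, sub_zero, smul_eq_mul, mul_one]
      exact inv_mul_cancel₀ Real.two_pi_pos.ne'
    rw [hone] at h
    rw [← ENNReal.ofReal_one, ← h.tsum_eq,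
      ENNReal.ofReal_tsum_of_nonneg (fun k => by positivity) h.summable]
    refine tsum_congr fun k => ?_
    rw [← ofReal_norm, ENNReal.rpow_two, ENNReal.ofReal_pow (norm_nonneg _)]
  refine ENNReal.one_le_rpow ?_ (one_div_pos.2 hp)
  rw [← hparseval]
  exact ENNReal.tsum_le_tsum fun k => ENNReal.rpow_le_rpow_of_exponent_ge (hcoef k) hp2

/-! ### Cantor functions and their primitives -/

open scoped Topology

/-- The sum of the two copies of `f` carried from `[0, 1]` to the end intervals `[0, θ]` and
`[1 - θ, 1]` of the first stage in the construction of the Cantor set with ratio `θ`. -/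
noncomputable def cantorSplit (θ : ℝ) (f : ℝ → ℝ) (x : ℝ) : ℝ :=
  f (x / θ) + f ((x - 1 + θ) / θ)

/-- A function climbing from `0` to `1` across the unit interval. -/
structure IsRamp (f : ℝ → ℝ) : Prop where
  eq_zero : ∀ x ≤ 0, f x = 0
  eq_one : ∀ x, 1 ≤ x → f x = 1
  mem_Icc : ∀ x, f x ∈ Icc (0 : ℝ) 1

/-- The Cantor function of the symmetric Cantor set with ratio `θ`, characterized by its
self-similarity. -/
structure IsCantorFunction (θ : ℝ) (S : ℝ → ℝ) : Prop extends IsRamp S where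
  pos : 0 < θ
  lt_half : θ < 1 / 2
  eq_half_cantorSplit : ∀ x, S x = 1 / 2 * cantorSplit θ S x

section Refinement

variable {θ : ℝ} {f g : ℝ → ℝ}

theorem cantorSplit_of_le (hθ : 0 < θ) (hf : ∀ x ≤ 0, f x = 0) {x : ℝ} (hx : x ≤ 1 - θ) :
    cantorSplit θ f x = f (x / θ) := by
  rw [cantorSplit, hf ((x - 1 + θ) / θ) (div_nonpos_of_nonpos_of_nonneg (by linarith) hθ.le),
    add_zero]

theorem IsRamp.cantorSplit_of_ge (hf : IsRamp f) (hθ : 0 < θ) {x : ℝ} (hx : θ ≤ x) :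
    cantorSplit θ f x = 1 + f ((x - 1 + θ) / θ) := by
  rw [cantorSplit, hf.eq_one _ ((one_le_div hθ).2 hx)]

theorem IsRamp.abs_sub_le_one (hf : IsRamp f) (hg : IsRamp g) (x y : ℝ) : |f x - g y| ≤ 1 := by
  have := hf.mem_Icc x
  have := hg.mem_Icc y
  exact abs_le.2 ⟨by linarith [this.1, this.2, (hf.mem_Icc x).1],
    by linarith [this.1, this.2, (hf.mem_Icc x).2]⟩

theorem isRamp_max_min : IsRamp fun x => max 0 (min 1 x) where
  eq_zero x hx := max_eq_left ((min_le_right _ _).trans hx)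
  eq_one x hx := by simp only [min_eq_left hx, zero_le_one, sup_of_le_right]
  mem_Icc x := ⟨le_max_left _ _, max_le zero_le_one (min_le_left _ _)⟩

theorem IsRamp.half_cantorSplit (hf : IsRamp f) (hθ : 0 < θ) (hθ' : θ < 1 / 2) :
    IsRamp fun x => 1 / 2 * cantorSplit θ f x where
  eq_zero x hx := by
    rw [cantorSplit_of_le hθ hf.eq_zero (by linarith),
      hf.eq_zero _ (div_nonpos_of_nonpos_of_nonneg hx hθ.le), mul_zero]
  eq_one x hx := by
    rw [hf.cantorSplit_of_ge hθ (by linarith), hf.eq_one _ ((one_le_div hθ).2 (by linarith))]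
    norm_num
  mem_Icc x := by
    have left := hf.mem_Icc (x / θ)
    have right := hf.mem_Icc ((x - 1 + θ) / θ)
    rw [cantorSplit]
    exact ⟨by linarith [left.1, right.1], by linarith [left.2, right.2]⟩

/-- At every point one of the two copies is constant, so the two errors never add up. -/
theorem IsRamp.abs_half_cantorSplit_sub_le (hf : IsRamp f) (hg : IsRamp g) (hθ : 0 < θ)
    (hθ' : θ < 1 / 2) {C : ℝ} (hC : ∀ x, |f x - g x| ≤ C) (x : ℝ) :
    |1 / 2 * cantorSplit θ f x - 1 / 2 * cantorSplit θ g x| ≤ 1 / 2 * C := by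
  rw [← mul_sub, abs_mul, abs_of_pos one_half_pos]
  gcongr
  rcases le_total x (1 - θ) with hx | hx
  · rw [cantorSplit_of_le hθ hf.eq_zero hx, cantorSplit_of_le hθ hg.eq_zero hx]
    exact hC _
  · rw [hf.cantorSplit_of_ge hθ (by linarith), hg.cantorSplit_of_ge hθ (by linarith),
      add_sub_add_left_eq_sub]
    exact hC _

theorem exists_isCantorFunction (hθ : 0 < θ) (hθ' : θ < 1 / 2) : ∃ S, IsCantorFunction θ S := by
  let F : ℕ → ℝ → ℝ := fun n => (fun f x => 1 / 2 * cantorSplit θ f x)^[n] fun x => max 0 (min 1 x)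
  have F_succ (n : ℕ) (x : ℝ) : F (n + 1) x = 1 / 2 * cantorSplit θ (F n) x := by
    simp only [F, Function.iterate_succ_apply']
  have ramp (n : ℕ) : IsRamp (F n) := by
    induction n with
    | zero => exact isRamp_max_min
    | succ n ih => simpa only [← F_succ] using ih.half_cantorSplit hθ hθ'
  have consecutive (n : ℕ) : ∀ x, |F n x - F (n + 1) x| ≤ 2 / 2 / 2 ^ n := by
    induction n with
    | zero => simpa using fun x => (ramp 0).abs_sub_le_one (ramp 1) x x
    | succ n ih =>
      intro x
      rw [F_succ, F_succ (n + 1)]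
      refine ((ramp n).abs_half_cantorSplit_sub_le (ramp (n + 1)) hθ hθ' ih x).trans_eq ?_
      rw [pow_succ]
      ring
  have converges (x : ℝ) : ∃ l, Filter.Tendsto (fun n => F n x) Filter.atTop (𝓝 l) :=
    cauchySeq_tendsto_of_complete (cauchySeq_of_le_geometric_two fun n => consecutive n x)
  choose S hS using converges
  exact ⟨S, {
    eq_zero := fun x hx => tendsto_nhds_unique (hS x) <| by
      simp only [(ramp _).eq_zero x hx, tendsto_const_nhds]
    eq_one := fun x hx => tendsto_nhds_unique (hS x) <| by
      simp only [(ramp _).eq_one x hx, tendsto_const_nhds]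
    mem_Icc := fun x => isClosed_Icc.mem_of_tendsto (hS x) <| .of_forall fun n => (ramp n).mem_Icc x
    pos := hθ
    lt_half := hθ'
    eq_half_cantorSplit := fun x => tendsto_nhds_unique
      ((hS x).comp (Filter.tendsto_add_atTop_nat 1)) <| by
        simpa only [Function.comp_def, F_succ, cantorSplit] using
          ((hS _).add (hS _)).const_mul (1 / 2) }⟩

end Refinement

/-- The set of points near which `f` is constant. -/
def plateaus (f : ℝ → ℝ) : Set ℝ := {x | ∀ᶠ z in 𝓝 x, f z = f x}

namespace IsCantorFunction

variable {θ : ℝ} {S : ℝ → ℝ} (h : IsCantorFunction θ S)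
include h

theorem eq_left {x : ℝ} (hx : x ≤ 1 - θ) : S x = 1 / 2 * S (x / θ) := by
  rw [h.eq_half_cantorSplit, cantorSplit_of_le h.pos h.eq_zero hx]

theorem eq_right {x : ℝ} (hx : θ ≤ x) : S x = 1 / 2 * (1 + S ((x - 1 + θ) / θ)) := by
  rw [h.eq_half_cantorSplit, h.toIsRamp.cantorSplit_of_ge h.pos hx]

theorem eq_half {x : ℝ} (hx : θ ≤ x) (hx' : x ≤ 1 - θ) : S x = 1 / 2 := by
  rw [h.eq_left hx', h.eq_one _ ((one_le_div h.pos).2 hx), mul_one]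

theorem abs_sub_le_half_pow (m : ℕ) :
    ∀ x y, |x - y| ≤ (1 - 2 * θ) * θ ^ m → |S x - S y| ≤ (1 / 2) ^ m := by
  have hθ := h.pos
  have hθ' := h.lt_half
  induction m with
  | zero => simpa using fun x y _ => h.toIsRamp.abs_sub_le_one h.toIsRamp x y
  | succ m ih =>
    intro x y hxy
    have rescaled {u v : ℝ} (huv : u - v = (x - y) / θ) :
        1 / 2 * |S u - S v| ≤ (1 / 2) ^ (m + 1) := by
      rw [pow_succ']
      gcongr
      refine ih u v ?_
      rw [huv, abs_div, abs_of_pos hθ, div_le_iff₀ hθ, mul_assoc, ← pow_succ]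
      exact hxy
    have close : |x - y| ≤ 1 - 2 * θ := hxy.trans <|
      mul_le_of_le_one_right (by linarith) (pow_le_one₀ hθ.le (by linarith))
    have same_side : (x ≤ 1 - θ ∧ y ≤ 1 - θ) ∨ (θ ≤ x ∧ θ ≤ y) := by
      rw [abs_le] at close
      rcases le_total x y with hle | hle
      · rcases le_total y (1 - θ) with hy | hy
        · exact .inl ⟨hle.trans hy, hy⟩
        · exact .inr ⟨by linarith, by linarith⟩
      · rcases le_total x (1 - θ) with hx | hx
        · exact .inl ⟨hx, hle.trans hx⟩
        · exact .inr ⟨by linarith, by linarith⟩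
    rcases same_side with ⟨hx, hy⟩ | ⟨hx, hy⟩
    · rw [h.eq_left hx, h.eq_left hy, ← mul_sub, abs_mul, abs_of_pos one_half_pos]
      exact rescaled (by ring)
    · rw [h.eq_right hx, h.eq_right hy, ← mul_sub, abs_mul, abs_of_pos one_half_pos,
        add_sub_add_left_eq_sub]
      exact rescaled (by ring)

theorem continuous : Continuous S := by
  rw [Metric.continuous_iff]
  intro y ε hε
  obtain ⟨m, hm⟩ := exists_pow_lt_of_lt_one hε (one_half_lt_one (α := ℝ))
  exact ⟨(1 - 2 * θ) * θ ^ m, mul_pos (by linarith [h.lt_half]) (pow_pos h.pos m),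
    fun x hx => (h.abs_sub_le_half_pow m x y hx.le).trans_lt hm⟩

theorem abs_sub_le_rpow {α : ℝ} (hα : 0 < α) (hθα : θ ^ α = 1 / 2) (x y : ℝ) :
    |S x - S y| ≤ (1 / ((1 - 2 * θ) * θ)) ^ α * |x - y| ^ α := by
  have hθ := h.pos
  have hθ' := h.lt_half
  have gap_pos : 0 < 1 - 2 * θ := by linarith
  rcases eq_or_ne x y with rfl | hne
  · simp only [sub_self, abs_zero]
    positivity
  have hd : 0 < |x - y| := abs_pos.2 (sub_ne_zero.2 hne)
  rw [← Real.mul_rpow (by positivity) hd.le, one_div_mul_eq_div]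
  rcases lt_or_ge (1 - 2 * θ) |x - y| with hfar | hnear
  · refine (h.toIsRamp.abs_sub_le_one h.toIsRamp x y).trans (Real.one_le_rpow ?_ hα.le)
    rw [one_le_div (by positivity)]
    nlinarith
  · obtain ⟨m, hm, hm'⟩ := exists_nat_pow_near_of_lt_one (x := |x - y| / (1 - 2 * θ)) (y := θ)
      (by positivity) ((div_le_one gap_pos).2 hnear) hθ (by linarith)
    rw [div_le_iff₀ gap_pos] at hm'
    rw [lt_div_iff₀ gap_pos] at hm
    calc |S x - S y| ≤ (θ ^ α) ^ m := by
          rw [hθα]; exact h.abs_sub_le_half_pow m x y (by linarith)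
      _ = (θ ^ m) ^ α := by
          rw [← Real.rpow_natCast, ← Real.rpow_mul hθ.le, mul_comm α, Real.rpow_mul hθ.le,
            Real.rpow_natCast]
      _ ≤ (|x - y| / ((1 - 2 * θ) * θ)) ^ α := by
          gcongr
          rw [le_div_iff₀ (by positivity)]
          rw [pow_succ] at hm
          linarith

theorem half_mem_plateaus : 1 / 2 ∈ plateaus S := by
  have hθ' := h.lt_half
  filter_upwards [Icc_mem_nhds (show θ < 1 / 2 by linarith) (show 1 / 2 < 1 - θ by linarith)]
    with z hz
  rw [h.eq_half hz.1 hz.2, h.eq_half (by linarith) (by linarith)]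

theorem left_copy_mem_plateaus {y : ℝ} (hy : y ∈ plateaus S) (hleft : θ * y < 1 - θ) :
    θ * y ∈ plateaus S := by
  have back : θ * y / θ = y := mul_div_cancel_left₀ y h.pos.ne'
  have scale : Filter.Tendsto (fun z => z / θ) (𝓝 (θ * y)) (𝓝 y) :=
    Continuous.tendsto' (by fun_prop) _ _ back
  filter_upwards [Iio_mem_nhds hleft, scale.eventually hy] with z hz hzy
  rw [h.eq_left hz.le, h.eq_left hleft.le, hzy, back]

theorem right_copy_mem_plateaus {y : ℝ} (hy : y ∈ plateaus S) (hright : θ < θ * y + 1 - θ) :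
    θ * y + 1 - θ ∈ plateaus S := by
  have hθ := h.pos
  have back : (θ * y + 1 - θ - 1 + θ) / θ = y := by field_simp; ring
  have scale : Filter.Tendsto (fun z => (z - 1 + θ) / θ) (𝓝 (θ * y + 1 - θ)) (𝓝 y) :=
    Continuous.tendsto' (by fun_prop) _ _ back
  filter_upwards [Ioi_mem_nhds hright, scale.eventually hy] with z hz hzy
  rw [h.eq_right hz.le, h.eq_right hright.le, hzy, back]

theorem exists_mem_plateaus_abs_sub_le_pow (n : ℕ) : ∀ x, ∃ y ∈ plateaus S, |x - y| ≤ θ ^ n := by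
  have hθ := h.pos
  have hθ' := h.lt_half
  induction n with
  | zero =>
    intro x
    rcases lt_or_ge x 0 with hx | hx
    · refine ⟨x, ?_, by simp⟩
      filter_upwards [Iio_mem_nhds hx] with z hz
      rw [h.eq_zero z hz.le, h.eq_zero x hx.le]
    rcases lt_or_ge 1 x with hx' | hx'
    · refine ⟨x, ?_, by simp⟩
      filter_upwards [Ioi_mem_nhds hx'] with z hz
      rw [h.eq_one z hz.le, h.eq_one x hx'.le]
    · exact ⟨1 / 2, h.half_mem_plateaus, by rw [pow_zero, abs_le]; constructor <;> linarith⟩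
  | succ n ih =>
    intro x
    have rescaled {u v : ℝ} (huv : |u - v| ≤ θ ^ n) : |θ * (u - v)| ≤ θ ^ (n + 1) := by
      rw [abs_mul, abs_of_pos hθ, pow_succ']
      gcongr
    rcases le_total x (1 / 2) with hx | hx
    · obtain ⟨y, hy, hxy⟩ := ih (x / θ)
      replace hxy := rescaled hxy
      rw [mul_sub, mul_div_cancel₀ x hθ.ne'] at hxy
      rcases lt_or_ge (θ * y) (1 - θ) with hleft | hfar
      · exact ⟨θ * y, h.left_copy_mem_plateaus hy hleft, hxy⟩
      · exact ⟨1 / 2, h.half_mem_plateaus,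
          (abs_le_abs_of_nonpos (by linarith) (by linarith)).trans hxy⟩
    · obtain ⟨y, hy, hxy⟩ := ih ((x - 1 + θ) / θ)
      replace hxy := rescaled hxy
      rw [mul_sub, mul_div_cancel₀ _ hθ.ne',
        show x - 1 + θ - θ * y = x - (θ * y + 1 - θ) by ring] at hxy
      rcases lt_or_ge θ (θ * y + 1 - θ) with hright | hfar
      · exact ⟨_, h.right_copy_mem_plateaus hy hright, hxy⟩
      · exact ⟨1 / 2, h.half_mem_plateaus,
          (abs_le_abs_of_nonneg (by linarith) (by linarith)).trans hxy⟩

theorem dense_plateaus : Dense (plateaus S) := by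
  rw [Metric.dense_iff]
  intro x r hr
  obtain ⟨n, hn⟩ := exists_pow_lt_of_lt_one hr (show θ < 1 by linarith [h.lt_half])
  obtain ⟨y, hy, hxy⟩ := h.exists_mem_plateaus_abs_sub_le_pow n x
  exact ⟨y, by rw [Metric.mem_ball, dist_comm]; exact hxy.trans_lt hn, hy⟩

end IsCantorFunction

/-- The primitive of `S` vanishing at `0`. -/
noncomputable def cantorPrimitive (S : ℝ → ℝ) (x : ℝ) : ℝ := ∫ t in 0..x, S t

namespace IsCantorFunction

variable {θ : ℝ} {S : ℝ → ℝ} (h : IsCantorFunction θ S)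
include h

theorem hasDerivAt_primitive (x : ℝ) : HasDerivAt (cantorPrimitive S) (S x) x :=
  h.continuous.integral_hasStrictDerivAt 0 x |>.hasDerivAt

theorem continuous_primitive : Continuous (cantorPrimitive S) :=
  continuous_iff_continuousAt.2 fun x => (h.hasDerivAt_primitive x).continuousAt

theorem primitive_of_nonpos {x : ℝ} (hx : x ≤ 0) : cantorPrimitive S x = 0 := by
  rw [cantorPrimitive, intervalIntegral.integral_congr (g := fun _ => 0),
    intervalIntegral.integral_zero]
  intro t ht
  rw [uIcc_of_ge hx] at ht
  exact h.eq_zero t ht.2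

theorem primitive_of_one_le {x : ℝ} (hx : 1 ≤ x) :
    cantorPrimitive S x = x - 1 + cantorPrimitive S 1 := by
  have beyond : ∫ t in 1..x, S t = x - 1 := by
    rw [intervalIntegral.integral_congr (g := fun _ => 1)]
    · simp only [intervalIntegral.integral_const, smul_eq_mul, mul_one]
    intro t ht
    rw [uIcc_of_le hx] at ht
    exact h.eq_one t ht.1
  rw [cantorPrimitive, cantorPrimitive, ← beyond, add_comm,
    intervalIntegral.integral_add_adjacent_intervals] <;>
  exact h.continuous.intervalIntegrable _ _

theorem primitive_nonneg (x : ℝ) : 0 ≤ cantorPrimitive S x := by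
  rcases le_total x 0 with hx | hx
  · rw [h.primitive_of_nonpos hx]
  · exact intervalIntegral.integral_nonneg hx fun t _ => (h.mem_Icc t).1

theorem primitive_le {x : ℝ} (hx : 0 ≤ x) : cantorPrimitive S x ≤ x := by
  simpa [cantorPrimitive] using
    intervalIntegral.integral_mono_on hx (h.continuous.intervalIntegrable 0 x)
      (continuous_const.intervalIntegrable (μ := volume) 0 x) fun t _ => (h.mem_Icc t).2

theorem primitive_eq_cantorSplit (x : ℝ) :
    cantorPrimitive S x = θ / 2 * cantorSplit θ (cantorPrimitive S) x := by
  have hθ := h.pos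
  have same_deriv (y : ℝ) : HasDerivAt
      (fun x => cantorPrimitive S x - θ / 2 * cantorSplit θ (cantorPrimitive S) x) 0 y := by
    have left := (h.hasDerivAt_primitive (y / θ)).comp y ((hasDerivAt_id y).div_const θ)
    have right := (h.hasDerivAt_primitive ((y - 1 + θ) / θ)).comp y
      ((((hasDerivAt_id y).sub_const 1).add_const θ).div_const θ)
    refine ((h.hasDerivAt_primitive y).sub ((left.add right).const_mul (θ / 2))).congr_deriv ?_
    rw [h.eq_half_cantorSplit y, cantorSplit]
    field_simp
    ring
  have agree := is_const_of_deriv_eq_zero (fun y => (same_deriv y).differentiableAt)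
    (fun y => (same_deriv y).deriv) x 0
  rw [cantorSplit_of_le hθ (fun _ => h.primitive_of_nonpos) (by linarith [h.lt_half] : 0 ≤ 1 - θ),
    zero_div, h.primitive_of_nonpos le_rfl] at agree
  linarith

theorem primitive_eq_left {x : ℝ} (hx : x ≤ 1 - θ) :
    cantorPrimitive S x = θ / 2 * cantorPrimitive S (x / θ) := by
  rw [h.primitive_eq_cantorSplit, cantorSplit_of_le h.pos (fun _ => h.primitive_of_nonpos) hx]

theorem primitive_eq_right {x : ℝ} (hx : θ ≤ x) :
    cantorPrimitive S x = 1 / 2 * x + θ / 2 * (cantorPrimitive S 1 - 1) +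
      θ / 2 * cantorPrimitive S ((x - 1 + θ) / θ) := by
  have hθ := h.pos
  rw [h.primitive_eq_cantorSplit, cantorSplit, h.primitive_of_one_le ((one_le_div hθ).2 hx)]
  field_simp
  ring

end IsCantorFunction

/-- Affinity on a dense set of intervals, phrased through the points near which `f` is affine. -/
def DenselyAffine (f : ℝ → ℝ) : Prop :=
  Dense {x | ∃ a b : ℝ, ∀ᶠ t in 𝓝 x, f t = a * t + b}

theorem IsCantorFunction.denselyAffine_primitive {θ : ℝ} {S : ℝ → ℝ} (h : IsCantorFunction θ S) :
    DenselyAffine (cantorPrimitive S) := by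
  refine h.dense_plateaus.mono fun x hx => ⟨S x, cantorPrimitive S x - S x * x, ?_⟩
  obtain ⟨r, hr, hconst⟩ := Metric.eventually_nhds_iff_ball.1 hx
  filter_upwards [Metric.ball_mem_nhds x hr] with t ht
  have increment : cantorPrimitive S t - cantorPrimitive S x = ∫ s in x..t, S s :=
    intervalIntegral.integral_interval_sub_left (h.continuous.intervalIntegrable _ _)
      (h.continuous.intervalIntegrable _ _)
  rw [intervalIntegral.integral_congr (g := fun _ => S x)] at increment
  · simp only [intervalIntegral.integral_const, smul_eq_mul] at increment
    linarith
  · exact fun s hs => hconst s ((convex_ball x r).ordConnected.uIcc_subset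
      (Metric.mem_ball_self hr) ht hs)

namespace DenselyAffine

variable {f g : ℝ → ℝ}

theorem add (hf : DenselyAffine f) (hg : DenselyAffine g) :
    DenselyAffine fun t => f t + g t := by
  have isOpen : IsOpen {x | ∃ a b : ℝ, ∀ᶠ t in 𝓝 x, f t = a * t + b} := by
    simp only [ofPred_exists]
    exact isOpen_iUnion fun a => isOpen_iUnion fun b => isOpen_setOfPred_eventually_nhds
  refine (hf.inter_of_isOpen_left hg isOpen).mono ?_
  rintro x ⟨⟨a, b, hab⟩, c, d, hcd⟩
  refine ⟨a + c, b + d, ?_⟩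
  filter_upwards [hab, hcd] with t htf htg
  rw [htf, htg]
  ring

theorem comp_rescale (hf : DenselyAffine f) (c t₀ : ℝ) {η : ℝ} (hη : η ≠ 0) :
    DenselyAffine fun t => c * f ((t - t₀) / η) := by
  have surjective : Function.Surjective fun x => η * x + t₀ := fun y =>
    ⟨(y - t₀) / η, by field_simp; ring⟩
  refine (surjective.denseRange.dense_image (by fun_prop) hf).mono ?_
  rintro _ ⟨x, ⟨a, b, hab⟩, rfl⟩
  refine ⟨c * a / η, c * (b - a * t₀ / η), ?_⟩
  have scale : Filter.Tendsto (fun t => (t - t₀) / η) (𝓝 (η * x + t₀)) (𝓝 x) :=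
    Continuous.tendsto' (by fun_prop) _ _ (by field_simp; ring)
  filter_upwards [scale.eventually hab] with t ht
  rw [ht]
  field_simp
  ring

theorem const (c : ℝ) : DenselyAffine fun _ => c :=
  dense_univ.mono fun _ _ => ⟨0, c, .of_forall fun _ => by ring⟩

theorem exists_Icc_affine (hf : DenselyAffine f) {u v : ℝ} (huv : u < v) :
    ∃ u' v' a b : ℝ, u ≤ u' ∧ u' < v' ∧ v' ≤ v ∧ ∀ t ∈ Icc u' v', f t = a * t + b := by
  obtain ⟨x, ⟨a, b, hab⟩, hx⟩ := hf.exists_mem_open isOpen_Ioo (nonempty_Ioo.2 huv)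
  obtain ⟨r, hr, hball⟩ := Metric.eventually_nhds_iff_ball.1 hab
  refine ⟨x, x + min (r / 2) (v - x), a, b, hx.1.le, ?_, ?_, fun t ht => hball t ?_⟩
  · linarith [lt_min (half_pos hr) (sub_pos.2 hx.2)]
  · linarith [min_le_right (r / 2) (v - x)]
  · rw [Metric.mem_ball, Real.dist_eq, abs_of_nonneg (by linarith [ht.1])]
    linarith [min_le_left (r / 2) (v - x), ht.2]

end DenselyAffine

/-! ### Wave packets -/

open scoped NNReal

/-- The wave packet with amplitude `κ` and phase `a t + b + μ P`, both profiles being rescaled to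
the window of width `η` at `t₀`. -/
noncomputable def packet (P κ : ℝ → ℝ) (a b μ t₀ η t : ℝ) : ℂ :=
  expI (a * t + b + μ * P ((t - t₀) / η)) * κ ((t - t₀) / η)

/-- The image of `(u, v)` under `y ↦ t₀ + η y` lies in the period `[0, 2π]`, and `0 < η ≤ 1`. -/
structure IsWindow (u v t₀ η : ℝ) : Prop where
  pos : 0 < η
  le_one : η ≤ 1
  left : 0 ≤ t₀ + u * η
  right : t₀ + v * η ≤ 2 * π

theorem IsWindow.mono {u v u' v' t₀ η : ℝ} (h : IsWindow u v t₀ η) (hu : u ≤ u') (hv : v' ≤ v) :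
    IsWindow u' v' t₀ η where
  pos := h.pos
  le_one := h.le_one
  left := h.left.trans (by gcongr; exact h.pos.le)
  right := le_trans (by gcongr; exact h.pos.le) h.right

@[fun_prop]
theorem continuous_packet {P κ : ℝ → ℝ} (hP : Continuous P) (hκ : Continuous κ) (a b μ t₀ η : ℝ) :
    Continuous (packet P κ a b μ t₀ η) := by
  unfold packet
  fun_prop

theorem norm_packet (P κ : ℝ → ℝ) (a b μ t₀ η t : ℝ) :
    ‖packet P κ a b μ t₀ η t‖ = |κ ((t - t₀) / η)| := by
  rw [packet, norm_mul, norm_expI, one_mul, Complex.norm_real, Real.norm_eq_abs]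

theorem packet_add (P κ₁ κ₂ : ℝ → ℝ) (a b μ t₀ η : ℝ) :
    packet P (fun y => κ₁ y + κ₂ y) a b μ t₀ η =
      fun t => packet P κ₁ a b μ t₀ η t + packet P κ₂ a b μ t₀ η t := by
  ext t
  simp only [packet, Complex.ofReal_add, mul_add]

theorem exists_abs_le_and_abs_deriv_le {κ : ℝ → ℝ} (hκ : ContDiff ℝ 1 κ) {u v : ℝ}
    (hκ0 : ∀ y ∉ Ioo u v, κ y = 0) : ∃ K : ℝ≥0, ∀ y, |κ y| ≤ K ∧ |deriv κ y| ≤ K := by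
  have compact : HasCompactSupport κ := HasCompactSupport.intro isCompact_Icc
    fun y hy => hκ0 y fun hy' => hy (Ioo_subset_Icc_self hy')
  obtain ⟨K₁, hK₁⟩ := compact.exists_bound_of_continuous hκ.continuous
  obtain ⟨K₂, hK₂⟩ := compact.deriv.exists_bound_of_continuous (hκ.continuous_deriv le_rfl)
  exact ⟨max K₁.toNNReal K₂.toNNReal, fun y => ⟨(hK₁ y).trans (by simp), (hK₂ y).trans (by simp)⟩⟩

theorem IsWindow.apNorm_one_expI_mul_rescale_le {G G' : ℝ → ℂ} {K : ℝ≥0} {u v t₀ η : ℝ}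
    (hw : IsWindow u v t₀ η) (ν : ℝ) (hG : ∀ y, HasDerivAt G (G' y) y) (hG' : Continuous G')
    (huv : u ≤ v) (hlen : v - u ≤ 8) (hK : ∀ y, ‖G y‖ ≤ K) (hK' : ∀ y, ‖G' y‖ ≤ K)
    (hsupp : ∀ y ∉ Ioo u v, G y = 0) :
    ApNorm 1 (fun t => expI (ν * t) * G ((t - t₀) / η)) ≤ ENNReal.ofReal (8 * K) := by
  have hη := hw.pos
  have rescaled (t : ℝ) :
      HasDerivAt (fun t => G ((t - t₀) / η)) ((1 / η : ℝ) • G' ((t - t₀) / η)) t :=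
    (hG _).scomp t (((hasDerivAt_id t).sub_const t₀).div_const η)
  refine apNorm_one_expI_mul_le_of_bump (u := t₀ + u * η) (v := t₀ + v * η) ν rescaled (by fun_prop)
    hη hw.le_one (by gcongr) (Ioo_subset_Ioo hw.left hw.right) ?_ (fun t => hK _) (fun t => ?_)
    fun t ht => hsupp _ fun hy => ht ?_
  · rw [add_sub_add_left_eq_sub, ← sub_mul]
    gcongr
  · rw [norm_smul, Real.norm_of_nonneg (by positivity), ← mul_assoc, mul_one_div_cancel hη.ne',
      one_mul]
    exact hK' _
  · rw [mem_Ioo, lt_div_iff₀ hη, div_lt_iff₀ hη] at hy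
    exact ⟨by linarith [hy.1], by linarith [hy.2]⟩

/-- Where `μ P'` stays within `M` of `μ c`, the packet is a pure frequency times a bump adapted to
its window. -/
theorem exists_apNorm_one_packet_le {P P' κ : ℝ → ℝ} (hP : ∀ y, HasDerivAt P (P' y) y)
    (hP' : Continuous P') (hκ : ContDiff ℝ 1 κ) {u v : ℝ} (huv : u ≤ v) (hlen : v - u ≤ 8)
    (hκl : ∀ y ≤ u, κ y = 0) (hκr : ∀ y, v ≤ y → κ y = 0) (M : ℝ≥0) :
    ∃ A : ℝ≥0, ∀ a b μ t₀ η c, IsWindow u v t₀ η → (∀ y ∈ Ioo u v, |μ * (P' y - c)| ≤ M) →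
      ApNorm 1 (packet P κ a b μ t₀ η) ≤ A := by
  have hκ0 : ∀ y ∉ Ioo u v, κ y = 0 := fun y hy => (not_and_or.1 hy).elim
    (fun hu => hκl y (not_lt.1 hu)) fun hv => hκr y (not_lt.1 hv)
  obtain ⟨K, hK⟩ := exists_abs_le_and_abs_deriv_le hκ hκ0
  refine ⟨8 * (M * K + K), fun a b μ t₀ η c hw hM => ?_⟩
  have hη := hw.pos
  let E (y : ℝ) : ℂ := expI (b - μ * c * t₀ / η + μ * (P y - c * y))
  let E' (y : ℝ) : ℂ := Complex.I * (μ * (P' y - c) : ℝ) * E y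
  have hE (y : ℝ) : HasDerivAt E (E' y) y := by
    refine hasDerivAt_expI_comp (((hP y).sub ?_).const_mul μ |>.const_add _)
    simpa using (hasDerivAt_id y).const_mul c
  have hκ' (y : ℝ) : HasDerivAt (fun y => (κ y : ℂ)) (deriv κ y : ℝ) y :=
    (hκ.differentiable one_ne_zero y).hasDerivAt.ofReal_comp
  have norm_E_mul (y x : ℝ) : ‖E y * x‖ = |x| := by
    rw [norm_mul, norm_expI, one_mul, Complex.norm_real, Real.norm_eq_abs]
  have norm_E'_mul (y : ℝ) : ‖E' y * κ y‖ ≤ M * K := by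
    by_cases hy : y ∈ Ioo u v
    · rw [mul_assoc, norm_mul, norm_E_mul, norm_mul, Complex.norm_I, one_mul, Complex.norm_real]
      gcongr
      exacts [hM y hy, (hK y).1]
    · rw [hκ0 y hy, Complex.ofReal_zero, mul_zero, norm_zero]
      positivity
  have packet_eq : packet P κ a b μ t₀ η =
      fun t => expI ((a + μ * c / η) * t) * (fun y => E y * κ y) ((t - t₀) / η) := by
    ext t
    simp only [packet, E, ← mul_assoc, ← expI_add]
    congr 2
    field_simp
    ring
  have hEc : Continuous E := continuous_iff_continuousAt.2 fun y => (hE y).continuousAt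
  have := hκ.continuous_deriv le_rfl
  rw [packet_eq]
  refine (hw.apNorm_one_expI_mul_rescale_le (K := M * K + K) _ (fun y => (hE y).mul (hκ' y))
    (by fun_prop) huv hlen (fun y => ?_) (fun y => ?_) fun y hy => by simp [hκ0 y hy]).trans_eq ?_
  · exact (norm_E_mul y _).trans_le <| (hK y).1.trans <| NNReal.coe_le_coe.2 le_add_self
  · exact (norm_add_le _ _).trans <| add_le_add (norm_E'_mul y) <|
      (norm_E_mul y _).trans_le (hK y).2
  · rw [← ENNReal.ofReal_coe_nnreal]
    push_cast
    rfl

/-- A smooth transition from `0` on `(-∞, -ε]` to `1` on `[0, ∞)`. -/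
noncomputable def softStep (ε y : ℝ) : ℝ := Real.smoothTransition (1 + y / ε)

/-- A smooth cutoff equal to `1` on `[0, 1]` and supported in `[-ε, 1 + ε]`. -/
noncomputable def softPlateau (ε y : ℝ) : ℝ := softStep ε y - softStep ε (y - 1 - ε)

section Cutoffs

variable {ε y : ℝ}

theorem softStep_eq_zero (hε : 0 < ε) (hy : y ≤ -ε) : softStep ε y = 0 :=
  Real.smoothTransition.zero_of_nonpos (by linarith [(div_le_iff₀ hε).2 (by linarith : y ≤ -1 * ε)])

theorem softStep_eq_one (hε : 0 < ε) (hy : 0 ≤ y) : softStep ε y = 1 :=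
  Real.smoothTransition.one_of_one_le (le_add_of_nonneg_right (by positivity))

theorem softStep_mem_Icc (ε y : ℝ) : softStep ε y ∈ Icc (0 : ℝ) 1 :=
  ⟨Real.smoothTransition.nonneg _, Real.smoothTransition.le_one _⟩

@[fun_prop]
theorem contDiff_softStep (ε : ℝ) : ContDiff ℝ 1 (softStep ε) :=
  Real.smoothTransition.contDiff.comp (by fun_prop)

/-- Continuous cutoffs with values in `[0, 1]` living in the `ε`-neighbourhood of `[0, 1]`. -/
structure IsCutoff (ε : ℝ) (κ : ℝ → ℝ) : Prop where
  continuous : Continuous κ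
  eq_zero_left : ∀ y ≤ -ε, κ y = 0
  eq_zero_right : ∀ y, 1 + ε ≤ y → κ y = 0
  mem_Icc : ∀ y, κ y ∈ Icc (0 : ℝ) 1

theorem isCutoff_softPlateau (hε : 0 < ε) : IsCutoff ε (softPlateau ε) where
  continuous := by
    have := (contDiff_softStep ε).continuous
    unfold softPlateau
    fun_prop
  eq_zero_left y hy := by
    rw [softPlateau, softStep_eq_zero hε hy, softStep_eq_zero hε (by linarith), sub_zero]
  eq_zero_right y hy := by
    rw [softPlateau, softStep_eq_one hε (by linarith), softStep_eq_one hε (by linarith), sub_self]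
  mem_Icc y := by
    rw [softPlateau]
    have left := softStep_mem_Icc ε y
    have right := softStep_mem_Icc ε (y - 1 - ε)
    rcases le_total y 0 with hy | hy
    · rwa [softStep_eq_zero (y := y - 1 - ε) hε (by linarith), sub_zero]
    · rw [softStep_eq_one hε hy]
      exact ⟨by linarith [right.2], by linarith [right.1]⟩

variable {θ : ℝ} {κ : ℝ → ℝ}

/-- The condition `2θ(1 + ε) ≤ 1` keeps the two copies of a cutoff on either side of `1/2`. -/
theorem cantorSplit_eq_of_le_half (hκ : ∀ y ≤ -ε, κ y = 0) (hθ : 0 < θ)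
    (hεθ : 2 * (θ * (1 + ε)) ≤ 1) (hy : y ≤ 1 / 2) : cantorSplit θ κ y = κ (y / θ) := by
  rw [cantorSplit, hκ ((y - 1 + θ) / θ) ((div_le_iff₀ hθ).2 (by linarith)), add_zero]

theorem cantorSplit_eq_of_half_le (hκ : ∀ y, 1 + ε ≤ y → κ y = 0) (hθ : 0 < θ)
    (hεθ : 2 * (θ * (1 + ε)) ≤ 1) (hy : 1 / 2 ≤ y) :
    cantorSplit θ κ y = κ ((y - 1 + θ) / θ) := by
  rw [cantorSplit, hκ (y / θ) ((le_div_iff₀ hθ).2 (by linarith)), zero_add]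

theorem IsCutoff.split (hκ : IsCutoff ε κ) (hε : 0 < ε) (hθ : 0 < θ) (hθ' : θ < 1 / 2)
    (hεθ : 2 * (θ * (1 + ε)) ≤ 1) : IsCutoff ε (cantorSplit θ κ) where
  continuous := by
    have := hκ.continuous
    unfold cantorSplit
    fun_prop
  eq_zero_left y hy := by
    rw [cantorSplit_eq_of_le_half hκ.eq_zero_left hθ hεθ (by linarith),
      hκ.eq_zero_left _ ((div_le_iff₀ hθ).2 (by nlinarith))]
  eq_zero_right y hy := by
    rw [cantorSplit_eq_of_half_le hκ.eq_zero_right hθ hεθ (by linarith),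
      hκ.eq_zero_right _ ((le_div_iff₀ hθ).2 (by nlinarith))]
  mem_Icc y := by
    rcases le_total y (1 / 2) with hy | hy
    · rw [cantorSplit_eq_of_le_half hκ.eq_zero_left hθ hεθ hy]
      exact hκ.mem_Icc _
    · rw [cantorSplit_eq_of_half_le hκ.eq_zero_right hθ hεθ hy]
      exact hκ.mem_Icc _

theorem IsCutoff.split_iterate (hκ : IsCutoff ε κ) (hε : 0 < ε) (hθ : 0 < θ)
    (hθ' : θ < 1 / 2) (hεθ : 2 * (θ * (1 + ε)) ≤ 1) (m : ℕ) :
    IsCutoff ε ((cantorSplit θ)^[m] κ) := by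
  induction m with
  | zero => exact hκ
  | succ m ih =>
    rw [Function.iterate_succ_apply']
    exact ih.split hε hθ hθ' hεθ

end Cutoffs

theorem IsWindow.left_copy {θ ε t₀ η : ℝ} (hw : IsWindow (-ε) (1 + ε) t₀ η) (hε : 0 < ε)
    (hθ : 0 < θ) (hθ' : θ < 1 / 2) : IsWindow (-ε) (1 + ε) t₀ (η * θ) where
  pos := mul_pos hw.pos hθ
  le_one := mul_le_one₀ hw.le_one hθ.le (by linarith)
  left := by nlinarith [hw.pos, hw.left, mul_pos hε hw.pos]
  right := by nlinarith [hw.pos, hw.right, mul_pos hε hw.pos]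

theorem IsWindow.right_copy {θ ε t₀ η : ℝ} (hw : IsWindow (-ε) (1 + ε) t₀ η) (hε : 0 < ε)
    (hθ : 0 < θ) (hθ' : θ < 1 / 2) : IsWindow (-ε) (1 + ε) (t₀ + (1 - θ) * η) (η * θ) where
  pos := mul_pos hw.pos hθ
  le_one := mul_le_one₀ hw.le_one hθ.le (by linarith)
  left := by nlinarith [hw.pos, hw.left, mul_pos hε hw.pos]
  right := by nlinarith [hw.pos, hw.right, mul_pos hε hw.pos]

section SelfSimilarity

variable {θ ε : ℝ} {S κ : ℝ → ℝ}

/-- On each copy of `κ` the primitive is, up to an affine term, a rescaled copy of itself. -/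
theorem IsCantorFunction.exists_apNorm_packet_cantorSplit_le (h : IsCantorFunction θ S)
    (hεθ : 2 * (θ * (1 + ε)) ≤ 1) (hκ : Continuous κ) (hκl : ∀ y ≤ -ε, κ y = 0)
    (hκr : ∀ y, 1 + ε ≤ y → κ y = 0) {p : ℝ} (hp : 1 ≤ p) (a b μ t₀ : ℝ) {η : ℝ} (hη : η ≠ 0) :
    ∃ a' b', ApNorm p (packet (cantorPrimitive S) (cantorSplit θ κ) a b μ t₀ η) ≤
      ApNorm p (packet (cantorPrimitive S) κ a b (μ * (θ / 2)) t₀ (η * θ)) +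
      ApNorm p (packet (cantorPrimitive S) κ a' b' (μ * (θ / 2)) (t₀ + (1 - θ) * η) (η * θ)) := by
  have hθ := h.pos
  have hθ' := h.lt_half
  have hR := h.continuous_primitive
  have left_copy (t : ℝ) : (t - t₀) / (η * θ) = (t - t₀) / η / θ := by rw [div_div]
  have right_copy (t : ℝ) :
      (t - (t₀ + (1 - θ) * η)) / (η * θ) = ((t - t₀) / η - 1 + θ) / θ := by
    field_simp
    ring
  refine ⟨a + μ / 2 / η, b + μ * (θ / 2 * (cantorPrimitive S 1 - 1)) - μ / 2 * t₀ / η,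
    Eq.trans_le ?_ (apNorm_add_le hp (by fun_prop) (by fun_prop))⟩
  congr 1
  rw [show cantorSplit θ κ = fun y => κ (y / θ) + κ ((y - 1 + θ) / θ) from rfl, packet_add]
  ext t
  congr 1
  · simp only [packet, left_copy]
    rcases lt_or_ge ((t - t₀) / η / θ) (1 + ε) with hy | hy
    · rw [div_lt_iff₀ hθ] at hy
      rw [h.primitive_eq_left (x := (t - t₀) / η) (by linarith)]
      congr 2
      ring
    · simp only [hκr _ hy, Complex.ofReal_zero, mul_zero]
  · simp only [packet, right_copy]
    rcases lt_or_ge (-ε) (((t - t₀) / η - 1 + θ) / θ) with hy | hy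
    · rw [lt_div_iff₀ hθ] at hy
      rw [h.primitive_eq_right (x := (t - t₀) / η) (by linarith)]
      congr 2
      field_simp
      ring
    · simp only [hκl _ hy, Complex.ofReal_zero, mul_zero]

/-- Where `P'` is constant, a packet over the transition zone of two soft steps is a pure frequency
times a bump. -/
theorem exists_apNorm_one_packet_softStep_sub_le {P P' f g : ℝ → ℝ} {u v c : ℝ} (hε : 0 < ε)
    (hP : ∀ y, HasDerivAt P (P' y) y) (hP' : Continuous P') (hf : ContDiff ℝ 1 f)
    (hg : ContDiff ℝ 1 g) (huv : u ≤ v) (hlen : v - u ≤ 8)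
    (hl : ∀ y ≤ u, f y ≤ -ε ∧ g y ≤ -ε) (hr : ∀ y, v ≤ y → 0 ≤ f y ∧ 0 ≤ g y)
    (hc : ∀ y ∈ Ioo u v, P' y = c) :
    ∃ A : ℝ≥0, ∀ a b μ t₀ η, IsWindow u v t₀ η →
      ApNorm 1 (packet P (fun y => softStep ε (f y) - softStep ε (g y)) a b μ t₀ η) ≤ A := by
  have smooth := ((contDiff_softStep ε).comp hf).sub ((contDiff_softStep ε).comp hg)
  obtain ⟨A, hA⟩ := exists_apNorm_one_packet_le hP hP' smooth huv hlen
    (fun y hy => by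
      simp only [Function.comp_apply]
      rw [softStep_eq_zero hε (hl y hy).1, softStep_eq_zero hε (hl y hy).2, sub_zero])
    (fun y hy => by
      simp only [Function.comp_apply]
      rw [softStep_eq_one hε (hr y hy).1, softStep_eq_one hε (hr y hy).2, sub_self]) 0
  exact ⟨A, fun a b μ t₀ η hw => hA a b μ t₀ η c hw fun y hy => by simp [hc y hy]⟩

theorem add_le_mul_two {N A B x y : ℝ≥0∞} (hN : N ≤ A + (x + y)) (hx : x + A ≤ B)
    (hy : y + A ≤ B) : N + A ≤ B * 2 :=
  calc N + A ≤ A + (x + y) + A := by gcongr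
    _ = (x + A) + (y + A) := by abel
    _ ≤ B + B := add_le_add hx hy
    _ = B * 2 := (mul_two B).symm

variable (h : IsCantorFunction θ S) (hε : 0 < ε) (hε' : ε ≤ 1 / 2) (hεθ : 2 * (θ * (1 + ε)) ≤ 1)
include h hε hε' hεθ

/-- The difference lives on the three gaps `(-ε, 0)`, `(θ, 1 - θ)` and `(1, 1 + ε)`, on each of
which `S` is constant. -/
theorem IsCantorFunction.exists_apNorm_one_packet_sub_cantorSplit_le :
    ∃ A : ℝ≥0, ∀ a b μ t₀ η, IsWindow (-ε) (1 + ε) t₀ η →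
      ApNorm 1 (packet (cantorPrimitive S)
        (fun y => softPlateau ε y - cantorSplit θ (softPlateau ε) y) a b μ t₀ η) ≤ A := by
  have hθ := h.pos
  have hθ' := h.lt_half
  have hs := (contDiff_softStep ε).continuous
  have hR := h.continuous_primitive
  have after_left_copy {y : ℝ} (hy : 1 - θ ≤ y) : 0 ≤ y / θ - 1 - ε := by
    linarith [(le_div_iff₀ hθ).2 (show (1 + ε) * θ ≤ y by linarith)]
  have before_right_copy {y : ℝ} (hy : y ≤ θ) : (y - 1 + θ) / θ ≤ -ε :=
    (div_le_iff₀ hθ).2 (by linarith)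
  obtain ⟨A₁, hA₁⟩ := exists_apNorm_one_packet_softStep_sub_le (f := id) (g := (· / θ)) (u := -ε)
    (v := 0) hε h.hasDerivAt_primitive h.continuous (by fun_prop) (by fun_prop) (by linarith)
    (by linarith) (fun y hy => ⟨hy, (div_le_iff₀ hθ).2 (by nlinarith)⟩)
    (fun y hy => ⟨hy, by positivity⟩) fun y hy => h.eq_zero y hy.2.le
  obtain ⟨A₂, hA₂⟩ := exists_apNorm_one_packet_softStep_sub_le (f := (· / θ - 1 - ε))
    (g := fun y => (y - 1 + θ) / θ) (u := θ) (v := 1 - θ) hε h.hasDerivAt_primitive h.continuous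
    (by fun_prop) (by fun_prop) (by linarith) (by linarith)
    (fun y hy => ⟨by linarith [(div_le_one hθ).2 hy], before_right_copy hy⟩)
    (fun y hy => ⟨after_left_copy hy, div_nonneg (by linarith) hθ.le⟩)
    fun y hy => h.eq_half hy.1.le hy.2.le
  obtain ⟨A₃, hA₃⟩ := exists_apNorm_one_packet_softStep_sub_le (u := 1) (v := 1 + ε)
    (f := fun y => (y - 1 + θ) / θ - 1 - ε) (g := (· - 1 - ε)) hε h.hasDerivAt_primitive
    h.continuous (by fun_prop) (by fun_prop) (by linarith) (by linarith)
    (fun y hy => ⟨by linarith [(div_le_one hθ).2 (show y - 1 + θ ≤ θ by linarith)], by linarith⟩)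
    (fun y hy => ⟨by
      linarith [(le_div_iff₀ hθ).2 (show (1 + ε) * θ ≤ y - 1 + θ by nlinarith)], by linarith⟩)
    fun y hy => h.eq_one y hy.1.le
  refine ⟨A₁ + A₂ + A₃, fun a b μ t₀ η hw => ?_⟩
  have gaps : (fun y => softPlateau ε y - cantorSplit θ (softPlateau ε) y) = fun y =>
      (softStep ε y - softStep ε (y / θ)) +
      (softStep ε (y / θ - 1 - ε) - softStep ε ((y - 1 + θ) / θ)) +
      (softStep ε ((y - 1 + θ) / θ - 1 - ε) - softStep ε (y - 1 - ε)) := by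
    ext y
    simp only [softPlateau, cantorSplit]
    ring
  rw [gaps, packet_add (cantorPrimitive S), packet_add (cantorPrimitive S)]
  push_cast
  refine (apNorm_add_le le_rfl (by fun_prop) (by fun_prop)).trans <| add_le_add
    ((apNorm_add_le le_rfl (by fun_prop) (by fun_prop)).trans <| add_le_add ?_ ?_) ?_
  · exact hA₁ _ _ _ _ _ (hw.mono le_rfl (by linarith))
  · exact hA₂ _ _ _ _ _ (hw.mono (by linarith) (by linarith))
  · exact hA₃ _ _ _ _ _ (hw.mono (by linarith) le_rfl)

theorem IsCantorFunction.exists_apNorm_one_packet_sub_iterate_le :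
    ∃ A : ℝ≥0, ∀ (m : ℕ) (a b μ t₀ η : ℝ), IsWindow (-ε) (1 + ε) t₀ η →
      ApNorm 1 (packet (cantorPrimitive S)
        (fun y => softPlateau ε y - (cantorSplit θ)^[m] (softPlateau ε) y) a b μ t₀ η) ≤
        A * 2 ^ m := by
  obtain ⟨A, hA⟩ := h.exists_apNorm_one_packet_sub_cantorSplit_le hε hε' hεθ
  have hR := h.continuous_primitive
  have hω := isCutoff_softPlateau hε
  have hωm (m : ℕ) := hω.split_iterate hε h.pos h.lt_half hεθ m
  have hωc := hω.continuous
  have hsplit := (hω.split hε h.pos h.lt_half hεθ).continuous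
  refine ⟨A, fun m a b μ t₀ η hw => le_of_add_le_left (b := (A : ℝ≥0∞)) ?_⟩
  induction m generalizing a b μ t₀ η with
  | zero => simp [packet, apNorm_one_eq_tsum, fourierCoef]
  | succ m ih =>
    let κ (y : ℝ) : ℝ := softPlateau ε y - (cantorSplit θ)^[m] (softPlateau ε) y
    have hκ : Continuous κ := hωc.sub (hωm m).continuous
    have hsplitκ : Continuous (cantorSplit θ κ) := by
      unfold cantorSplit
      fun_prop
    obtain ⟨a', b', hcopies⟩ := h.exists_apNorm_packet_cantorSplit_le hεθ hκ
      (fun y hy => by simp only [κ, hω.eq_zero_left y hy, (hωm m).eq_zero_left y hy, sub_self])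
      (fun y hy => by simp only [κ, hω.eq_zero_right y hy, (hωm m).eq_zero_right y hy, sub_self])
      le_rfl a b μ t₀ hw.pos.ne'
    have recursion : (fun y => softPlateau ε y - (cantorSplit θ)^[m + 1] (softPlateau ε) y) =
        fun y => (softPlateau ε y - cantorSplit θ (softPlateau ε) y) + cantorSplit θ κ y := by
      ext y
      simp only [Function.iterate_succ_apply', cantorSplit, κ]
      ring
    rw [recursion, packet_add]
    rw [pow_succ, ← mul_assoc]
    exact add_le_mul_two
      ((apNorm_add_le le_rfl (by fun_prop) (by fun_prop)).trans <|
        add_le_add (hA a b μ t₀ η hw) hcopies)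
      (ih a b (μ * (θ / 2)) _ _ (hw.left_copy hε h.pos h.lt_half))
      (ih a' b' (μ * (θ / 2)) _ _ (hw.right_copy hε h.pos h.lt_half))

/-- Splitting halves the packets `m` times, until the frequency parameter has dropped below `1`. -/
theorem IsCantorFunction.exists_apNorm_one_packet_softPlateau_le :
    ∃ A : ℝ≥0, ∀ (m : ℕ) (a b μ t₀ η : ℝ), IsWindow (-ε) (1 + ε) t₀ η → |μ| * (θ / 2) ^ m ≤ 1 →
      ApNorm 1 (packet (cantorPrimitive S) (softPlateau ε) a b μ t₀ η) ≤ A * 2 ^ m := by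
  obtain ⟨A, hA⟩ := h.exists_apNorm_one_packet_sub_cantorSplit_le hε hε' hεθ
  have hR := h.continuous_primitive
  have hω := isCutoff_softPlateau hε
  have hωc := hω.continuous
  have hsplit := (hω.split hε h.pos h.lt_half hεθ).continuous
  have hsmooth : ContDiff ℝ 1 (softPlateau ε) :=
    (contDiff_softStep ε).sub ((contDiff_softStep ε).comp (by fun_prop))
  obtain ⟨B, hB⟩ := exists_apNorm_one_packet_le h.hasDerivAt_primitive h.continuous hsmooth
    (show -ε ≤ 1 + ε by linarith) (by linarith) hω.eq_zero_left hω.eq_zero_right 1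
  refine ⟨A + B, fun m a b μ t₀ η hw hμ => le_of_add_le_left (b := (A : ℝ≥0∞)) ?_⟩
  induction m generalizing a b μ t₀ η with
  | zero =>
    rw [pow_zero, mul_one] at hμ
    rw [pow_zero, mul_one, ENNReal.coe_add, add_comm (A : ℝ≥0∞)]
    gcongr
    refine hB a b μ t₀ η 0 hw fun y _ => ?_
    rw [sub_zero, abs_mul, NNReal.coe_one]
    exact mul_le_one₀ hμ (abs_nonneg _) (abs_le.2 ⟨by linarith [(h.mem_Icc y).1], (h.mem_Icc y).2⟩)
  | succ m ih =>
    have hμ' : |μ * (θ / 2)| * (θ / 2) ^ m ≤ 1 := by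
      rwa [abs_mul, abs_of_pos (half_pos h.pos), mul_assoc, ← pow_succ']
    obtain ⟨a', b', hcopies⟩ := h.exists_apNorm_packet_cantorSplit_le hεθ hωc hω.eq_zero_left
      hω.eq_zero_right le_rfl a b μ t₀ hw.pos.ne'
    have recursion : softPlateau ε = fun y =>
        (softPlateau ε y - cantorSplit θ (softPlateau ε) y) + cantorSplit θ (softPlateau ε) y := by
      ext y
      ring
    have gaps_add_copies := (apNorm_add_le le_rfl (by fun_prop) (by fun_prop)).trans <|
      add_le_add (hA a b μ t₀ η hw) hcopies
    rw [← packet_add, ← recursion] at gaps_add_copies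
    rw [pow_succ, ← mul_assoc]
    exact add_le_mul_two gaps_add_copies (ih a b _ _ _ (hw.left_copy hε h.pos h.lt_half) hμ')
      (ih a' b' _ _ _ (hw.right_copy hε h.pos h.lt_half) hμ')

end SelfSimilarity

/-! ### Blocks -/

/-- A bump of class `C^{1,α}` supported in `[0, 5]`, whose derivative climbs from `0` to `1`, down
to `-1` and back to `0` along three Cantor staircases over `[0, 1]`, `[2, 3]` and `[4, 5]`. -/
noncomputable def cantorBump (S : ℝ → ℝ) (y : ℝ) : ℝ :=
  cantorPrimitive S y - 2 * cantorPrimitive S (y - 2) + cantorPrimitive S (y - 4)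

/-- The derivative of `cantorBump S`. -/
noncomputable def cantorBumpDeriv (S : ℝ → ℝ) (y : ℝ) : ℝ := S y - 2 * S (y - 2) + S (y - 4)

/-- Copies of `κ` over the three staircases of `cantorBump`. -/
def threeCopies (κ : ℝ → ℝ) (y : ℝ) : ℝ := κ y + κ (y - 2) + κ (y - 4)

/-- The increment of `e^{i(at+b)}` caused by adding a rescaled Cantor bump to the phase. -/
noncomputable def block (S : ℝ → ℝ) (a b μ t₀ η t : ℝ) : ℂ :=
  expI (a * t + b + μ * cantorBump S ((t - t₀) / η)) - expI (a * t + b)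

namespace IsCantorFunction

variable {θ : ℝ} {S : ℝ → ℝ} (h : IsCantorFunction θ S)
include h

theorem hasDerivAt_cantorBump (y : ℝ) : HasDerivAt (cantorBump S) (cantorBumpDeriv S y) y :=
  ((h.hasDerivAt_primitive y).sub
    (((h.hasDerivAt_primitive (y - 2)).comp_sub_const y 2).const_mul 2)).add
    ((h.hasDerivAt_primitive (y - 4)).comp_sub_const y 4)

theorem continuous_cantorBump : Continuous (cantorBump S) :=
  continuous_iff_continuousAt.2 fun y => (h.hasDerivAt_cantorBump y).continuousAt

theorem continuous_cantorBumpDeriv : Continuous (cantorBumpDeriv S) := by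
  have := h.continuous
  unfold cantorBumpDeriv
  fun_prop

theorem abs_cantorBumpDeriv_le (y : ℝ) : |cantorBumpDeriv S y| ≤ 2 := by
  obtain ⟨h₁, h₁'⟩ := h.mem_Icc y
  obtain ⟨h₂, h₂'⟩ := h.mem_Icc (y - 2)
  obtain ⟨h₃, h₃'⟩ := h.mem_Icc (y - 4)
  rw [cantorBumpDeriv, abs_le]
  constructor <;> linarith

theorem cantorBumpDeriv_eq_zero {y : ℝ} (hy : y ∉ Ioo (0 : ℝ) 5) : cantorBumpDeriv S y = 0 := by
  rcases not_and_or.1 hy with hy | hy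
  · rw [cantorBumpDeriv, h.eq_zero y (by linarith), h.eq_zero (y - 2) (by linarith),
      h.eq_zero (y - 4) (by linarith)]
    norm_num
  · rw [cantorBumpDeriv, h.eq_one y (by linarith), h.eq_one (y - 2) (by linarith),
      h.eq_one (y - 4) (by linarith)]
    norm_num

theorem cantorBumpDeriv_eq_one {y : ℝ} (hy : y ∈ Icc (1 : ℝ) 2) : cantorBumpDeriv S y = 1 := by
  rw [cantorBumpDeriv, h.eq_one y hy.1, h.eq_zero (y - 2) (by linarith [hy.2]),
    h.eq_zero (y - 4) (by linarith [hy.2])]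
  norm_num

theorem cantorBumpDeriv_eq_neg_one {y : ℝ} (hy : y ∈ Icc (3 : ℝ) 4) :
    cantorBumpDeriv S y = -1 := by
  rw [cantorBumpDeriv, h.eq_one y (by linarith [hy.1]), h.eq_one (y - 2) (by linarith [hy.1]),
    h.eq_zero (y - 4) (by linarith [hy.2])]
  norm_num

theorem cantorBump_eq_primitive {y : ℝ} (hy : y ≤ 2) : cantorBump S y = cantorPrimitive S y := by
  rw [cantorBump, h.primitive_of_nonpos (x := y - 2) (by linarith),
    h.primitive_of_nonpos (x := y - 4) (by linarith)]
  ring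

theorem cantorBump_eq_second {y : ℝ} (hy : 1 ≤ y) (hy' : y ≤ 4) :
    cantorBump S y = y - 1 + cantorPrimitive S 1 - 2 * cantorPrimitive S (y - 2) := by
  rw [cantorBump, h.primitive_of_one_le hy, h.primitive_of_nonpos (x := y - 4) (by linarith)]
  ring

theorem cantorBump_eq_third {y : ℝ} (hy : 3 ≤ y) :
    cantorBump S y = 5 - y - cantorPrimitive S 1 + cantorPrimitive S (y - 4) := by
  rw [cantorBump, h.primitive_of_one_le (x := y) (by linarith),
    h.primitive_of_one_le (x := y - 2) (by linarith)]
  ring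

theorem cantorBump_eq_zero {y : ℝ} (hy : y ∉ Ioo (0 : ℝ) 5) : cantorBump S y = 0 := by
  rcases not_and_or.1 hy with hy | hy
  · rw [h.cantorBump_eq_primitive (by linarith), h.primitive_of_nonpos (not_lt.1 hy)]
  · rw [h.cantorBump_eq_third (by linarith), h.primitive_of_one_le (x := y - 4) (by linarith)]
    ring

theorem abs_cantorBump_le (y : ℝ) : |cantorBump S y| ≤ 10 := by
  by_cases hy : y ∈ Ioo (0 : ℝ) 5
  · have primitive_le_five {x : ℝ} (hx : x ≤ 5) : cantorPrimitive S x ≤ 5 := by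
      rcases le_total x 0 with hx0 | hx0
      · exact (h.primitive_of_nonpos hx0).trans_le (by norm_num)
      · exact (h.primitive_le hx0).trans hx
    have h₁ := primitive_le_five hy.2.le
    have h₂ := primitive_le_five (x := y - 2) (by linarith [hy.2])
    have h₃ := primitive_le_five (x := y - 4) (by linarith [hy.2])
    rw [cantorBump, abs_le]
    constructor <;> linarith [h.primitive_nonneg y, h.primitive_nonneg (y - 2),
      h.primitive_nonneg (y - 4)]
  · rw [h.cantorBump_eq_zero hy, abs_zero]
    norm_num

theorem continuous_block (a b μ t₀ η : ℝ) : Continuous (block S a b μ t₀ η) := by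
  have := h.continuous_cantorBump
  unfold block
  fun_prop

theorem block_eq_zero (a b μ : ℝ) {t₀ η t : ℝ} (hη : 0 < η) (ht : t ∉ Ioo t₀ (t₀ + 5 * η)) :
    block S a b μ t₀ η t = 0 := by
  rw [block, h.cantorBump_eq_zero fun hy => ht ?_, mul_zero, add_zero, sub_self]
  rw [mem_Ioo, lt_div_iff₀ hη, div_lt_iff₀ hη] at hy
  exact ⟨by linarith [hy.1], by linarith [hy.2]⟩

theorem norm_fourierCoef_block_le (a b μ : ℝ) {t₀ η : ℝ} (hw : IsWindow 0 5 t₀ η) (k : ℤ) :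
    ‖fourierCoef (block S a b μ t₀ η) k‖ ≤ 2 * η := by
  have hη := hw.pos
  have hcont := h.continuous_block a b μ t₀ η
  refine (norm_fourierCoef_le _ k).trans ((inv_mul_le_iff₀ two_pi_pos).2 ?_)
  calc ∫ t in 0..2 * π, ‖block S a b μ t₀ η t‖ ≤ 2 * (t₀ + 5 * η - t₀) := by
        refine integral_le_mul_of_support (by fun_prop) (by linarith)
          (Ioo_subset_Ioo (by linarith [hw.left]) hw.right) (fun t => ?_)
          fun t ht => by rw [h.block_eq_zero a b μ hη ht, norm_zero]
        refine (norm_sub_le _ _).trans_eq ?_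
        rw [norm_expI, norm_expI, one_add_one_eq_two]
    _ ≤ 2 * π * (2 * η) := by nlinarith [pi_gt_three]

/-- For small `μ` the block is `μ` times a bump adapted to its window. -/
theorem apNorm_one_block_le_abs (a b μ : ℝ) {t₀ η : ℝ} (hw : IsWindow 0 5 t₀ η) :
    ApNorm 1 (block S a b μ t₀ η) ≤ ENNReal.ofReal (80 * |μ|) := by
  have hΨ := h.continuous_cantorBump
  have hΨ' := h.continuous_cantorBumpDeriv
  let G (y : ℝ) : ℂ := expI (b + μ * cantorBump S y) - expI b
  let G' (y : ℝ) : ℂ :=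
    Complex.I * (μ * cantorBumpDeriv S y : ℝ) * expI (b + μ * cantorBump S y)
  have hG (y : ℝ) : HasDerivAt G (G' y) y :=
    (hasDerivAt_expI_comp (((h.hasDerivAt_cantorBump y).const_mul μ).const_add b)).sub_const _
  have block_eq : block S a b μ t₀ η = fun t => expI (a * t) * G ((t - t₀) / η) := by
    ext t
    simp only [block, G, mul_sub, ← expI_add, ← add_assoc]
  rw [block_eq]
  refine (hw.apNorm_one_expI_mul_rescale_le (K := 10 * ‖μ‖₊) a hG (by fun_prop) (by norm_num)
    (by norm_num) (fun y => ?_) (fun y => ?_)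
    fun y hy => by simp [G, h.cantorBump_eq_zero hy]).trans_eq ?_
  · refine (norm_expI_sub_expI_le _ _).trans ?_
    rw [add_sub_cancel_left, abs_mul, mul_comm]
    push_cast
    gcongr
    exacts [h.abs_cantorBump_le y, le_rfl]
  · simp only [G']
    rw [norm_mul, norm_expI, mul_one, norm_mul, Complex.norm_I, one_mul, Complex.norm_real,
      norm_mul, mul_comm]
    push_cast
    gcongr
    exact (h.abs_cantorBumpDeriv_le y).trans (by norm_num)
  · push_cast
    rw [← mul_assoc, Real.norm_eq_abs]
    norm_num

end IsCantorFunction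

section BlockDecomposition

variable {θ ε : ℝ} {S κ : ℝ → ℝ}

theorem IsCutoff.integrable (hκ : IsCutoff ε κ) : Integrable κ := by
  refine hκ.continuous.integrable_of_hasCompactSupport <|
    HasCompactSupport.intro (isCompact_Icc (a := -ε) (b := 1 + ε)) fun y hy => ?_
  rcases not_and_or.1 hy with hy | hy
  · exact hκ.eq_zero_left y (not_le.1 hy).le
  · exact hκ.eq_zero_right y (not_le.1 hy).le

theorem IsCutoff.integral_nonneg (hκ : IsCutoff ε κ) : 0 ≤ ∫ y, κ y :=
  MeasureTheory.integral_nonneg fun y => (hκ.mem_Icc y).1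

theorem integral_comp_sub_div (κ : ℝ → ℝ) {η : ℝ} (hη : 0 < η) (c : ℝ) :
    ∫ t, κ ((t - c) / η) = η * ∫ y, κ y := by
  rw [integral_sub_right_eq_self (fun t => κ (t / η)), Measure.integral_comp_div, abs_of_pos hη,
    smul_eq_mul]

theorem integral_cantorSplit (hκ : Integrable κ) (hθ : 0 < θ) :
    ∫ y, cantorSplit θ κ y = 2 * θ * ∫ y, κ y := by
  have right_copy (y : ℝ) : y - 1 + θ = y - (1 - θ) := by ring
  simp only [cantorSplit, right_copy]
  rw [integral_add (hκ.comp_div hθ.ne') ((hκ.comp_div hθ.ne').comp_sub_right _),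
    integral_comp_sub_div κ hθ, Measure.integral_comp_div, abs_of_pos hθ, smul_eq_mul]
  ring

theorem IsCutoff.integral_iterate_cantorSplit (hκ : IsCutoff ε κ) (hε : 0 < ε) (hθ : 0 < θ)
    (hθ' : θ < 1 / 2) (hεθ : 2 * (θ * (1 + ε)) ≤ 1) (m : ℕ) :
    ∫ y, (cantorSplit θ)^[m] κ y = (2 * θ) ^ m * ∫ y, κ y := by
  induction m with
  | zero => simp
  | succ m ih =>
    simp only [Function.iterate_succ_apply']
    rw [integral_cantorSplit (hκ.split_iterate hε hθ hθ' hεθ m).integrable hθ, ih]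
    ring

theorem IsCutoff.threeCopies_mem_Icc (hκ : IsCutoff ε κ) (y : ℝ) :
    threeCopies κ y ∈ Icc (0 : ℝ) 3 := by
  have h₁ := hκ.mem_Icc y
  have h₂ := hκ.mem_Icc (y - 2)
  have h₃ := hκ.mem_Icc (y - 4)
  exact ⟨by unfold threeCopies; linarith [h₁.1, h₂.1, h₃.1],
    by unfold threeCopies; linarith [h₁.2, h₂.2, h₃.2]⟩

theorem integrable_threeCopies (hκ : Integrable κ) : Integrable (threeCopies κ) :=
  (hκ.add (hκ.comp_sub_right 2)).add (hκ.comp_sub_right 4)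

theorem integral_threeCopies (hκ : Integrable κ) : ∫ y, threeCopies κ y = 3 * ∫ y, κ y := by
  simp only [threeCopies]
  have sum_integrable : Integrable fun y => κ y + κ (y - 2) := hκ.add (hκ.comp_sub_right 2)
  rw [integral_add sum_integrable (hκ.comp_sub_right 4), integral_add hκ (hκ.comp_sub_right 2),
    integral_sub_right_eq_self, integral_sub_right_eq_self]
  ring

@[fun_prop]
theorem continuous_threeCopies (hκ : Continuous κ) : Continuous (threeCopies κ) := by
  unfold threeCopies
  fun_prop

theorem IsCutoff.tsum_sq_packet_threeCopies_le (hκ : IsCutoff ε κ) {P : ℝ → ℝ} (hP : Continuous P)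
    (a b μ t₀ : ℝ) {η : ℝ} (hη : 0 < η) :
    ∑' k, ‖fourierCoef (packet P (threeCopies κ) a b μ t₀ η) k‖ₑ ^ 2 ≤
      ENNReal.ofReal (9 * η * ∫ y, κ y) := by
  let K (t : ℝ) : ℝ := threeCopies κ ((t - t₀) / η)
  have hK (t : ℝ) : K t ∈ Icc (0 : ℝ) 3 := hκ.threeCopies_mem_Icc _
  have hKi : Integrable K :=
    ((integrable_threeCopies hκ.integrable).comp_div hη.ne').comp_sub_right t₀
  have hcont : Continuous (packet P (threeCopies κ) a b μ t₀ η) :=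
    continuous_packet hP (continuous_threeCopies hκ.continuous) ..
  have parseval := hasSum_sq_norm_fourierCoef hcont
  have hnonneg : 0 ≤ ∫ t in 0..2 * π, ‖packet P (threeCopies κ) a b μ t₀ η t‖ ^ 2 :=
    intervalIntegral.integral_nonneg two_pi_pos.le fun t _ => by positivity
  simp only [← ofReal_norm, ← ENNReal.ofReal_pow (norm_nonneg _)]
  rw [← ENNReal.ofReal_tsum_of_nonneg (fun k => by positivity) parseval.summable, parseval.tsum_eq]
  refine ENNReal.ofReal_le_ofReal ((mul_le_of_le_one_left hnonneg
    (inv_le_one_of_one_le₀ (by linarith [pi_gt_three]))).trans ?_)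
  calc ∫ t in 0..2 * π, ‖packet P (threeCopies κ) a b μ t₀ η t‖ ^ 2
      ≤ ∫ t in 0..2 * π, 3 * K t := by
        refine intervalIntegral.integral_mono_on two_pi_pos.le
          ((hcont.norm.pow 2).intervalIntegrable _ _) (hKi.const_mul 3).intervalIntegrable
          fun t _ => ?_
        rw [norm_packet, sq_abs, sq]
        exact mul_le_mul_of_nonneg_right (hK t).2 (hK t).1
    _ ≤ ∫ t, 3 * K t := by
        rw [intervalIntegral.integral_of_le two_pi_pos.le]
        exact setIntegral_le_integral (hKi.const_mul 3)
          (.of_forall fun t => mul_nonneg zero_le_three (hK t).1)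
    _ = 9 * η * ∫ y, κ y := by
        rw [integral_const_mul, integral_comp_sub_div _ hη, integral_threeCopies hκ.integrable]
        ring

theorem add_three_mul_two_pow_le (A B : ℝ≥0∞) (m : ℕ) :
    A + 3 * (B * 2 ^ m) ≤ (A + 3 * B) * 2 ^ m := by
  rw [add_mul, mul_assoc]
  gcongr
  exact le_mul_of_one_le_right' (one_le_pow₀ one_le_two)

variable (h : IsCantorFunction θ S)
include h

/-- Over each staircase the Cantor bump is, up to an affine term, a multiple of the primitive. -/
theorem IsCantorFunction.exists_packet_threeCopies_eq (hκl : ∀ y ≤ -1 / 2, κ y = 0)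
    (hκr : ∀ y, 3 / 2 ≤ y → κ y = 0) (a b μ t₀ : ℝ) {η : ℝ} (hη : η ≠ 0) :
    ∃ a₁ b₁ a₂ b₂, packet (cantorBump S) (threeCopies κ) a b μ t₀ η = fun t =>
      packet (cantorPrimitive S) κ a b μ t₀ η t +
      packet (cantorPrimitive S) κ a₁ b₁ (-2 * μ) (t₀ + 2 * η) η t +
      packet (cantorPrimitive S) κ a₂ b₂ μ (t₀ + 4 * η) η t := by
  have shift (s t : ℝ) : (t - (t₀ + s * η)) / η = (t - t₀) / η - s := by
    field_simp
    ring
  refine ⟨a + μ / η, b + μ * (cantorPrimitive S 1 - 1) - μ * t₀ / η,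
    a - μ / η, b + μ * (5 - cantorPrimitive S 1) + μ * t₀ / η, ?_⟩
  rw [show threeCopies κ = fun y => κ y + κ (y - 2) + κ (y - 4) from rfl, packet_add,
    packet_add]
  ext t
  refine congrArg₂ _ (congrArg₂ _ ?_ ?_) ?_
  · simp only [packet]
    rcases lt_or_ge ((t - t₀) / η) (3 / 2) with hy | hy
    · rw [h.cantorBump_eq_primitive (by linarith)]
    · simp only [hκr _ hy, Complex.ofReal_zero, mul_zero]
  · simp only [packet, shift]
    by_cases hy : (t - t₀) / η - 2 ∈ Ioo (-1 / 2 : ℝ) (3 / 2)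
    · rw [h.cantorBump_eq_second (by linarith [hy.1]) (by linarith [hy.2])]
      congr 2
      field_simp
      ring
    · rcases not_and_or.1 hy with hy | hy
      · simp only [hκl _ (not_lt.1 hy), Complex.ofReal_zero, mul_zero]
      · simp only [hκr _ (not_lt.1 hy), Complex.ofReal_zero, mul_zero]
  · simp only [packet, shift]
    rcases lt_or_ge (-1 / 2) ((t - t₀) / η - 4) with hy | hy
    · rw [h.cantorBump_eq_third (by linarith)]
      congr 2
      field_simp
      ring
    · simp only [hκl _ hy, Complex.ofReal_zero, mul_zero]

theorem IsCantorFunction.apNorm_one_packet_threeCopies_le (hε' : ε ≤ 1 / 2) (hκ : Continuous κ)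
    (hκl : ∀ y ≤ -ε, κ y = 0) (hκr : ∀ y, 1 + ε ≤ y → κ y = 0) {μ η : ℝ} {B : ℝ≥0∞}
    (hB : ∀ a b μ' t₁, |μ'| ≤ 2 * |μ| → IsWindow (-ε) (1 + ε) t₁ η →
      ApNorm 1 (packet (cantorPrimitive S) κ a b μ' t₁ η) ≤ B)
    (a b : ℝ) {t₀ : ℝ} (hw : IsWindow (-1) 6 t₀ η) :
    ApNorm 1 (packet (cantorBump S) (threeCopies κ) a b μ t₀ η) ≤ 3 * B := by
  have hR := h.continuous_primitive
  have window (s : ℝ) (hs : s ∈ Icc (0 : ℝ) 4) : IsWindow (-ε) (1 + ε) (t₀ + s * η) η :=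
    ⟨hw.pos, hw.le_one, by nlinarith [hw.left, hw.pos, hs.1],
      by nlinarith [hw.right, hw.pos, hs.2]⟩
  have hμ : |μ| ≤ 2 * |μ| := by linarith [abs_nonneg μ]
  obtain ⟨a₁, b₁, a₂, b₂, hcopies⟩ := h.exists_packet_threeCopies_eq
    (fun y hy => hκl y (by linarith)) (fun y hy => hκr y (by linarith)) a b μ t₀ hw.pos.ne'
  rw [hcopies, show 3 * B = B + B + B by ring]
  refine (apNorm_add_le le_rfl (by fun_prop) (by fun_prop)).trans <| add_le_add
    ((apNorm_add_le le_rfl (by fun_prop) (by fun_prop)).trans <| add_le_add ?_ ?_) ?_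
  · exact hB _ _ _ _ hμ (by simpa using window 0 (by norm_num))
  · exact hB _ _ _ _ (by simp [abs_mul]) (window 2 (by norm_num))
  · exact hB _ _ _ _ hμ (window 4 (by norm_num))

theorem IsCantorFunction.block_eq_add_packet (hε : 0 < ε) (a b μ t₀ η : ℝ) :
    block S a b μ t₀ η = fun t =>
      packet (cantorBump S) (fun y => softStep ε (y - 1 - ε) - softStep ε (y - 2)) a b μ t₀ η t +
      packet (cantorBump S) (fun y => softStep ε (y - 3 - ε) - softStep ε (y - 4)) a b μ t₀ η t +
      packet 0 (fun y => softStep ε (y - 5 - ε) - softStep ε y) a b μ t₀ η t +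
      packet (cantorBump S) (threeCopies (softPlateau ε)) a b μ t₀ η t := by
  ext t
  simp only [block, packet, threeCopies, softPlateau, Pi.zero_apply, mul_zero, add_zero]
  by_cases hy : (t - t₀) / η ∈ Ioo (0 : ℝ) 5
  · rw [softStep_eq_one hε hy.1.le, softStep_eq_zero (y := (t - t₀) / η - 5 - ε) hε
        (by linarith [hy.2]), softStep_eq_zero (y := (t - t₀) / η - 4 - 1 - ε) hε
        (by linarith [hy.2]), sub_sub]
    push_cast
    ring_nf
  · rw [h.cantorBump_eq_zero hy]
    push_cast
    ring_nf

variable (hε : 0 < ε) (hε' : ε ≤ 1 / 2)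
include hε hε'

/-- Between the staircases, and around the bump, the derivative of the bump is constant. -/
theorem IsCantorFunction.exists_block_eq_add_packet : ∃ A : ℝ≥0, ∀ a b μ t₀ η,
    IsWindow (-1) 6 t₀ η → ∃ g, Continuous g ∧ ApNorm 1 g ≤ A ∧ block S a b μ t₀ η = fun t =>
      g t + packet (cantorBump S) (threeCopies (softPlateau ε)) a b μ t₀ η t := by
  have hΨ := h.continuous_cantorBump
  have hs := (contDiff_softStep ε).continuous
  obtain ⟨A₁, hA₁⟩ := exists_apNorm_one_packet_softStep_sub_le (f := (· - 1 - ε)) (g := (· - 2))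
    (u := 1) (v := 2) (c := 1) hε h.hasDerivAt_cantorBump h.continuous_cantorBumpDeriv
    (by fun_prop) (by fun_prop) (by norm_num) (by norm_num)
    (fun y hy => ⟨by linarith, by linarith⟩) (fun y hy => ⟨by linarith, by linarith⟩)
    fun y hy => h.cantorBumpDeriv_eq_one (Ioo_subset_Icc_self hy)
  obtain ⟨A₂, hA₂⟩ := exists_apNorm_one_packet_softStep_sub_le (f := (· - 3 - ε)) (g := (· - 4))
    (u := 3) (v := 4) (c := -1) hε h.hasDerivAt_cantorBump h.continuous_cantorBumpDeriv
    (by fun_prop) (by fun_prop) (by norm_num) (by norm_num)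
    (fun y hy => ⟨by linarith, by linarith⟩) (fun y hy => ⟨by linarith, by linarith⟩)
    fun y hy => h.cantorBumpDeriv_eq_neg_one (Ioo_subset_Icc_self hy)
  obtain ⟨A₃, hA₃⟩ := exists_apNorm_one_packet_softStep_sub_le (P := 0) (P' := 0)
    (f := (· - 5 - ε)) (g := id) (u := -ε) (v := 5 + ε) (c := 0) hε
    (fun y => hasDerivAt_const y 0) continuous_zero
    (by fun_prop) (by fun_prop) (by linarith) (by linarith)
    (fun y hy => ⟨by linarith, hy⟩) (fun y hy => ⟨by linarith, by simp only [id]; linarith⟩)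
    fun _ _ => rfl
  refine ⟨A₁ + A₂ + A₃, fun a b μ t₀ η hw => ⟨fun t =>
    packet (cantorBump S) (fun y => softStep ε (y - 1 - ε) - softStep ε (y - 2)) a b μ t₀ η t +
    packet (cantorBump S) (fun y => softStep ε (y - 3 - ε) - softStep ε (y - 4)) a b μ t₀ η t +
    packet 0 (fun y => softStep ε (y - 5 - ε) - softStep ε y) a b μ t₀ η t,
    by fun_prop, ?_, h.block_eq_add_packet hε a b μ t₀ η⟩⟩
  push_cast
  refine (apNorm_add_le le_rfl (by fun_prop) (by fun_prop)).trans <| add_le_add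
    ((apNorm_add_le le_rfl (by fun_prop) (by fun_prop)).trans <| add_le_add ?_ ?_) ?_
  · exact hA₁ _ _ _ _ _ (hw.mono (by norm_num) (by norm_num))
  · exact hA₂ _ _ _ _ _ (hw.mono (by norm_num) (by norm_num))
  · exact hA₃ _ _ _ _ _ (hw.mono (by linarith) (by linarith))

variable (hεθ : 2 * (θ * (1 + ε)) ≤ 1)
include hεθ

/-- The second part lives on the `m`-th approximation of the Cantor sets. -/
theorem IsCantorFunction.exists_block_eq_add : ∃ A : ℝ≥0, ∀ (m : ℕ) (a b μ t₀ η : ℝ),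
    IsWindow (-1) 6 t₀ η → ∃ g f, Continuous g ∧ Continuous f ∧
      (block S a b μ t₀ η = fun t => g t + f t) ∧ ApNorm 1 g ≤ A * 2 ^ m ∧
      ∑' k, ‖fourierCoef f k‖ₑ ^ 2 ≤ ENNReal.ofReal (A * η * (2 * θ) ^ m) := by
  obtain ⟨A₁, hA₁⟩ := h.exists_block_eq_add_packet hε hε'
  obtain ⟨A₂, hA₂⟩ := h.exists_apNorm_one_packet_sub_iterate_le hε hε' hεθ
  have hω := isCutoff_softPlateau hε
  have hI := hω.integral_nonneg
  have hΨ := h.continuous_cantorBump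
  have hωc := hω.continuous
  refine ⟨A₁ + 3 * A₂ + 9 * (∫ y, softPlateau ε y).toNNReal, fun m a b μ t₀ η hw => ?_⟩
  have hη := hw.pos
  have hθ := h.pos
  obtain ⟨g, hg, hgA, hblock⟩ := hA₁ a b μ t₀ η hw
  have hm := hω.split_iterate hε h.pos h.lt_half hεθ m
  let κ (y : ℝ) : ℝ := softPlateau ε y - (cantorSplit θ)^[m] (softPlateau ε) y
  have hκ : Continuous κ := hωc.sub hm.continuous
  have hmc := hm.continuous
  refine ⟨fun t => g t + packet (cantorBump S) (threeCopies κ) a b μ t₀ η t,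
    packet (cantorBump S) (threeCopies ((cantorSplit θ)^[m] (softPlateau ε))) a b μ t₀ η,
    by fun_prop, by fun_prop, ?_, ?_, ?_⟩
  · rw [hblock]
    ext t
    simp only [packet, threeCopies, κ]
    push_cast
    ring
  · have copies := h.apNorm_one_packet_threeCopies_le hε' hκ
      (fun y hy => by simp only [κ, hω.eq_zero_left y hy, hm.eq_zero_left y hy, sub_self])
      (fun y hy => by simp only [κ, hω.eq_zero_right y hy, hm.eq_zero_right y hy, sub_self])
      (μ := μ) (fun a b μ' t₁ _ => hA₂ m a b μ' t₁ η) a b hw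
    refine (apNorm_add_le le_rfl hg (by fun_prop)).trans ((add_le_add hgA copies).trans ?_)
    refine (add_three_mul_two_pow_le _ _ m).trans ?_
    push_cast
    exact mul_le_mul_left le_self_add _
  · refine (hm.tsum_sq_packet_threeCopies_le hΨ a b μ t₀ hη).trans (ENNReal.ofReal_le_ofReal ?_)
    rw [hω.integral_iterate_cantorSplit hε h.pos h.lt_half hεθ]
    push_cast
    rw [Real.coe_toNNReal _ hI]
    calc 9 * η * ((2 * θ) ^ m * ∫ y, softPlateau ε y)
        = 9 * (∫ y, softPlateau ε y) * η * (2 * θ) ^ m := by ring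
      _ ≤ _ := by
          gcongr
          exact le_add_of_nonneg_left (by positivity)

theorem IsCantorFunction.exists_apNorm_one_block_le : ∃ A : ℝ≥0, ∀ (m : ℕ) (a b μ t₀ η : ℝ),
    IsWindow (-1) 6 t₀ η → 2 * |μ| * (θ / 2) ^ m ≤ 1 →
      ApNorm 1 (block S a b μ t₀ η) ≤ A * 2 ^ m := by
  obtain ⟨A₁, hA₁⟩ := h.exists_block_eq_add_packet hε hε'
  obtain ⟨A₂, hA₂⟩ := h.exists_apNorm_one_packet_softPlateau_le hε hε' hεθ
  have hω := isCutoff_softPlateau hε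
  have hΨ := h.continuous_cantorBump
  have hωc := hω.continuous
  have hθ := h.pos
  refine ⟨A₁ + 3 * A₂, fun m a b μ t₀ η hw hμ => ?_⟩
  obtain ⟨g, hg, hgA, hblock⟩ := hA₁ a b μ t₀ η hw
  have copies := h.apNorm_one_packet_threeCopies_le hε' hωc hω.eq_zero_left hω.eq_zero_right
    (fun a b μ' t₁ hμ' hw' => hA₂ m a b μ' t₁ η hw' (le_trans (by gcongr) hμ)) a b hw
  rw [hblock]
  refine (apNorm_add_le le_rfl hg (by fun_prop)).trans ((add_le_add hgA copies).trans ?_)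
  exact_mod_cast add_three_mul_two_pow_le A₁ A₂ m

end BlockDecomposition

/-! ### Interpolation between the scales -/

section Interpolation

variable {ι : Type*}

theorem le_two_mul_add_four_div_mul_sq {x g f t : ℝ≥0∞} (ht : t ≠ 0) (ht' : t ≠ ∞) (htx : t ≤ x)
    (hx : x ≤ g + f) : x ≤ 2 * g + 4 / t * f ^ 2 := by
  rcases le_total f g with hfg | hgf
  · calc x ≤ g + g := hx.trans (by gcongr)
      _ ≤ 2 * g + 4 / t * f ^ 2 := by rw [← two_mul]; exact le_self_add
  · have hx2 : x ≤ 2 * f := hx.trans (by rw [two_mul]; gcongr)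
    refine le_add_left ?_
    rw [ENNReal.mul_comm_div, ← mul_div_assoc, ENNReal.le_div_iff_mul_le (.inl ht) (.inl ht')]
    calc x * t ≤ 2 * f * (2 * f) := by gcongr; exact htx.trans hx2
      _ = 4 * f ^ 2 := by ring

theorem le_or_exists_lt_and_le {T : ℕ → ℝ≥0∞} {x : ℝ≥0∞} (hx : x ≤ T 0) (M : ℕ) :
    x ≤ T M ∨ ∃ m < M, T (m + 1) < x ∧ x ≤ T m := by
  induction M with
  | zero => exact .inl hx
  | succ M ih =>
    rcases ih with hM | ⟨m, hm, hmx⟩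
    · rcases le_or_gt x (T (M + 1)) with hM' | hM'
      · exact .inl hM'
      · exact .inr ⟨M, M.lt_succ_self, hM', hM⟩
    · exact .inr ⟨m, hm.trans M.lt_succ_self, hmx⟩

/-- A sequence is summed by layers `T (m + 1) < a ≤ T m`, on the `m`-th of which the `m`-th
decomposition `a ≤ g m + f m` is used. -/
theorem tsum_rpow_le_sum_layers {a : ι → ℝ≥0∞} {g f : ℕ → ι → ℝ≥0∞} {T : ℕ → ℝ≥0∞}
    (hT : ∀ m, T m ≠ 0) (hT' : ∀ m, T m ≠ ∞) (ha : ∀ k, a k ≤ T 0)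
    (hdec : ∀ m k, a k ≤ g m k + f m k) {p : ℝ} (hp : 1 ≤ p) (M : ℕ) :
    ∑' k, a k ^ p ≤ ∑ m ∈ Finset.range M,
      T m ^ (p - 1) * (2 * ∑' k, g m k + 4 / T (m + 1) * ∑' k, f m k ^ 2) +
      T M ^ (p - 1) * ∑' k, a k := by
  have rpow_le {k : ι} {m : ℕ} (hm : a k ≤ T m) : a k ^ p ≤ T m ^ (p - 1) * a k :=
    calc a k ^ p = a k ^ (p - 1) * a k := by
          simpa using ENNReal.rpow_add_of_nonneg (x := a k) _ _ (sub_nonneg.2 hp) zero_le_one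
      _ ≤ T m ^ (p - 1) * a k := by gcongr
  have pointwise (k : ι) : a k ^ p ≤ ∑ m ∈ Finset.range M,
      T m ^ (p - 1) * (2 * g m k + 4 / T (m + 1) * f m k ^ 2) + T M ^ (p - 1) * a k := by
    rcases le_or_exists_lt_and_le (ha k) M with hM | ⟨m, hm, hlt, hle⟩
    · exact (rpow_le hM).trans le_add_self
    · refine (rpow_le hle).trans (le_add_right ?_)
      refine le_trans ?_ (Finset.single_le_sum_of_canonicallyOrdered (Finset.mem_range.2 hm))
      gcongr
      exact le_two_mul_add_four_div_mul_sq (hT _) (hT' _) hlt.le (hdec m k)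
  refine (ENNReal.tsum_le_tsum pointwise).trans_eq ?_
  simp only [ENNReal.tsum_add, ENNReal.tsum_mul_left,
    Summable.tsum_finsetSum fun _ _ => ENNReal.summable]

theorem coe_mul_two_pow_eq_ofReal (A : ℝ≥0) (m : ℕ) :
    (A * 2 ^ m : ℝ≥0∞) = ENNReal.ofReal (A * 2 ^ m) := by
  rw [ENNReal.ofReal_mul A.coe_nonneg, ENNReal.ofReal_coe_nnreal, ENNReal.ofReal_pow zero_le_two,
    ENNReal.ofReal_ofNat]

/-- Layers at the heights `2ηθ ^ m`. -/
theorem tsum_rpow_le_sum_geometric {a : ι → ℝ≥0∞} {g f : ℕ → ι → ℝ≥0∞} {A B : ℝ≥0} {η θ : ℝ}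
    (hη : 0 < η) (hθ : 0 < θ) (ha : ∀ k, a k ≤ ENNReal.ofReal (2 * η))
    (hdec : ∀ m k, a k ≤ g m k + f m k) (hg : ∀ m, ∑' k, g m k ≤ A * 2 ^ m)
    (hf : ∀ m, ∑' k, f m k ^ 2 ≤ ENNReal.ofReal (A * η * (2 * θ) ^ m)) {M : ℕ}
    (hM : ∑' k, a k ≤ B * 2 ^ M) {p : ℝ} (hp : 1 ≤ p) :
    ∑' k, a k ^ p ≤ ENNReal.ofReal ((2 * η) ^ (p - 1) * (2 * A + 2 * A / θ + B) *
      ∑ m ∈ Finset.range (M + 1), (2 * θ ^ (p - 1)) ^ m) := by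
  let T (m : ℕ) : ℝ := 2 * η * θ ^ m
  have hT (m : ℕ) : 0 < T m := by positivity
  have mul_T_rpow (c : ℝ) (m : ℕ) : T m ^ (p - 1) * (c * 2 ^ m) =
      (2 * η) ^ (p - 1) * c * (2 * θ ^ (p - 1)) ^ m := by
    rw [mul_rpow (by positivity) (by positivity), ← rpow_natCast_mul hθ.le, mul_comm (m : ℝ),
      rpow_mul_natCast hθ.le]
    ring
  have layer (m : ℕ) : ENNReal.ofReal (T m) ^ (p - 1) *
      (2 * ∑' k, g m k + 4 / ENNReal.ofReal (T (m + 1)) * ∑' k, f m k ^ 2) ≤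
      ENNReal.ofReal ((2 * η) ^ (p - 1) * (2 * A + 2 * A / θ) * (2 * θ ^ (p - 1)) ^ m) := by
    refine (mul_le_mul_right (add_le_add (mul_le_mul_right (hg m) 2)
      (mul_le_mul_right (hf m) _)) _).trans_eq ?_
    rw [coe_mul_two_pow_eq_ofReal, ENNReal.ofReal_rpow_of_pos (hT m), ← ENNReal.ofReal_ofNat 2,
      ← ENNReal.ofReal_ofNat 4, ← ENNReal.ofReal_div_of_pos (hT _),
      ← ENNReal.ofReal_mul zero_le_two, ← ENNReal.ofReal_mul (by have := hT (m + 1); positivity),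
      ← ENNReal.ofReal_add (by positivity) (by have := hT (m + 1); positivity),
      ← ENNReal.ofReal_mul (by positivity), ← mul_T_rpow]
    congr 2
    simp only [T]
    field_simp
    ring
  have top : ENNReal.ofReal (T M) ^ (p - 1) * ∑' k, a k ≤
      ENNReal.ofReal ((2 * η) ^ (p - 1) * B * (2 * θ ^ (p - 1)) ^ M) := by
    refine (mul_le_mul_right hM _).trans_eq ?_
    rw [coe_mul_two_pow_eq_ofReal, ENNReal.ofReal_rpow_of_pos (hT M),
      ← ENNReal.ofReal_mul (by positivity), mul_T_rpow]
  refine (tsum_rpow_le_sum_layers (fun m => (ENNReal.ofReal_pos.2 (hT m)).ne')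
    (fun m => ENNReal.ofReal_ne_top) (by simpa [T] using ha) hdec hp M).trans <|
    (add_le_add (Finset.sum_le_sum fun m _ => layer m) top).trans ?_
  rw [← ENNReal.ofReal_sum_of_nonneg fun m _ => by positivity, ← ENNReal.ofReal_add
    (Finset.sum_nonneg fun m _ => by positivity) (by positivity), Finset.mul_sum,
    Finset.sum_range_succ]
  refine ENNReal.ofReal_le_ofReal (add_le_add (Finset.sum_le_sum fun m _ => ?_) ?_)
  · gcongr _ * ?_ * _
    exact le_add_of_nonneg_right B.coe_nonneg
  · gcongr _ * ?_ * _
    exact le_add_of_nonneg_left (by positivity)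

end Interpolation

/-- The order of magnitude of `∑ m ≤ log L, e ^ (β m)`. -/
noncomputable def geomGrowth (β L : ℝ) : ℝ :=
  if 0 < β then L ^ β else if β = 0 then log L else 1

section GeometricSums

variable {β L q : ℝ}

theorem geomGrowth_of_pos (hβ : 0 < β) : geomGrowth β L = L ^ β := if_pos hβ

theorem geomGrowth_zero : geomGrowth 0 L = log L := by simp [geomGrowth]

theorem geomGrowth_of_neg (hβ : β < 0) : geomGrowth β L = 1 := by
  rw [geomGrowth, if_neg hβ.not_gt, if_neg hβ.ne]

theorem geomGrowth_nonneg (hL : 1 ≤ L) : 0 ≤ geomGrowth β L := by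
  have := log_nonneg hL
  unfold geomGrowth
  split_ifs <;> positivity

theorem exists_sum_pow_le_geomGrowth (hq : 2 ≤ q) (β : ℝ) : ∃ C : ℝ≥0, ∀ L, 2 ≤ L → ∀ M : ℕ,
    q ^ M ≤ 2 * q * L → ∑ m ∈ Finset.range (M + 1), (q ^ β) ^ m ≤ C * geomGrowth β L := by
  have hq0 : 0 < q := by linarith
  have hq1 : 1 < q := by linarith
  rcases lt_trichotomy β 0 with hβ | rfl | hβ
  · have hr := rpow_lt_one_of_one_lt_of_neg hq1 hβ
    refine ⟨(1 - q ^ β)⁻¹.toNNReal, fun L _ M _ => ?_⟩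
    rw [geomGrowth_of_neg hβ, mul_one,
      Real.coe_toNNReal _ (inv_nonneg.2 (sub_nonneg.2 hr.le)),
      ← tsum_geometric_of_lt_one (by positivity) hr]
    exact (summable_geometric_of_lt_one (by positivity) hr).sum_le_tsum _
      fun _ _ => by positivity
  · have hlog2 := log_pos one_lt_two
    have hlogq : 0 ≤ log (2 * q) := log_nonneg (by linarith)
    refine ⟨((log (2 * q) / log 2 + 2) / log 2).toNNReal, fun L hL M hM => ?_⟩
    rw [geomGrowth_zero, Real.coe_toNNReal _ (by positivity)]
    simp only [rpow_zero, one_pow, Finset.sum_const, Finset.card_range, nsmul_eq_mul, mul_one]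
    have hlogL : log 2 ≤ log L := log_le_log two_pos hL
    have hMlog : M * log 2 ≤ log (2 * q) + log L := by
      rw [← log_mul (by positivity) (by linarith)]
      calc M * log 2 ≤ M * log q := by gcongr
        _ = log (q ^ M) := (Real.log_pow ..).symm
        _ ≤ log (2 * q * L) := log_le_log (by positivity) hM
    rw [div_mul_eq_mul_div, le_div_iff₀ hlog2]
    push_cast
    calc (M + 1) * log 2 ≤ log (2 * q) + log L + log L := by linarith
      _ ≤ log (2 * q) / log 2 * log L + log L + log L := by
          gcongr
          rw [div_mul_eq_mul_div, le_div_iff₀ hlog2]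
          gcongr
      _ = (log (2 * q) / log 2 + 2) * log L := by ring
  · have hr := one_lt_rpow hq1 hβ
    refine ⟨(q ^ β / (q ^ β - 1) * (2 * q) ^ β).toNNReal, fun L hL M hM => ?_⟩
    have : 0 < q ^ β - 1 := sub_pos.2 hr
    rw [geomGrowth_of_pos hβ, Real.coe_toNNReal _ (by positivity), geom_sum_eq hr.ne', pow_succ',
      mul_assoc, ← mul_rpow (by positivity) (by linarith), div_mul_eq_mul_div]
    gcongr
    calc q ^ β * (q ^ β) ^ M - 1 ≤ q ^ β * (q ^ M) ^ β := by
          rw [← rpow_natCast_mul hq0.le, mul_comm (M : ℝ), rpow_mul_natCast hq0.le]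
          exact sub_le_self _ zero_le_one
      _ ≤ q ^ β * (2 * q * L) ^ β := by gcongr

end GeometricSums

theorem exists_pow_near_scale {θ L : ℝ} (hθ : 0 < θ) (hθ' : θ < 1) (hL : 1 ≤ L) :
    ∃ M : ℕ, 2 * L * (θ / 2) ^ M ≤ 1 ∧ (2 / θ) ^ M ≤ 2 * (2 / θ) * L := by
  have one_lt : 1 < 2 / θ := (one_lt_div hθ).2 (by linarith)
  obtain ⟨n, hn, hn'⟩ := exists_nat_pow_near (x := 2 * L) (by linarith) one_lt
  refine ⟨n + 1, ?_, ?_⟩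
  · rw [← inv_div, inv_pow, mul_inv_le_iff₀ (by positivity), one_mul]
    exact hn'.le
  · calc (2 / θ) ^ (n + 1) = 2 / θ * (2 / θ) ^ n := pow_succ' ..
      _ ≤ 2 / θ * (2 * L) := by gcongr
      _ = 2 * (2 / θ) * L := by ring

theorem two_mul_rpow_sub_one {θ α : ℝ} (hθ : 0 < θ) (hα : 0 < α) (hθα : θ ^ α = 1 / 2) (p : ℝ) :
    2 * θ ^ (p - 1) = (2 / θ) ^ (1 - p / (1 + α)) := by
  have base : θ = (2 / θ) ^ (-1 / (1 + α)) := by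
    have pow_eq : (2 / θ)⁻¹ = θ ^ (1 + α) := by
      rw [rpow_one_add' hθ.le (by positivity), hθα, inv_div]
      ring
    rw [neg_div, rpow_neg (by positivity), ← inv_rpow (by positivity), pow_eq, ← rpow_mul hθ.le,
      mul_one_div_cancel (by positivity), rpow_one]
  calc 2 * θ ^ (p - 1) = 2 / θ * θ ^ p := by rw [rpow_sub_one hθ.ne']; ring
    _ = (2 / θ) ^ (1 : ℝ) * (2 / θ) ^ (-1 / (1 + α) * p) := by
        rw [rpow_one, rpow_mul (by positivity), ← base]
    _ = (2 / θ) ^ (1 - p / (1 + α)) := by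
        rw [← rpow_add (by positivity)]
        congr 1
        ring

section BlockBounds

variable {θ α p : ℝ} {S : ℝ → ℝ} (h : IsCantorFunction θ S)
include h

theorem IsCantorFunction.exists_tsum_rpow_block_le (hp : 1 ≤ p) : ∃ C : ℝ≥0,
    ∀ (M : ℕ) (a b μ t₀ η : ℝ), IsWindow (-1) 6 t₀ η → 2 * |μ| * (θ / 2) ^ M ≤ 1 →
      ∑' k, ‖fourierCoef (block S a b μ t₀ η) k‖ₑ ^ p ≤ ENNReal.ofReal
        (C * η ^ (p - 1) * ∑ m ∈ Finset.range (M + 1), (2 * θ ^ (p - 1)) ^ m) := by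
  have hθ := h.pos
  have hθ' := h.lt_half
  have hε : 0 < (1 - 2 * θ) / 2 := by linarith
  have hεθ : 2 * (θ * (1 + (1 - 2 * θ) / 2)) ≤ 1 := by nlinarith
  obtain ⟨A, hA⟩ := h.exists_block_eq_add hε (by linarith) hεθ
  obtain ⟨B, hB⟩ := h.exists_apNorm_one_block_le hε (by linarith) hεθ
  refine ⟨2 ^ (p - 1) * (2 * A + 2 * A / θ.toNNReal + B), fun M a b μ t₀ η hw hμ => ?_⟩
  choose g f hg hf hblock hgA hfA using fun m => hA m a b μ t₀ η hw
  have coef_le (k : ℤ) : ‖fourierCoef (block S a b μ t₀ η) k‖ₑ ≤ ENNReal.ofReal (2 * η) := by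
    rw [← ofReal_norm]
    exact ENNReal.ofReal_le_ofReal <|
      h.norm_fourierCoef_block_le a b μ (hw.mono (by norm_num) (by norm_num)) k
  have coef_dec (m : ℕ) (k : ℤ) : ‖fourierCoef (block S a b μ t₀ η) k‖ₑ ≤
      ‖fourierCoef (g m) k‖ₑ + ‖fourierCoef (f m) k‖ₑ := by
    rw [hblock m, fourierCoef_add (hg m) (hf m)]
    exact enorm_add_le _ _
  simp only [apNorm_one_eq_tsum] at hgA hB
  refine (tsum_rpow_le_sum_geometric hw.pos hθ coef_le coef_dec hgA hfA
    (hB M a b μ t₀ η hw hμ) hp).trans_eq ?_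
  rw [mul_rpow zero_le_two hw.pos.le]
  push_cast
  rw [Real.coe_toNNReal _ hθ.le]
  congr 1
  ring

/-- The growth exponent comes from `2θ ^ (p - 1) = (2 / θ) ^ (1 - p / (1 + α))`. -/
theorem IsCantorFunction.exists_apNorm_block_le_geomGrowth (hα : 0 < α) (hθα : θ ^ α = 1 / 2)
    (hp : 1 ≤ p) : ∃ C : ℝ≥0, ∀ a b μ t₀ η L, IsWindow (-1) 6 t₀ η → 2 ≤ L → |μ| ≤ L →
      ApNorm p (block S a b μ t₀ η) ≤ ENNReal.ofReal
        (C * η ^ (1 - 1 / p) * geomGrowth (1 - p / (1 + α)) L ^ (1 / p)) := by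
  have : 0 < p := by linarith
  have hθ := h.pos
  have hθ' := h.lt_half
  obtain ⟨A, hA⟩ := h.exists_tsum_rpow_block_le hp
  obtain ⟨B, hB⟩ := exists_sum_pow_le_geomGrowth (q := 2 / θ)
    ((le_div_iff₀ hθ).2 (by linarith)) (1 - p / (1 + α))
  refine ⟨(A * B) ^ (1 / p), fun a b μ t₀ η L hw hL hμ => ?_⟩
  have hη := hw.pos
  have growth_nonneg := geomGrowth_nonneg (β := 1 - p / (1 + α)) (show 1 ≤ L by linarith)
  obtain ⟨M, hM, hM'⟩ := exists_pow_near_scale (L := L) hθ (by linarith) (by linarith)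
  have sum_le := hA M a b μ t₀ η hw (le_trans (by gcongr) hM)
  rw [two_mul_rpow_sub_one hθ hα hθα] at sum_le
  calc ApNorm p (block S a b μ t₀ η)
      ≤ ENNReal.ofReal (A * η ^ (p - 1) * (B * geomGrowth (1 - p / (1 + α)) L)) ^ (1 / p) := by
        refine ENNReal.rpow_le_rpow (sum_le.trans (ENNReal.ofReal_le_ofReal ?_)) (by positivity)
        gcongr
        exact hB L hL M hM'
    _ = _ := by
        rw [ENNReal.ofReal_rpow_of_nonneg (by positivity) (by positivity),
          show A * η ^ (p - 1) * (B * geomGrowth (1 - p / (1 + α)) L) =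
            A * B * η ^ (p - 1) * geomGrowth (1 - p / (1 + α)) L by ring,
          mul_rpow (by positivity) growth_nonneg, mul_rpow (by positivity) (by positivity),
          ← rpow_mul hη.le, NNReal.coe_rpow, NNReal.coe_mul]
        congr 4
        field_simp

theorem IsCantorFunction.exists_apNorm_one_block_le_rpow (hα : 0 < α) (hθα : θ ^ α = 1 / 2) :
    ∃ C : ℝ≥0, ∀ a b μ t₀ η, IsWindow (-1) 6 t₀ η →
      ApNorm 1 (block S a b μ t₀ η) ≤ ENNReal.ofReal (C * |μ| ^ (α / (1 + α))) := by
  obtain ⟨A, hA⟩ := h.exists_apNorm_block_le_geomGrowth hα hθα le_rfl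
  have exponent : 1 - 1 / (1 + α) = α / (1 + α) := by field_simp; ring
  have hs : 0 < α / (1 + α) := by positivity
  have hs' : α / (1 + α) ≤ 1 := (div_le_one (by positivity)).2 (by linarith)
  simp only [exponent, geomGrowth_of_pos hs, div_one, sub_self, rpow_zero, mul_one, rpow_one] at hA
  refine ⟨A + 160, fun a b μ t₀ η hw => ?_⟩
  rcases le_total 2 |μ| with hμ | hμ
  · refine (hA a b μ t₀ η |μ| hw hμ le_rfl).trans (ENNReal.ofReal_le_ofReal ?_)
    push_cast
    gcongr
    norm_num
  · refine (h.apNorm_one_block_le_abs a b μ (hw.mono (by norm_num) (by norm_num))).trans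
      (ENNReal.ofReal_le_ofReal ?_)
    have half_le_one : |μ| / 2 ≤ 1 := by linarith
    calc 80 * |μ| = 160 * (|μ| / 2) := by ring
      _ ≤ 160 * (|μ| / 2) ^ (α / (1 + α)) := by
          gcongr
          exact self_le_rpow_of_le_one (by positivity) half_le_one hs'
      _ ≤ (A + 160) * |μ| ^ (α / (1 + α)) := by
          gcongr
          · exact le_add_of_nonneg_left A.2
          · linarith [abs_nonneg μ]

end BlockBounds

/-! ### Periodization -/

theorem continuous_of_abs_sub_le_rpow {f : ℝ → ℝ} {α C : ℝ} (hα : 0 < α)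
    (hf : ∀ x y, |f x - f y| ≤ C * |x - y| ^ α) : Continuous f := by
  refine continuous_iff_continuousAt.2 fun x => tendsto_iff_norm_sub_tendsto_zero.2 ?_
  have modulus : Continuous fun y : ℝ => C * |y - x| ^ α :=
    continuous_const.mul ((by fun_prop : Continuous fun y : ℝ => |y - x|).rpow_const
      fun _ => Or.inr hα.le)
  have modulus_tendsto : Filter.Tendsto (fun y : ℝ => C * |y - x| ^ α) (𝓝 x) (𝓝 0) :=
    modulus.tendsto' _ _ (by rw [sub_self, abs_zero, zero_rpow hα.ne', mul_zero])
  exact squeeze_zero (fun _ => norm_nonneg _) (fun y => hf y x) modulus_tendsto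

section Periodization

variable {T : ℝ} (hT : 0 < T) {f f' : ℝ → ℝ}

/-- The `T`-periodic function agreeing with `f` on `[0, T)`. -/
noncomputable def periodize (f : ℝ → ℝ) (x : ℝ) : ℝ := f (toIcoMod hT 0 x)

theorem periodic_periodize (f : ℝ → ℝ) : Function.Periodic (periodize hT f) T := fun x =>
  congrArg f (toIcoMod_periodic hT 0 x)

/-- This local formula makes regularity pass from `f` to its periodization across multiples of
`T`. -/
theorem periodize_eq_add (hf : ∀ x ∉ Ioo 0 T, f x = 0) {x : ℝ} (hx : x ∈ Ico 0 (2 * T)) :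
    periodize hT f x = f x + f (x - T) := by
  rcases lt_or_ge x T with hxT | hxT
  · rw [periodize, (toIcoMod_eq_self hT).2 ⟨hx.1, by rwa [zero_add]⟩,
      hf (x - T) fun h => by linarith [h.1], add_zero]
  · rw [hf x fun h => hxT.not_gt h.2, zero_add, ← (periodic_periodize hT f).sub_eq]
    rw [periodize, (toIcoMod_eq_self hT).2 ⟨by linarith, by linarith [hx.2]⟩]

theorem periodize_of_mem_Icc (hf : ∀ x ∉ Ioo 0 T, f x = 0) {x : ℝ} (hx : x ∈ Icc 0 T) :
    periodize hT f x = f x := by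
  rw [periodize_eq_add hT hf ⟨hx.1, by linarith [hx.2]⟩,
    hf (x - T) fun h => by linarith [h.1, hx.2], add_zero]

theorem hasDerivAt_periodize (hf : ∀ x ∉ Ioo 0 T, f x = 0) (hf' : ∀ x ∉ Ioo 0 T, f' x = 0)
    (hderiv : ∀ x, HasDerivAt f (f' x) x) (x : ℝ) :
    HasDerivAt (periodize hT f) (periodize hT f' x) x := by
  set y := toIocMod hT 0 x
  set s := toIocDiv hT 0 x • T
  have hy : y ∈ Ioo 0 (2 * T) :=
    ⟨(toIocMod_mem_Ioc hT 0 x).1, by linarith [(toIocMod_mem_Ioc hT 0 x).2]⟩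
  have hys : x - s = y := self_sub_toIocDiv_zsmul hT 0 x
  have hderiv_y : HasDerivAt (periodize hT f) (periodize hT f' y) y := by
    rw [periodize_eq_add hT hf' (Ioo_subset_Ico_self hy)]
    refine ((hderiv y).add ((hderiv (y - T)).comp_sub_const y T)).congr_of_eventuallyEq ?_
    filter_upwards [isOpen_Ioo.mem_nhds hy] with z hz
    exact periodize_eq_add hT hf (Ioo_subset_Ico_self hz)
  rw [← hys] at hderiv_y
  have shifted := hderiv_y.comp_sub_const x s
  simpa only [(periodic_periodize hT _).sub_zsmul_eq, s] using shifted

theorem abs_periodize_sub_le {α C : ℝ} (hα : 0 ≤ α) (hC : 0 ≤ C) (hf : ∀ x ∉ Ioo 0 T, f x = 0)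
    (hHolder : ∀ x y, |f x - f y| ≤ C * |x - y| ^ α) (x y : ℝ) :
    |periodize hT f x - periodize hT f y| ≤ 2 * C * |x - y| ^ α := by
  wlog hxy : x ≤ y generalizing x y
  · rw [abs_sub_comm, abs_sub_comm x]
    exact this y x (le_of_not_ge hxy)
  have periodic := periodic_periodize hT f
  set s := toIcoDiv hT 0 x • T
  set x' := toIcoMod hT 0 x
  set y' := toIcoMod hT x' (y - s)
  have hx' : x' ∈ Ico 0 T := by simpa using toIcoMod_mem_Ico hT 0 x
  have hy' : y' ∈ Ico x' (x' + T) := toIcoMod_mem_Ico hT x' (y - s)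
  have hxs : x - s = x' := self_sub_toIcoDiv_zsmul hT 0 x
  have hys : y - s - toIcoDiv hT x' (y - s) • T = y' := self_sub_toIcoDiv_zsmul hT x' (y - s)
  have hdist : |x' - y'| ≤ |x - y| := by
    have hdiv : 0 ≤ toIcoDiv hT x' (y - s) • T := by
      by_contra! hneg
      have := zsmul_le_zsmul_left hT.le (Int.le_sub_one_of_lt (neg_of_smul_neg_right hneg hT.le))
      rw [zero_sub, neg_one_zsmul] at this
      linarith [hy'.2]
    rw [abs_of_nonpos (by linarith [hy'.1]), abs_of_nonpos (by linarith)]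
    linarith
  rw [← periodic.sub_zsmul_eq (toIcoDiv hT 0 x) (x := x),
    ← periodic.sub_zsmul_eq (toIcoDiv hT 0 x) (x := y),
    ← periodic.sub_zsmul_eq (toIcoDiv hT x' (y - s)) (x := y - _), hxs, hys,
    periodize_eq_add hT hf ⟨hx'.1, by linarith [hx'.2]⟩,
    periodize_eq_add hT hf ⟨hx'.1.trans hy'.1, by linarith [hx'.2, hy'.2]⟩, add_sub_add_comm]
  calc |f x' - f y' + (f (x' - T) - f (y' - T))|
      ≤ C * |x' - y'| ^ α + C * |x' - T - (y' - T)| ^ α :=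
        (abs_add_le _ _).trans (add_le_add (hHolder _ _) (hHolder _ _))
    _ = 2 * C * |x' - y'| ^ α := by rw [sub_sub_sub_cancel_right]; ring
    _ ≤ 2 * C * |x - y| ^ α := by gcongr

end Periodization

/-! ### The phase function -/

/-- The summand of the phase function built on `[t₀, t₀ + 5η]`. -/
noncomputable def rescaledBump (S : ℝ → ℝ) (t₀ η x : ℝ) : ℝ :=
  η ^ 2 * cantorBump S ((x - t₀) / η)

/-- The derivative of `rescaledBump S t₀ η`. -/
noncomputable def rescaledBumpDeriv (S : ℝ → ℝ) (t₀ η x : ℝ) : ℝ :=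
  η * cantorBumpDeriv S ((x - t₀) / η)

namespace IsCantorFunction

variable {θ : ℝ} {S : ℝ → ℝ} (h : IsCantorFunction θ S)
include h

theorem half_le_cantorBump_mid : 1 / 2 ≤ cantorBump S (5 / 2) := by
  rw [h.cantorBump_eq_second (by norm_num) (by norm_num)]
  linarith [h.primitive_nonneg 1, h.primitive_le (x := 5 / 2 - 2) (by norm_num)]

theorem denselyAffine_cantorBump : DenselyAffine (cantorBump S) := by
  have translate (c s : ℝ) := h.denselyAffine_primitive.comp_rescale c s one_ne_zero
  convert ((translate 1 0).add (translate (-2) 2)).add (translate 1 4) using 2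
  rw [cantorBump]
  ring_nf

theorem exists_abs_cantorBumpDeriv_sub_le_rpow {α : ℝ} (hα : 0 < α) (hθα : θ ^ α = 1 / 2) :
    ∃ C > 0, ∀ x y, |cantorBumpDeriv S x - cantorBumpDeriv S y| ≤ C * |x - y| ^ α := by
  have hθ := h.pos
  have hθ' : 0 < 1 - 2 * θ := by linarith [h.lt_half]
  refine ⟨4 * (1 / ((1 - 2 * θ) * θ)) ^ α, by positivity, fun x y => ?_⟩
  have translate (s : ℝ) := h.abs_sub_le_rpow hα hθα (x - s) (y - s)
  simp only [sub_sub_sub_cancel_right] at translate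
  obtain ⟨h₀, h₀'⟩ := abs_le.1 (h.abs_sub_le_rpow hα hθα x y)
  obtain ⟨h₂, h₂'⟩ := abs_le.1 (translate 2)
  obtain ⟨h₄, h₄'⟩ := abs_le.1 (translate 4)
  rw [cantorBumpDeriv, cantorBumpDeriv, abs_le]
  constructor <;> linarith

theorem abs_rescaledBump_le (t₀ η x : ℝ) : |rescaledBump S t₀ η x| ≤ 10 * η ^ 2 := by
  rw [rescaledBump, abs_mul, abs_of_nonneg (sq_nonneg η), mul_comm]
  gcongr
  exact h.abs_cantorBump_le _

theorem abs_rescaledBumpDeriv_le (t₀ x : ℝ) {η : ℝ} (hη : 0 < η) :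
    |rescaledBumpDeriv S t₀ η x| ≤ 2 * η := by
  rw [rescaledBumpDeriv, abs_mul, abs_of_pos hη, mul_comm]
  gcongr
  exact h.abs_cantorBumpDeriv_le _

theorem continuous_rescaledBump (t₀ η : ℝ) : Continuous (rescaledBump S t₀ η) := by
  have := h.continuous_cantorBump
  unfold rescaledBump
  fun_prop

theorem hasDerivAt_rescaledBump (t₀ x : ℝ) {η : ℝ} (hη : η ≠ 0) :
    HasDerivAt (rescaledBump S t₀ η) (rescaledBumpDeriv S t₀ η x) x := by
  have chain_rule := ((h.hasDerivAt_cantorBump ((x - t₀) / η)).comp x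
    (((hasDerivAt_id x).sub_const t₀).div_const η)).const_mul (η ^ 2)
  refine chain_rule.congr_deriv ?_
  rw [rescaledBumpDeriv]
  field_simp

theorem rescaledBump_eq_zero {t₀ η x : ℝ} (hη : 0 < η) (hx : x ∉ Ioo t₀ (t₀ + 5 * η)) :
    rescaledBump S t₀ η x = 0 := by
  rw [rescaledBump, h.cantorBump_eq_zero fun hy => hx ?_, mul_zero]
  rw [mem_Ioo, lt_div_iff₀ hη, div_lt_iff₀ hη] at hy
  exact ⟨by linarith [hy.1], by linarith [hy.2]⟩

theorem rescaledBumpDeriv_eq_zero {t₀ η x : ℝ} (hη : 0 < η) (hx : x ∉ Ioo t₀ (t₀ + 5 * η)) :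
    rescaledBumpDeriv S t₀ η x = 0 := by
  rw [rescaledBumpDeriv, h.cantorBumpDeriv_eq_zero fun hy => hx ?_, mul_zero]
  rw [mem_Ioo, lt_div_iff₀ hη, div_lt_iff₀ hη] at hy
  exact ⟨by linarith [hy.1], by linarith [hy.2]⟩

theorem denselyAffine_rescaledBump (t₀ : ℝ) {η : ℝ} (hη : η ≠ 0) :
    DenselyAffine (rescaledBump S t₀ η) :=
  h.denselyAffine_cantorBump.comp_rescale _ t₀ hη

end IsCantorFunction

/-- Centres and scales of a sequence of bumps in `[0, 2π]` that shrink geometrically, reach every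
subinterval, and each sit where the sum of their predecessors is affine. -/
structure IsBumpPlacement (S : ℝ → ℝ) (t η : ℕ → ℝ) : Prop where
  isWindow (n : ℕ) : IsWindow (-1) 6 (t n) (η n)
  succ_le (n : ℕ) : η (n + 1) ≤ η n / 10
  affine (n : ℕ) : ∃ a b : ℝ, ∀ x ∈ Icc (t n) (t n + 5 * η n),
    ∑ k ∈ Finset.range n, rescaledBump S (t k) (η k) x = a * x + b
  exists_subset {u v : ℝ} (hu : 0 ≤ u) (huv : u < v) (hv : v ≤ 2 * π) :
    ∃ n, Icc (t n) (t n + 5 * η n) ⊆ Ioo u v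

theorem DenselyAffine.exists_window {f : ℝ → ℝ} (hf : DenselyAffine f) {u v η₀ : ℝ} (huv : u < v)
    (hη₀ : 0 < η₀) : ∃ t₀ η : ℝ, 0 < η ∧ η ≤ η₀ ∧ u ≤ t₀ - η ∧ t₀ + 6 * η ≤ v ∧
      ∃ a b : ℝ, ∀ x ∈ Icc t₀ (t₀ + 5 * η), f x = a * x + b := by
  obtain ⟨u', v', a, b, hu, huv', hv, hab⟩ := hf.exists_Icc_affine huv
  obtain ⟨η, hη, hη'⟩ := exists_between (lt_min hη₀ (by linarith : 0 < (v' - u') / 7))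
  obtain ⟨hη'', hηv⟩ := lt_min_iff.1 hη'
  exact ⟨u' + η, η, hη, hη''.le, by linarith, by linarith, a, b, fun x hx =>
    hab x ⟨by linarith [hx.1], by linarith [hx.2]⟩⟩

theorem exists_seq_intervals {T : ℝ} (hT : 0 < T) : ∃ u v : ℕ → ℝ,
    (∀ n, 0 ≤ u n ∧ u n < v n ∧ v n ≤ T) ∧
      ∀ a b, 0 ≤ a → a < b → b ≤ T → ∃ n, a < u n ∧ v n < b := by
  let Interval := {q : ℚ × ℚ // (0 : ℝ) ≤ q.1 ∧ (q.1 : ℝ) < q.2 ∧ (q.2 : ℝ) ≤ T}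
  have exists_interval {a b : ℝ} (ha : 0 ≤ a) (hab : a < b) (hb : b ≤ T) :
      ∃ q : Interval, a < q.1.1 ∧ q.1.2 < b := by
    obtain ⟨q, haq, hqb⟩ := exists_rat_btwn hab
    obtain ⟨q', hqq', hq'b⟩ := exists_rat_btwn hqb
    exact ⟨⟨(q, q'), ha.trans haq.le, hqq', hq'b.le.trans hb⟩, haq, hq'b⟩
  have : Nonempty Interval := (exists_interval le_rfl hT le_rfl).nonempty
  obtain ⟨I, hI⟩ := exists_surjective_nat Interval
  refine ⟨fun n => (I n).1.1, fun n => (I n).1.2, fun n => (I n).2, fun a b ha hab hb => ?_⟩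
  obtain ⟨q, hq⟩ := exists_interval ha hab hb
  obtain ⟨n, rfl⟩ := hI q
  exact ⟨n, hq⟩

theorem IsCantorFunction.exists_seq_rescaledBump {θ : ℝ} {S : ℝ → ℝ} (h : IsCantorFunction θ S)
    {u v : ℕ → ℝ} (huv : ∀ n, u n < v n) {η₀ : ℝ} (hη₀ : 0 < η₀) : ∃ t η : ℕ → ℝ,
      ∀ n, 0 < η n ∧ η n ≤ η₀ ∧ η (n + 1) ≤ η n / 10 ∧ u n ≤ t n - η n ∧ t n + 6 * η n ≤ v n ∧
        ∃ a b : ℝ, ∀ x ∈ Icc (t n) (t n + 5 * η n),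
          ∑ k ∈ Finset.range n, rescaledBump S (t k) (η k) x = a * x + b := by
  -- A state consists of the current partial sum and of the last centre and scale.
  let State := {s : (ℝ → ℝ) × ℝ × ℝ // DenselyAffine s.1 ∧ 0 < s.2.2 ∧ s.2.2 ≤ 10 * η₀}
  have exists_next (n : ℕ) (s : State) : ∃ s' : State,
      (s'.1.1 = fun x => s.1.1 x + rescaledBump S s'.1.2.1 s'.1.2.2 x) ∧
      s'.1.2.2 ≤ s.1.2.2 / 10 ∧ u n ≤ s'.1.2.1 - s'.1.2.2 ∧ s'.1.2.1 + 6 * s'.1.2.2 ≤ v n ∧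
      ∃ a b : ℝ, ∀ x ∈ Icc s'.1.2.1 (s'.1.2.1 + 5 * s'.1.2.2), s.1.1 x = a * x + b := by
    obtain ⟨⟨f, _, η⟩, hf, hη, hη'⟩ := s
    obtain ⟨t', η', hη'_pos, hη'η, hwindow⟩ := hf.exists_window (huv n) (by linarith : 0 < η / 10)
    have hη'_le : η' ≤ 10 * η₀ := by linarith
    exact ⟨⟨(_, t', η'), hf.add (h.denselyAffine_rescaledBump t' hη'_pos.ne'), hη'_pos, hη'_le⟩,
      rfl, hη'η, hwindow⟩
  choose next sum_next scale_next left_next right_next affine_next using exists_next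
  let state (n : ℕ) : State :=
    Nat.rec ⟨(fun _ => 0, 0, 10 * η₀), .const 0, by positivity, le_rfl⟩ next n
  have sum_eq (n : ℕ) : (state n).1.1 = fun x =>
      ∑ k ∈ Finset.range n, rescaledBump S (state (k + 1)).1.2.1 (state (k + 1)).1.2.2 x := by
    induction n with
    | zero => simp [state]
    | succ n ih =>
      simp only [Finset.sum_range_succ, ← congrFun ih]
      exact sum_next n (state n)
  refine ⟨fun n => (state (n + 1)).1.2.1, fun n => (state (n + 1)).1.2.2, fun n =>
    ⟨(state (n + 1)).2.2.1, ?_, scale_next _ _, left_next _ _, right_next _ _, ?_⟩⟩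
  · linarith [scale_next n (state n), (state n).2.2.2]
  · obtain ⟨a, b, hab⟩ := affine_next n (state n)
    exact ⟨a, b, fun x hx => (congrFun (sum_eq n) x).symm.trans (hab x hx)⟩

theorem IsCantorFunction.exists_isBumpPlacement {θ : ℝ} {S : ℝ → ℝ} (h : IsCantorFunction θ S) :
    ∃ t η : ℕ → ℝ, IsBumpPlacement S t η := by
  obtain ⟨u, v, huv, exists_between⟩ := exists_seq_intervals two_pi_pos
  obtain ⟨t, η, hη⟩ := h.exists_seq_rescaledBump (fun n => (huv n).2.1) one_pos
  choose pos le_one succ_le left right affine using hη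
  refine ⟨t, η, fun n => ⟨pos n, le_one n, ?_, ?_⟩, succ_le, affine, fun {a b} ha hab hb => ?_⟩
  · linarith [left n, (huv n).1]
  · exact (right n).trans (huv n).2.2
  · obtain ⟨n, han, hnb⟩ := exists_between a b ha hab hb
    exact ⟨n, fun x hx => ⟨by linarith [hx.1, left n, pos n], by linarith [hx.2, right n, pos n]⟩⟩

/-- The sum of the rescaled bumps centred at `t n` with scales `η n`. -/
noncomputable def bumpSeries (S : ℝ → ℝ) (t η : ℕ → ℝ) (x : ℝ) : ℝ :=
  ∑' n, rescaledBump S (t n) (η n) x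

/-- The derivative of `bumpSeries S t η`. -/
noncomputable def bumpSeriesDeriv (S : ℝ → ℝ) (t η : ℕ → ℝ) (x : ℝ) : ℝ :=
  ∑' n, rescaledBumpDeriv S (t n) (η n) x

/-- The phase function of the theorem. -/
noncomputable def cantorPhase (S : ℝ → ℝ) (t η : ℕ → ℝ) : ℝ → ℝ :=
  periodize two_pi_pos (bumpSeries S t η)

namespace IsBumpPlacement

variable {θ α : ℝ} {S : ℝ → ℝ} {t η : ℕ → ℝ} (d : IsBumpPlacement S t η)
include d

theorem le_pow_mul (n k : ℕ) : η (n + k) ≤ (1 / 10) ^ k * η n :=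
  le_geom (u := fun k => η (n + k)) (by norm_num) k fun k _ =>
    (d.succ_le (n + k)).trans_eq (by ring)

theorem summable_rpow {s : ℝ} (hs : 0 < s) : Summable fun n => η n ^ s := by
  refine .of_nonneg_of_le (fun n => rpow_nonneg (d.isWindow n).pos.le _) (fun n => ?_)
    (summable_geometric_of_lt_one (by positivity) (rpow_lt_one (by norm_num) (by norm_num) hs) :
      Summable fun n : ℕ => ((1 / 10 : ℝ) ^ s) ^ n)
  have hη : η n ≤ (1 / 10) ^ n := by
    have hle := d.le_pow_mul 0 n
    rw [zero_add] at hle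
    exact hle.trans (mul_le_of_le_one_right (by positivity) (d.isWindow 0).le_one)
  calc η n ^ s ≤ ((1 / 10 : ℝ) ^ n) ^ s := rpow_le_rpow (d.isWindow n).pos.le hη hs.le
    _ = ((1 / 10 : ℝ) ^ s) ^ n := rpow_pow_comm (by norm_num) s n |>.symm

theorem summable_scale : Summable η := by simpa using d.summable_rpow one_pos

theorem summable_scale_sq : Summable fun n => η n ^ 2 := by simpa using d.summable_rpow two_pos

theorem notMem_window {x : ℝ} (hx : x ∉ Ioo 0 (2 * π)) (n : ℕ) :
    x ∉ Ioo (t n) (t n + 5 * η n) := fun h =>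
  have hw := d.isWindow n
  hx ⟨by linarith [h.1, hw.left, hw.pos], by linarith [h.2, hw.right, hw.pos]⟩

variable (h : IsCantorFunction θ S)
include h

theorem summable_rescaledBump (x : ℝ) : Summable fun n => rescaledBump S (t n) (η n) x :=
  .of_norm_bounded (d.summable_scale_sq.mul_left 10) fun _ => h.abs_rescaledBump_le _ _ x

theorem summable_rescaledBumpDeriv (x : ℝ) : Summable fun n => rescaledBumpDeriv S (t n) (η n) x :=
  .of_norm_bounded (d.summable_scale.mul_left 2) fun n =>
    h.abs_rescaledBumpDeriv_le _ x (d.isWindow n).pos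

theorem hasDerivAt_bumpSeries (x : ℝ) :
    HasDerivAt (bumpSeries S t η) (bumpSeriesDeriv S t η x) x :=
  hasDerivAt_tsum (d.summable_scale.mul_left 2)
    (fun n y => h.hasDerivAt_rescaledBump _ y (d.isWindow n).pos.ne')
    (fun n y => h.abs_rescaledBumpDeriv_le _ y (d.isWindow n).pos) (d.summable_rescaledBump h 0) x

theorem bumpSeries_eq_zero {x : ℝ} (hx : x ∉ Ioo 0 (2 * π)) : bumpSeries S t η x = 0 := by
  simp only [bumpSeries, h.rescaledBump_eq_zero (d.isWindow _).pos (d.notMem_window hx _),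
    tsum_zero]

theorem bumpSeriesDeriv_eq_zero {x : ℝ} (hx : x ∉ Ioo 0 (2 * π)) : bumpSeriesDeriv S t η x = 0 := by
  simp only [bumpSeriesDeriv, h.rescaledBumpDeriv_eq_zero (d.isWindow _).pos (d.notMem_window hx _),
    tsum_zero]

theorem exists_abs_bumpSeriesDeriv_sub_le_rpow (hα : 0 < α) (hα1 : α < 1) (hθα : θ ^ α = 1 / 2) :
    ∃ C > 0, ∀ x y, |bumpSeriesDeriv S t η x - bumpSeriesDeriv S t η y| ≤ C * |x - y| ^ α := by
  obtain ⟨C, hC, hHolder⟩ := h.exists_abs_cantorBumpDeriv_sub_le_rpow hα hθα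
  have summable := d.summable_rpow (sub_pos.2 hα1)
  refine ⟨C * ∑' n, η n ^ (1 - α), mul_pos hC (summable.tsum_pos
    (fun n => rpow_nonneg (d.isWindow n).pos.le _) 0 (rpow_pos_of_pos (d.isWindow 0).pos _)),
    fun x y => ?_⟩
  have bump_le (n : ℕ) : ‖rescaledBumpDeriv S (t n) (η n) x - rescaledBumpDeriv S (t n) (η n) y‖ ≤
      C * |x - y| ^ α * η n ^ (1 - α) := by
    have hη := (d.isWindow n).pos
    calc ‖rescaledBumpDeriv S (t n) (η n) x - rescaledBumpDeriv S (t n) (η n) y‖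
        ≤ η n * (C * |(x - t n) / η n - (y - t n) / η n| ^ α) := by
          rw [rescaledBumpDeriv, rescaledBumpDeriv, ← mul_sub, norm_mul, Real.norm_eq_abs,
            abs_of_pos hη]
          gcongr
          exact hHolder _ _
      _ = C * |x - y| ^ α * η n ^ (1 - α) := by
          rw [← sub_div, sub_sub_sub_cancel_right, abs_div, abs_of_pos hη,
            div_rpow (abs_nonneg _) hη.le, rpow_sub hη, rpow_one]
          ring
  rw [bumpSeriesDeriv, bumpSeriesDeriv,
    ← (d.summable_rescaledBumpDeriv h x).tsum_sub (d.summable_rescaledBumpDeriv h y)]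
  refine (tsum_of_norm_bounded (summable.mul_left _).hasSum bump_le).trans_eq ?_
  rw [tsum_mul_left]
  ring

theorem abs_bumpSeries_sub_sum_le (n : ℕ) (x : ℝ) :
    |bumpSeries S t η x - ∑ k ∈ Finset.range (n + 1), rescaledBump S (t k) (η k) x| ≤
      10 / 99 * η n ^ 2 := by
  have geometric : HasSum (fun k : ℕ => η n ^ 2 / 10 * (1 / 100 : ℝ) ^ k) (10 / 99 * η n ^ 2) := by
    have hsum := (hasSum_geometric_of_lt_one (r := (1 / 100 : ℝ)) (by norm_num)
      (by norm_num)).mul_left (η n ^ 2 / 10)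
    rwa [show η n ^ 2 / 10 * (1 - 1 / 100)⁻¹ = 10 / 99 * η n ^ 2 by ring] at hsum
  rw [bumpSeries, ← (d.summable_rescaledBump h x).sum_add_tsum_nat_add (n + 1), add_sub_cancel_left,
    ← Real.norm_eq_abs]
  refine tsum_of_norm_bounded geometric fun k => ?_
  refine (h.abs_rescaledBump_le _ _ x).trans ?_
  calc 10 * η (k + (n + 1)) ^ 2 ≤ 10 * ((1 / 10) ^ (k + 1) * η n) ^ 2 := by
        have hη := (d.isWindow (k + (n + 1))).pos
        gcongr
        simpa only [add_comm, add_left_comm] using d.le_pow_mul n (k + 1)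
    _ = η n ^ 2 / 10 * ((1 / 10) ^ 2) ^ k := by rw [← pow_mul]; ring
    _ = η n ^ 2 / 10 * (1 / 100) ^ k := by norm_num

/-- The second difference over the `n`-th window kills the first bumps, which are affine there, and
sees the `n`-th one, which outweighs all the later ones. -/
theorem not_affine_bumpSeries (n : ℕ) {a b : ℝ}
    (hab : ∀ x ∈ Icc (t n) (t n + 5 * η n), bumpSeries S t η x = a * x + b) : False := by
  have hη := (d.isWindow n).pos
  obtain ⟨a', b', hab'⟩ := d.affine n
  have near_affine {x : ℝ} (hx : x ∈ Icc (t n) (t n + 5 * η n)) :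
      |a * x + b - (a' * x + b' + rescaledBump S (t n) (η n) x)| ≤ 10 / 99 * η n ^ 2 := by
    simpa only [hab x hx, Finset.sum_range_succ, hab' x hx] using d.abs_bumpSeries_sub_sum_le h n x
  have left := abs_le.1 (near_affine (x := t n) ⟨le_rfl, by linarith⟩)
  have mid := abs_le.1 (near_affine (x := t n + 5 / 2 * η n) ⟨by linarith, by linarith⟩)
  have right := abs_le.1 (near_affine (x := t n + 5 * η n) ⟨by linarith, le_rfl⟩)
  rw [h.rescaledBump_eq_zero hη fun hx => hx.1.false] at left
  rw [h.rescaledBump_eq_zero hη fun hx => hx.2.false] at right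
  have bump_mid : η n ^ 2 * (1 / 2) ≤ rescaledBump S (t n) (η n) (t n + 5 / 2 * η n) := by
    rw [rescaledBump, add_sub_cancel_left, mul_div_cancel_right₀ _ hη.ne']
    gcongr
    exact h.half_le_cantorBump_mid
  have := pow_pos hη 2
  linarith [left.1, left.2, mid.1, mid.2, right.1, right.2]

theorem hasDerivAt_cantorPhase (x : ℝ) : HasDerivAt (cantorPhase S t η)
    (periodize two_pi_pos (bumpSeriesDeriv S t η) x) x :=
  hasDerivAt_periodize two_pi_pos (fun _ hx => d.bumpSeries_eq_zero h hx)
    (fun _ hx => d.bumpSeriesDeriv_eq_zero h hx) (d.hasDerivAt_bumpSeries h) x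

theorem continuous_cantorPhase : Continuous (cantorPhase S t η) :=
  continuous_iff_continuousAt.2 fun x => (d.hasDerivAt_cantorPhase h x).continuousAt

theorem deriv_cantorPhase :
    deriv (cantorPhase S t η) = periodize two_pi_pos (bumpSeriesDeriv S t η) :=
  deriv_eq (d.hasDerivAt_cantorPhase h)

theorem exists_abs_deriv_cantorPhase_sub_le_rpow (hα : 0 < α) (hα1 : α < 1)
    (hθα : θ ^ α = 1 / 2) : ∃ C > 0, ∀ x y,
      |deriv (cantorPhase S t η) x - deriv (cantorPhase S t η) y| ≤ C * |x - y| ^ α := by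
  obtain ⟨C, hC, hHolder⟩ := d.exists_abs_bumpSeriesDeriv_sub_le_rpow h hα hα1 hθα
  rw [d.deriv_cantorPhase h]
  exact ⟨2 * C, by positivity, abs_periodize_sub_le two_pi_pos hα.le hC.le
    (fun _ hx => d.bumpSeriesDeriv_eq_zero h hx) hHolder⟩

theorem contDiff_cantorPhase (hα : 0 < α) (hα1 : α < 1) (hθα : θ ^ α = 1 / 2) :
    ContDiff ℝ 1 (cantorPhase S t η) := by
  obtain ⟨C, _, hHolder⟩ := d.exists_abs_deriv_cantorPhase_sub_le_rpow h hα hα1 hθα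
  exact contDiff_one_iff_deriv.2 ⟨fun x => (d.hasDerivAt_cantorPhase h x).differentiableAt,
    continuous_of_abs_sub_le_rpow hα hHolder⟩

theorem not_affine_cantorPhase {u v : ℝ} (huv : u < v) :
    ¬ ∃ a b : ℝ, ∀ x ∈ Ioo u v, cantorPhase S t η x = a * x + b := by
  rintro ⟨a, b, hab⟩
  have periodic := periodic_periodize two_pi_pos (bumpSeries S t η)
  set s := toIcoDiv two_pi_pos 0 u • (2 * π)
  have hu : u - s ∈ Ico 0 (2 * π) := by
    simpa only [zero_add] using sub_toIcoDiv_zsmul_mem_Ico two_pi_pos 0 u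
  obtain ⟨n, hn⟩ := d.exists_subset (u := u - s) (v := min (v - s) (2 * π)) hu.1
    (lt_min (by linarith) hu.2) (min_le_right _ _)
  refine d.not_affine_bumpSeries h n (a := a) (b := a * s + b) fun x hx => ?_
  obtain ⟨hux, hxv⟩ := hn hx
  obtain ⟨hxv, hxT⟩ := lt_min_iff.1 hxv
  rw [← periodize_of_mem_Icc two_pi_pos (fun x hx => d.bumpSeries_eq_zero h hx)
    ⟨hu.1.trans hux.le, hxT.le⟩, ← periodic.zsmul (toIcoDiv two_pi_pos 0 u) x,
    ← cantorPhase, hab (x + s) ⟨by linarith, by linarith⟩]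
  ring

theorem exists_deriv_cantorPhase_ne : ∃ t₁ t₂, 0 < t₁ ∧ t₁ ≤ t₂ ∧ t₂ < 2 * π ∧
    deriv (cantorPhase S t η) t₁ ≠ deriv (cantorPhase S t η) t₂ := by
  by_contra! hconst
  let c := deriv (cantorPhase S t η) 1
  let line (x : ℝ) : ℝ := c * x + (cantorPhase S t η 1 - c)
  have deriv_line (x : ℝ) : HasDerivAt line c x :=
    (((hasDerivAt_id x).const_mul c).add_const _).congr_deriv (mul_one c)
  have deriv_eq_line : EqOn (deriv (cantorPhase S t η)) (deriv line) (Ioo 0 2) := fun x hx => by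
    rw [(deriv_line x).deriv]
    rcases le_total x 1 with hx1 | hx1
    · exact hconst x 1 hx.1 hx1 (by linarith [pi_gt_three])
    · exact (hconst 1 x one_pos hx1 (by linarith [hx.2, pi_gt_three])).symm
  have eq_line : EqOn (cantorPhase S t η) line (Ioo 0 2) :=
    isOpen_Ioo.eqOn_of_deriv_eq isPreconnected_Ioo
      (fun x _ => (d.hasDerivAt_cantorPhase h x).differentiableAt.differentiableWithinAt)
      (fun x _ => (deriv_line x).differentiableAt.differentiableWithinAt)
      deriv_eq_line ⟨one_pos, one_lt_two⟩ (by simp [line])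
  exact d.not_affine_cantorPhase h two_pos ⟨_, _, eq_line⟩

end IsBumpPlacement

/-! ### Upper bounds for the phase function -/

theorem one_le_log_of_three_le {x : ℝ} (hx : 3 ≤ x) : 1 ≤ log x := by
  rw [le_log_iff_exp_le (by linarith)]
  linarith [exp_one_lt_d9]

theorem one_le_geomGrowth {β L : ℝ} (hL : 3 ≤ L) : 1 ≤ geomGrowth β L := by
  rcases lt_trichotomy β 0 with hβ | rfl | hβ
  · rw [geomGrowth_of_neg hβ]
  · rw [geomGrowth_zero]
    exact one_le_log_of_three_le hL
  · rw [geomGrowth_of_pos hβ]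
    exact one_le_rpow (by linarith) hβ.le

theorem geomGrowth_rpow_of_lt {p r L : ℝ} (hp : 0 < p) (hpr : p < r) (hL : 0 ≤ L) :
    geomGrowth (1 - p / r) L ^ (1 / p) = L ^ (1 / p - 1 / r) := by
  rw [geomGrowth_of_pos (sub_pos.2 ((div_lt_one (hp.trans hpr)).2 hpr)), ← rpow_mul hL]
  congr 1
  field_simp

theorem geomGrowth_rpow_of_gt {p r : ℝ} (L : ℝ) (hr : 0 < r) (hpr : r < p) :
    geomGrowth (1 - p / r) L ^ (1 / p) = 1 := by
  rw [geomGrowth_of_neg (sub_neg.2 ((one_lt_div hr).2 hpr)), one_rpow]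

theorem exists_isCantorFunction_rpow_eq_half {α : ℝ} (hα : 0 < α) (hα1 : α < 1) :
    ∃ θ S, IsCantorFunction θ S ∧ θ ^ α = 1 / 2 := by
  have hθ : (1 / 2 : ℝ) ^ (1 / α) < 1 / 2 :=
    rpow_lt_self_of_lt_one (by norm_num) (by norm_num) (by rwa [one_lt_div hα])
  obtain ⟨S, h⟩ := exists_isCantorFunction (by positivity) hθ
  refine ⟨_, S, h, ?_⟩
  rw [← rpow_mul (by norm_num), one_div_mul_cancel hα.ne', rpow_one]

section UpperBounds

variable {θ α p : ℝ} {S : ℝ → ℝ} {t η : ℕ → ℝ}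

namespace IsBumpPlacement

variable (d : IsBumpPlacement S t η)
include d

theorem one_add_tsum_le_of_le_rpow {s C B : ℝ} (hs : 0 < s) (hC : 0 ≤ C) (hB : 1 ≤ B)
    {F : ℕ → ℝ≥0∞} (hF : ∀ n, F n ≤ ENNReal.ofReal (C * η n ^ s * B)) :
    1 + ∑' n, F n ≤ ENNReal.ofReal ((1 + C * ∑' n, η n ^ s) * B) := by
  have hη (n : ℕ) : 0 ≤ η n ^ s := rpow_nonneg (d.isWindow n).pos.le s
  have hsum : 0 ≤ ∑' n, η n ^ s := tsum_nonneg hη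
  have : 0 ≤ B := by linarith
  calc 1 + ∑' n, F n ≤ 1 + ∑' n, ENNReal.ofReal (C * η n ^ s * B) := by
        gcongr with n
        exact hF n
    _ = ENNReal.ofReal (1 + C * (∑' n, η n ^ s) * B) := by
        rw [← ENNReal.ofReal_tsum_of_nonneg (fun n => by have := hη n; positivity)
          (((d.summable_rpow hs).mul_left C).mul_right B), tsum_mul_right, tsum_mul_left,
          ENNReal.ofReal_add zero_le_one (by positivity), ENNReal.ofReal_one]
    _ ≤ ENNReal.ofReal ((1 + C * ∑' n, η n ^ s) * B) := by
        gcongr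
        linarith

variable (h : IsCantorFunction θ S)
include h

theorem exists_fourierCoef_expI_sum_eq (lam : ℝ) : ∃ a b : ℕ → ℝ, ∀ N k,
    fourierCoef (fun x => expI (lam * ∑ n ∈ Finset.range N, rescaledBump S (t n) (η n) x)) k =
      fourierCoef (fun _ => 1) k + ∑ n ∈ Finset.range N,
        fourierCoef (block S (a n) (b n) (lam * η n ^ 2) (t n) (η n)) k := by
  choose a b hab using d.affine
  have hcont := fun n => h.continuous_rescaledBump (t n) (η n)
  refine ⟨fun n => lam * a n, fun n => lam * b n, fun N k => ?_⟩
  induction N with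
  | zero => simp
  | succ N ih =>
    rw [Finset.sum_range_succ, ← add_assoc, ← ih,
      ← fourierCoef_add (by fun_prop) (h.continuous_block _ _ _ _ _)]
    congr 1
    ext x
    by_cases hx : x ∈ Ioo (t N) (t N + 5 * η N)
    · rw [Finset.sum_range_succ, hab N x (Ioo_subset_Icc_self hx), block, rescaledBump]
      ring_nf
    · rw [Finset.sum_range_succ, h.rescaledBump_eq_zero (d.isWindow N).pos hx,
        h.block_eq_zero _ _ _ (d.isWindow N).pos hx, add_zero, add_zero]

theorem norm_fourierCoef_expI_sub_le (lam : ℝ) (n : ℕ) (k : ℤ) :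
    ‖fourierCoef (fun x => expI (lam * cantorPhase S t η x)) k - fourierCoef (fun x =>
      expI (lam * ∑ j ∈ Finset.range (n + 1), rescaledBump S (t j) (η j) x)) k‖ ≤
      |lam| * η n ^ 2 := by
  have hφ := d.continuous_cantorPhase h
  have hcont := fun n => h.continuous_rescaledBump (t n) (η n)
  rw [← fourierCoef_sub (by fun_prop) (by fun_prop)]
  refine norm_fourierCoef_le_of_norm_le (by fun_prop) (fun x hx => ?_) k
  refine (norm_expI_sub_expI_le _ _).trans ?_
  rw [← mul_sub, abs_mul, cantorPhase,
    periodize_of_mem_Icc two_pi_pos (fun _ hx => d.bumpSeries_eq_zero h hx) hx]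
  gcongr
  refine (d.abs_bumpSeries_sub_sum_le h n x).trans ?_
  linarith [sq_nonneg (η n)]

theorem tendsto_fourierCoef_expI_sum (lam : ℝ) (k : ℤ) : Filter.Tendsto (fun N =>
    fourierCoef (fun x => expI (lam * ∑ n ∈ Finset.range N, rescaledBump S (t n) (η n) x)) k)
    Filter.atTop (𝓝 (fourierCoef (fun x => expI (lam * cantorPhase S t η x)) k)) := by
  refine (Filter.tendsto_add_atTop_iff_nat 1).1 (tendsto_iff_norm_sub_tendsto_zero.2 ?_)
  have scale_tendsto := d.summable_scale_sq.tendsto_atTop_zero.const_mul |lam|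
  rw [mul_zero] at scale_tendsto
  refine squeeze_zero (fun _ => norm_nonneg _) (fun n => ?_) scale_tendsto
  rw [norm_sub_rev]
  exact d.norm_fourierCoef_expI_sub_le h lam n k

theorem exists_apNorm_expI_cantorPhase_le (lam : ℝ) : ∃ a b : ℕ → ℝ, ∀ p, 1 ≤ p →
    ApNorm p (fun x => expI (lam * cantorPhase S t η x)) ≤
      1 + ∑' n, ApNorm p (block S (a n) (b n) (lam * η n ^ 2) (t n) (η n)) := by
  obtain ⟨a, b, hab⟩ := d.exists_fourierCoef_expI_sum_eq h lam
  refine ⟨a, b, fun p hp => ?_⟩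
  have hφ := d.continuous_cantorPhase h
  let f (n : ℕ) : ℝ → ℂ := block S (a n) (b n) (lam * η n ^ 2) (t n) (η n)
  let g (x : ℝ) : ℂ := expI (lam * cantorPhase S t η x) - 1
  have hasSum (k : ℤ) : HasSum (fun n => fourierCoef (f n) k) (fourierCoef g k) := by
    have summable : Summable fun n => fourierCoef (f n) k :=
      .of_norm_bounded (d.summable_scale.mul_left 2) fun n => h.norm_fourierCoef_block_le _ _ _
        ((d.isWindow n).mono (by norm_num) (by norm_num)) k
    refine summable.hasSum_iff_tendsto_nat.2 ?_
    rw [fourierCoef_sub (by fun_prop) continuous_const]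
    refine ((d.tendsto_fourierCoef_expI_sum h lam k).sub_const _).congr fun N => ?_
    rw [hab, add_sub_cancel_left]
  have split : (fun x => expI (lam * cantorPhase S t η x)) = fun x => 1 + g x := by
    ext x
    exact (add_sub_cancel _ _).symm
  rw [split]
  calc ApNorm p (fun x => 1 + g x) ≤ ApNorm p (fun _ => 1) + ApNorm p g :=
        apNorm_add_le hp continuous_const (by fun_prop)
    _ ≤ 1 + ∑' n, ApNorm p (f n) :=
        add_le_add (apNorm_one (by linarith)).le (apNorm_le_tsum_of_hasSum hp hasSum)

theorem exists_apNorm_expI_cantorPhase_le_geomGrowth (hα : 0 < α) (hθα : θ ^ α = 1 / 2)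
    (hp : 1 < p) : ∃ C > 0, ∀ lam, 3 ≤ |lam| →
      ApNorm p (fun x => expI (lam * cantorPhase S t η x)) ≤
        ENNReal.ofReal (C * geomGrowth (1 - p / (1 + α)) |lam| ^ (1 / p)) := by
  obtain ⟨C, hblock⟩ := h.exists_apNorm_block_le_geomGrowth hα hθα hp.le
  have hp0 : 0 < p := by linarith
  have hs : 0 < 1 - 1 / p := by rw [sub_pos, div_lt_one hp0]; exact hp
  have hsum : 0 ≤ ∑' n, η n ^ (1 - 1 / p) :=
    tsum_nonneg fun n => rpow_nonneg (d.isWindow n).pos.le _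
  refine ⟨1 + C * ∑' n, η n ^ (1 - 1 / p), by positivity, fun lam hlam => ?_⟩
  obtain ⟨a, b, hab⟩ := d.exists_apNorm_expI_cantorPhase_le h lam
  refine (hab p hp.le).trans (d.one_add_tsum_le_of_le_rpow hs C.2
    (one_le_rpow (one_le_geomGrowth hlam) (by positivity)) fun n => ?_)
  refine hblock _ _ _ _ _ _ (d.isWindow n) (by linarith) ?_
  rw [abs_mul, abs_of_nonneg (sq_nonneg (η n))]
  exact mul_le_of_le_one_right (abs_nonneg _)
    (pow_le_one₀ (d.isWindow n).pos.le (d.isWindow n).le_one)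

theorem exists_apNorm_one_expI_cantorPhase_le_rpow (hα : 0 < α) (hθα : θ ^ α = 1 / 2) :
    ∃ C > 0, ∀ lam, 1 ≤ |lam| → ApNorm 1 (fun x => expI (lam * cantorPhase S t η x)) ≤
      ENNReal.ofReal (C * |lam| ^ (α / (1 + α))) := by
  obtain ⟨C, hblock⟩ := h.exists_apNorm_one_block_le_rpow hα hθα
  have hs : 0 < 2 * (α / (1 + α)) := by positivity
  have hsum : 0 ≤ ∑' n, η n ^ (2 * (α / (1 + α))) :=
    tsum_nonneg fun n => rpow_nonneg (d.isWindow n).pos.le _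
  refine ⟨1 + C * ∑' n, η n ^ (2 * (α / (1 + α))), by positivity, fun lam hlam => ?_⟩
  obtain ⟨a, b, hab⟩ := d.exists_apNorm_expI_cantorPhase_le h lam
  refine (hab 1 le_rfl).trans (d.one_add_tsum_le_of_le_rpow hs C.2
    (one_le_rpow hlam (by positivity)) fun n => ?_)
  refine (hblock _ _ _ _ _ (d.isWindow n)).trans_eq ?_
  have hη := (d.isWindow n).pos.le
  rw [abs_mul, abs_of_nonneg (sq_nonneg (η n)), mul_rpow (abs_nonneg _) (sq_nonneg _),
    ← rpow_natCast_mul hη, mul_assoc, mul_comm (|lam| ^ _)]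
  norm_cast

theorem exists_apNorm_expI_cantorPhase_le_const (hα : 0 < α) (hθα : θ ^ α = 1 / 2)
    (hpα : 1 + α < p) : ∃ C > 0, ∀ lam, 3 ≤ |lam| →
      ApNorm p (fun x => expI (lam * cantorPhase S t η x)) ≤ ENNReal.ofReal C := by
  obtain ⟨C, hC, upper⟩ :=
    d.exists_apNorm_expI_cantorPhase_le_geomGrowth h hα hθα (p := p) (by linarith)
  refine ⟨C, hC, fun lam hlam => ?_⟩
  simpa only [geomGrowth_rpow_of_gt |lam| (by linarith) hpα, mul_one] using upper lam hlam

theorem exists_apNorm_expI_cantorPhase_le_log (hα : 0 < α) (hθα : θ ^ α = 1 / 2) :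
    ∃ C > 0, ∀ lam, 3 ≤ |lam| →
      ApNorm (1 + α) (fun x => expI (lam * cantorPhase S t η x)) ≤
        ENNReal.ofReal (C * log |lam| ^ (1 / (1 + α))) := by
  obtain ⟨C, hC, upper⟩ :=
    d.exists_apNorm_expI_cantorPhase_le_geomGrowth h hα hθα (p := 1 + α) (by linarith)
  refine ⟨C, hC, fun lam hlam => ?_⟩
  simpa only [div_self (by positivity : 1 + α ≠ 0), sub_self, geomGrowth_zero] using upper lam hlam

theorem exists_rpow_le_apNorm_expI_cantorPhase_le (hα : 0 < α) (hα1 : α < 1)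
    (hθα : θ ^ α = 1 / 2) (hp : 1 < p) (hpα : p < 1 + α) :
    ∃ c₁ c₂ : ℝ, 0 < c₁ ∧ 0 < c₂ ∧ ∃ Λ : ℝ, 2 ≤ Λ ∧ ∀ lam : ℝ, Λ ≤ |lam| →
      ENNReal.ofReal (c₁ * |lam| ^ (1 / p - 1 / (1 + α))) ≤
        ApNorm p (fun x => expI (lam * cantorPhase S t η x)) ∧
      ApNorm p (fun x => expI (lam * cantorPhase S t η x)) ≤
        ENNReal.ofReal (c₂ * |lam| ^ (1 / p - 1 / (1 + α))) := by
  obtain ⟨C, hC, hHolder⟩ := d.exists_abs_deriv_cantorPhase_sub_le_rpow h hα hα1 hθα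
  obtain ⟨t₁, t₂, ht₁, ht, ht₂, hne⟩ := d.exists_deriv_cantorPhase_ne h
  obtain ⟨c₁, hc₁, Λ, hΛ, lower⟩ := exists_ofReal_rpow_le_apNorm_expI
    (d.contDiff_cantorPhase h hα hα1 hθα) hα.le hC hHolder hp.le ht₁ ht ht₂ hne
  obtain ⟨c₂, hc₂, upper⟩ := d.exists_apNorm_expI_cantorPhase_le_geomGrowth h hα hθα hp
  refine ⟨c₁, c₂, hc₁, hc₂, max Λ 3, le_max_of_le_left hΛ, fun lam hlam => ?_⟩
  refine ⟨lower lam ((le_max_left _ _).trans hlam), ?_⟩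
  rw [← geomGrowth_rpow_of_lt (by linarith) hpα (abs_nonneg _)]
  exact upper lam ((le_max_right _ _).trans hlam)

end IsBumpPlacement
end UpperBounds

/-- Corollary 2: for 0 < α < 1 there exists a nowhere linear real
φ ∈ C^{1,α}(𝕋) with the stated sharp growth of ‖e^{iλφ}‖_{A_p}. -/
theorem statement4
    (α : ℝ) (hα0 : 0 < α) (hα1 : α < 1) :
    ∃ φ : ℝ → ℝ,
      (∀ t : ℝ, φ (t + 2 * Real.pi) = φ t) ∧
      ContDiff ℝ 1 φ ∧
      (∃ C : ℝ, 0 < C ∧ ∀ s t : ℝ, |deriv φ s - deriv φ t| ≤ C * |s - t| ^ α) ∧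
      -- φ is nowhere linear
      (∀ u v : ℝ, u < v → ¬ ∃ a b : ℝ, ∀ t ∈ Ioo u v, φ t = a * t + b) ∧
      -- (i) ‖e^{iλφ}‖_A = O(|λ|^{α/(1+α)} (log |λ|)^{(1−α)/(1+α)})
      (∃ C : ℝ, 0 < C ∧ ∃ Λ : ℝ, 2 ≤ Λ ∧ ∀ lam : ℝ, Λ ≤ |lam| →
        ApNorm 1 (fun t => Complex.exp (Complex.I * (lam : ℂ) * (φ t : ℂ))) ≤
          ENNReal.ofReal (C * |lam| ^ (α / (1 + α)) *
            (Real.log |lam|) ^ ((1 - α) / (1 + α)))) ∧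
      -- (ii) ‖e^{iλφ}‖_{A_p} ≍ |λ|^{1/p − 1/(1+α)} for 1 < p < 1+α
      (∀ p : ℝ, 1 < p → p < 1 + α →
        ∃ c₁ c₂ : ℝ, 0 < c₁ ∧ 0 < c₂ ∧ ∃ Λ : ℝ, 2 ≤ Λ ∧ ∀ lam : ℝ, Λ ≤ |lam| →
          ENNReal.ofReal (c₁ * |lam| ^ (1 / p - 1 / (1 + α))) ≤
            ApNorm p (fun t => Complex.exp (Complex.I * (lam : ℂ) * (φ t : ℂ))) ∧
          ApNorm p (fun t => Complex.exp (Complex.I * (lam : ℂ) * (φ t : ℂ))) ≤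
            ENNReal.ofReal (c₂ * |lam| ^ (1 / p - 1 / (1 + α)))) ∧
      -- ‖e^{iλφ}‖_{A_p} ≍ 1 for 1+α < p < 2
      (∀ p : ℝ, 1 + α < p → p < 2 →
        ∃ c₁ c₂ : ℝ, 0 < c₁ ∧ 0 < c₂ ∧ ∃ Λ : ℝ, 2 ≤ Λ ∧ ∀ lam : ℝ, Λ ≤ |lam| →
          ENNReal.ofReal c₁ ≤
            ApNorm p (fun t => Complex.exp (Complex.I * (lam : ℂ) * (φ t : ℂ))) ∧
          ApNorm p (fun t => Complex.exp (Complex.I * (lam : ℂ) * (φ t : ℂ))) ≤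
            ENNReal.ofReal c₂) ∧
      -- ‖e^{iλφ}‖_{A_p} = O((log |λ|)^{1/p}) for p = 1+α
      (∃ C : ℝ, 0 < C ∧ ∃ Λ : ℝ, 2 ≤ Λ ∧ ∀ lam : ℝ, Λ ≤ |lam| →
        ApNorm (1 + α) (fun t => Complex.exp (Complex.I * (lam : ℂ) * (φ t : ℂ))) ≤
          ENNReal.ofReal (C * (Real.log |lam|) ^ (1 / (1 + α)))) := by
  obtain ⟨θ, S, h, hθα⟩ := exists_isCantorFunction_rpow_eq_half hα0 hα1
  obtain ⟨t, η, d⟩ := h.exists_isBumpPlacement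
  have hφ := d.continuous_cantorPhase h
  have exp_eq (lam x : ℝ) : Complex.exp (Complex.I * lam * cantorPhase S t η x) =
      expI (lam * cantorPhase S t η x) := by rw [expI, mul_assoc, ← Complex.ofReal_mul]
  refine ⟨cantorPhase S t η, periodic_periodize _ _, d.contDiff_cantorPhase h hα0 hα1 hθα,
    d.exists_abs_deriv_cantorPhase_sub_le_rpow h hα0 hα1 hθα,
    fun u v huv => d.not_affine_cantorPhase h huv, ?_⟩
  simp only [exp_eq]
  refine ⟨?_, fun p hp hpα => d.exists_rpow_le_apNorm_expI_cantorPhase_le h hα0 hα1 hθα hp hpα,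
    fun p hpα hp2 => ?_, ?_⟩
  · obtain ⟨C, hC, upper⟩ := d.exists_apNorm_one_expI_cantorPhase_le_rpow h hα0 hθα
    refine ⟨C, hC, 3, by norm_num, fun lam hlam => (upper lam (by linarith)).trans ?_⟩
    exact ENNReal.ofReal_le_ofReal (le_mul_of_one_le_right (by positivity)
      (one_le_rpow (one_le_log_of_three_le hlam) (div_nonneg (by linarith) (by linarith))))
  · obtain ⟨C, hC, upper⟩ := d.exists_apNorm_expI_cantorPhase_le_const h hα0 hθα hpα
    refine ⟨1, C, one_pos, hC, 3, by norm_num, fun lam hlam => ⟨?_, upper lam hlam⟩⟩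
    rw [ENNReal.ofReal_one]
    exact one_le_apNorm (by fun_prop) (fun _ => norm_expI _) (by linarith) hp2.le
  · obtain ⟨C, hC, upper⟩ := d.exists_apNorm_expI_cantorPhase_le_log h hα0 hθα
    exact ⟨C, hC, 3, by norm_num, upper⟩
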